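/- arXiv:1906.04938 — 9 statements merged into one kernel-verified Lean document; each statement's English description precedes it below -/
import Mathlib

section
/- There exists a continuously differentiable function ψ : [0,∞) → ℝ with ψ(0) = 0 which is bounded from above, satisfies the equation -((n-1)/r)·ψ'(r) - |ψ'(r)| = h(r) for every r ∈ (0,∞), and has linear growth at infinity in the sense that ψ(r)/(1+r) → -c as r → ∞; in particular the limit lim_{r→∞} ψ(r)/(1+r) exists and is negative. -/
open Set Filter Topology

/-- `ψ` is a viscosity subsolution of (E): `-((n-1)/r)·ψ'(r) - |ψ'(r)| = h(r)`
on an open set `I ⊆ (0,∞)`: for every test function `φ` differentiable on `(0,∞)`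
and every `r₀ ∈ I` at which `ψ - φ` attains a local maximum, the subsolution
inequality holds. -/
def ViscSubsolE (n : ℕ) (h : ℝ → ℝ) (I : Set ℝ) (ψ : ℝ → ℝ) : Prop :=
  ∀ φ : ℝ → ℝ, DifferentiableOn ℝ φ (Set.Ioi 0) →
    ∀ r₀ ∈ I, IsLocalMax (fun r => ψ r - φ r) r₀ →
      -(((n : ℝ) - 1) / r₀) * deriv φ r₀ - |deriv φ r₀| ≤ h r₀

/-- Viscosity supersolution of (E) on an open set `I ⊆ (0,∞)`. -/
def ViscSupersolE (n : ℕ) (h : ℝ → ℝ) (I : Set ℝ) (ψ : ℝ → ℝ) : Prop :=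
  ∀ φ : ℝ → ℝ, DifferentiableOn ℝ φ (Set.Ioi 0) →
    ∀ r₀ ∈ I, IsLocalMin (fun r => ψ r - φ r) r₀ →
      -(((n : ℝ) - 1) / r₀) * deriv φ r₀ - |deriv φ r₀| ≥ h r₀

/-- Viscosity solution of (E): both a subsolution and a supersolution. -/
def ViscSolE (n : ℕ) (h : ℝ → ℝ) (I : Set ℝ) (ψ : ℝ → ℝ) : Prop :=
  ViscSubsolE n h I ψ ∧ ViscSupersolE n h I ψ

lemma aux_key (m c s : ℝ) (hm : 0 < m) (H B : ℝ → ℝ) (hsm : m ≤ s) (hH : Continuous H)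
    (hB : Continuous B) (hB0 : ∀ r, 0 < r → B r ≤ 0) (hHs : H s = 0)
    (h1 : ∀ r, r ≤ s → H r < 0 → B r = 0)
    (h2 : ∀ r, r ≤ s → 0 ≤ H r → (r - m) * B r = H r)
    (h3 : ∀ r, s ≤ r → (r - m) * B r = H r)
    (hinf : ∃ R, ∀ r ≥ R, H r = -c) :
    ∃ ψ : ℝ → ℝ,
      ContDiffOn ℝ 1 ψ (Set.Ici 0) ∧
      ψ 0 = 0 ∧
      BddAbove (ψ '' Set.Ici 0) ∧
      (∀ r ∈ Set.Ioi (0 : ℝ),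
        -(m / r) * deriv ψ r - |deriv ψ r| = H r) ∧
      Filter.Tendsto (fun r => ψ r / (1 + r)) Filter.atTop (nhds (-c)) := by
  have hden : ∀ r : ℝ, m + |r| ≠ 0 := fun r => by positivity
  set p : ℝ → ℝ := fun r => r * (max (-H (min r s)) 0 / (m + |r|) + B r) with hp
  have hpc : Continuous p := by
    have : Continuous fun r : ℝ => max (-H (min r s)) 0 / (m + |r|) :=
      Continuous.div (by fun_prop) (by fun_prop) hden
    exact continuous_id.mul (this.add hB)
  have hd : ∀ r, HasDerivAt (fun x => ∫ t in (0:ℝ)..x, p t) (p r) r := fun r =>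
    hpc.integral_hasStrictDerivAt 0 r |>.hasDerivAt
  set ψ : ℝ → ℝ := fun x => ∫ t in (0:ℝ)..x, p t with hψ
  have hder : deriv ψ = p := funext fun r => (hd r).deriv
  have hps : ∀ r, s ≤ r → p r = r * B r := by
    intro r hr
    simp [hp, min_eq_right hr, hHs]
  refine ⟨ψ, ?_, ?_, ?_, ?_, ?_⟩
  · apply ContDiff.contDiffOn
    rw [contDiff_one_iff_deriv]
    exact ⟨fun r => (hd r).differentiableAt, hder ▸ hpc⟩
  · simp [hψ]
  · have hanti : AntitoneOn ψ (Set.Ici s) := by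
      apply antitoneOn_of_deriv_nonpos (convex_Ici s)
      · exact fun r _ => (hd r).continuousAt.continuousWithinAt
      · exact fun r _ => (hd r).differentiableAt.differentiableWithinAt
      · intro r hr
        rw [interior_Ici] at hr
        have hr' : s < r := hr
        rw [hder, hps r hr'.le]
        have : 0 < r := by linarith
        have := hB0 r this
        nlinarith
    have hcomp : BddAbove (ψ '' Set.Icc 0 s) :=
      (isCompact_Icc.image_of_continuousOn
        (fun r _ => (hd r).continuousAt.continuousWithinAt)).bddAbove
    obtain ⟨M, hM⟩ := hcomp
    refine ⟨M, ?_⟩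
    rintro _ ⟨r, hr, rfl⟩
    have hr : 0 ≤ r := hr
    rcases le_total r s with h | h
    · exact hM ⟨r, ⟨hr, h⟩, rfl⟩
    · exact (hanti (Set.mem_Ici.2 le_rfl) h h).trans
        (hM ⟨s, ⟨by linarith, le_rfl⟩, rfl⟩)
  · intro r hr
    have hr : 0 < r := hr
    rw [hder]
    have key : (r - m) * B r = H r → p r = r * B r →
        -(m / r) * p r - |p r| = H r := by
      intro a b
      have := hB0 r hr
      rw [b, abs_of_nonpos (by nlinarith), ← a]
      field_simp
      ring
    rcases le_total r s with h | h
    · rcases lt_or_ge (H r) 0 with h' | h'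
      · have e : p r = r * (-H r / (m + r)) := by
          simp only [hp, min_eq_left h, h1 r h h', abs_of_pos hr, add_zero]
          rw [max_eq_left (by linarith)]
        have : 0 ≤ p r := by
          rw [e]
          have : 0 < -H r := by linarith
          positivity
        rw [abs_of_nonneg this, e]
        field_simp
        ring
      · apply key (h2 r h h')
        simp only [hp, min_eq_left h]
        rw [max_eq_right (by linarith)]
        simp
    · exact key (h3 r h) (hps r h)
  · obtain ⟨R, hR⟩ := hinf
    set a := max R (s + 1) with ha
    have haR : R ≤ a := le_max_left _ _
    have has : s + 1 ≤ a := le_max_right _ _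
    have hconst : ∀ r ≥ a, ψ r + c * r + c * m * Real.log (r - m)
        = ψ a + c * a + c * m * Real.log (a - m) := by
      have hG : ∀ r, a ≤ r → HasDerivAt
          (fun r => ψ r + c * r + c * m * Real.log (r - m)) 0 r := by
        intro r hr
        have hrm : r - m ≠ 0 := by intro h; linarith
        have e := ((hd r).add ((hasDerivAt_id r).const_mul c)).add
          ((((hasDerivAt_id r).sub_const m).log hrm).const_mul (c * m))
        have e2 : p r + c * 1 + c * m * (1 / (id r - m)) = 0 := by
          rw [hps r (by linarith)]
          have : B r = -c / (r - m) := by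
            rw [eq_div_iff hrm, ← hR r (by linarith), ← h3 r (by linarith)]; ring
          rw [this]
          simp only [id]
          field_simp
          ring
        rw [e2] at e
        exact e
      intro r hr
      exact constant_of_has_deriv_right_zero (a := a) (b := r)
        (fun x hx => (hG x hx.1).continuousAt.continuousWithinAt)
        (fun x hx => (hG x hx.1).hasDerivWithinAt) r ⟨hr, le_rfl⟩
    set K := ψ a + c * a + c * m * Real.log (a - m)
    have t1 : Tendsto (fun r : ℝ => (1 + r)⁻¹) atTop (𝓝 0) :=
      tendsto_inv_atTop_zero.comp (tendsto_atTop_add_const_left _ 1 tendsto_id)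
    have t2 : Tendsto (fun r : ℝ => Real.log (r - m) / (r - m)) atTop (𝓝 0) := by
      have h0 : Tendsto (fun x : ℝ => Real.log x / x) atTop (𝓝 0) :=
        Real.isLittleO_log_id_atTop.tendsto_div_nhds_zero
      exact h0.comp (tendsto_atTop_add_const_right _ (-m) tendsto_id)
    have t3 : Tendsto (fun r : ℝ => (K + c) * (1 + r)⁻¹ - c
        - c * m * (Real.log (r - m) / (r - m) * (1 - (1 + m) * (1 + r)⁻¹))) atTop
        (𝓝 ((K + c) * 0 - c - c * m * (0 * (1 - (1 + m) * 0)))) :=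
      ((t1.const_mul _).sub_const c).sub
        ((t2.mul ((t1.const_mul _).const_sub 1)).const_mul _)
    have e0 : (K + c) * 0 - c - c * m * (0 * (1 - (1 + m) * 0)) = -c := by ring
    rw [e0] at t3
    refine t3.congr' ?_
    filter_upwards [eventually_ge_atTop a] with r hr
    have hk := hconst r hr
    have hrm : r - m ≠ 0 := by intro h; linarith
    have hr1 : 1 + r ≠ 0 := by intro h; linarith
    have : ψ r = K - c * r - c * m * Real.log (r - m) := by linarith
    rw [this]
    field_simp
    ring

/-- Existence of a `C¹` solution `ψ` of (E) on `(0,∞)` with `ψ(0)=0`,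
bounded from above, with linear growth: `ψ(r)/(1+r) → -c < 0` as `r → ∞`. -/
theorem stmt_0 (n : ℕ) (hn : 2 ≤ n) (ftilde : ℝ → ℝ)
    (hfC1 : ContDiffOn ℝ 1 ftilde (Set.Ici 0))
    (hfnonneg : ∀ r ∈ Set.Ici (0 : ℝ), 0 ≤ ftilde r)
    (hfsupp : ∃ R : ℝ, 0 < R ∧ ∀ r ≥ R, ftilde r = 0)
    (c : ℝ) (hc : IsGreatest (ftilde '' Set.Ici ((n : ℝ) - 1)) c) (hcpos : 0 < c) :
    ∃ ψ : ℝ → ℝ,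
      ContDiffOn ℝ 1 ψ (Set.Ici 0) ∧
      ψ 0 = 0 ∧
      BddAbove (ψ '' Set.Ici 0) ∧
      (∀ r ∈ Set.Ioi (0 : ℝ),
        -(((n : ℝ) - 1) / r) * deriv ψ r - |deriv ψ r| = ftilde r - c) ∧
      Filter.Tendsto (fun r => ψ r / (1 + r)) Filter.atTop (nhds (-c)) ∧
      -c < 0 := by
  have hm : (0:ℝ) < (n:ℝ) - 1 := by
    have : (2:ℝ) ≤ n := by exact_mod_cast hn
    linarith
  generalize hmd : (n:ℝ) - 1 = m at *
  set H : ℝ → ℝ := fun r => ftilde (max r 0) - c with hHd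
  have hHe : ∀ r, 0 ≤ r → H r = ftilde r - c := fun r hr => by simp [hHd, max_eq_left hr]
  have hH : Continuous H := by
    have : Continuous fun r : ℝ => ftilde (max r 0) :=
      hfC1.continuousOn.comp_continuous (by fun_prop) (fun r => le_max_right r 0)
    exact this.sub continuous_const
  have hle : ∀ r, m ≤ r → H r ≤ 0 := by
    intro r hr
    rw [hHe r (by linarith)]
    have := hc.2 ⟨r, hr, rfl⟩
    linarith
  have hinf : ∃ R, ∀ r ≥ R, H r = -c := by
    obtain ⟨R, hR, h⟩ := hfsupp
    exact ⟨R, fun r hr => by rw [hHe r (by linarith), h r hr]; ring⟩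
  suffices hsuff : ∃ (s : ℝ) (B : ℝ → ℝ), m ≤ s ∧ Continuous B ∧ (∀ r, 0 < r → B r ≤ 0) ∧ H s = 0 ∧
      (∀ r, r ≤ s → H r < 0 → B r = 0) ∧
      (∀ r, r ≤ s → 0 ≤ H r → (r - m) * B r = H r) ∧
      (∀ r, s ≤ r → (r - m) * B r = H r) by
    obtain ⟨s, B, a1, a2, a3, a4, a5, a6, a7⟩ := hsuff
    obtain ⟨ψ, b1, b2, b3, b4, b5⟩ := aux_key m c s hm H B a1 hH a2 a3 a4 a5 a6 a7 hinf
    refine ⟨ψ, b1, b2, b3, fun r hr => ?_, b5, by linarith⟩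
    rw [b4 r hr, hHe r (le_of_lt hr)]
  by_cases hHm : H m = 0
  · have hdm : DifferentiableAt ℝ H m := by
      have : DifferentiableAt ℝ (fun r => ftilde r - c) m :=
        ((hfC1.contDiffAt (Ici_mem_nhds hm)).differentiableAt (by norm_num)).sub_const c
      refine this.congr_of_eventuallyEq ?_
      filter_upwards [Ioi_mem_nhds hm] with r hr
      exact hHe r (le_of_lt hr)
    have hq : Continuous (dslope H m) := by
      rw [← continuousOn_univ, continuousOn_dslope Filter.univ_mem]
      exact ⟨hH.continuousOn, hdm⟩
    have hqe : ∀ r, (r - m) * dslope H m r = H r := by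
      intro r
      have := sub_smul_dslope H m r
      simpa [hHm] using this
    refine ⟨m, fun r => min (dslope H m r) 0, le_rfl, hq.min continuous_const,
      fun r _ => min_le_right _ _, hHm, ?_, ?_, ?_⟩
    · intro r hr h
      have := hqe r
      apply min_eq_right
      by_contra! hcon
      nlinarith
    · intro r hr h
      have := hqe r
      rcases eq_or_lt_of_le hr with e | e
      · subst e; simp [hHm]
      · beta_reduce
        rw [min_eq_left, this]
        by_contra! hcon
        nlinarith
    · intro r hr
      have := hqe r
      rcases eq_or_lt_of_le hr with e | e
      · subst e; simp [hHm]
      · beta_reduce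
        rw [min_eq_left, this]
        have := hle r hr
        by_contra! hcon
        nlinarith
  · have hHm' : H m < 0 := lt_of_le_of_ne (hle m le_rfl) hHm
    obtain ⟨s, hs, hsc⟩ := hc.1
    have hs : m ≤ s := hs
    have hHs : H s = 0 := by rw [hHe s (by linarith), hsc]; ring
    have hms : m < s := lt_of_le_of_ne hs (by rintro rfl; exact hHm hHs)
    set k : ℝ → ℝ := fun r => max (H (min r s)) 0 + H (max r s) with hk
    have hkc : Continuous k := by fun_prop
    have k1 : ∀ r, r ≤ s → k r = max (H r) 0 := fun r hr => by
      simp [hk, min_eq_left hr, max_eq_right hr, hHs]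
    have k2 : ∀ r, s ≤ r → k r = H r := fun r hr => by
      simp [hk, min_eq_right hr, max_eq_left hr, hHs]
    refine ⟨s, fun r => k r / (r - m), hs, ?_, ?_, hHs, ?_, ?_, ?_⟩
    · rw [continuous_iff_continuousAt]
      intro r
      by_cases hr : r = m
      · subst hr
        have : (fun x => k x / (x - r)) =ᶠ[𝓝 r] fun _ => (0:ℝ) := by
          filter_upwards [Iio_mem_nhds hms, hH.continuousAt.eventually_lt continuousAt_const hHm']
            with x hx hx'
          rw [k1 x (le_of_lt hx), max_eq_right hx'.le, zero_div]
        exact continuousAt_const.congr this.symm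
      · exact hkc.continuousAt.div (by fun_prop) (sub_ne_zero.2 hr)
    · intro r _
      rcases le_total r m with h | h
      · apply div_nonpos_of_nonneg_of_nonpos
        · rw [k1 r (by linarith)]; exact le_max_right _ _
        · linarith
      · apply div_nonpos_of_nonpos_of_nonneg
        · rcases le_total r s with h' | h'
          · rw [k1 r h', max_eq_right (hle r h)]
          · rw [k2 r h']; exact hle r h
        · linarith
    · intro r hr h
      simp only [k1 r hr, max_eq_right h.le, zero_div]
    · intro r hr h
      have : r - m ≠ 0 := by
        intro h0
        have : r = m := by linarith
        subst this
        linarith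
      simp only [k1 r hr, max_eq_left h]
      field_simp
    · intro r hr
      have : r - m ≠ 0 := by intro h0; linarith
      simp only [k2 r hr]
      field_simp
end

section
/- Let ψ be a viscosity solution of (E) on (0,∞) and let (a,b) ⊆ (0, n-1) be an open interval on which h < 0. Then ψ is nondecreasing on (a,b), and ψ is differentiable at every r ∈ (a,b) with ψ'(r) = -r·h(r)/(r + (n-1)) ≥ 0. -/
open Set Filter Topology

lemma key_mono (u : ℝ → ℝ) (x y : ℝ) (hxy : x < y) (hu : ContinuousOn u (Icc x y))
    (H : ∀ φ : ℝ → ℝ, Differentiable ℝ φ → ∀ r ∈ Ioo x y,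
      IsLocalMax (fun r => u r - φ r) r → 0 ≤ deriv φ r) : u x ≤ u y := by
  by_contra! hlt
  obtain ⟨z, hz, hzu⟩ : ∃ z ∈ Ioo x y, u y < u z := by
    have h1 : ContinuousWithinAt u (Ioo x y) x :=
      (hu x (left_mem_Icc.2 hxy.le)).mono Ioo_subset_Icc_self
    have h2 : ∀ᶠ r in 𝓝[Ioo x y] x, u y < u r := h1.eventually_const_lt hlt
    rw [nhdsWithin_Ioo_eq_nhdsGT hxy] at h2
    have h3 : ∀ᶠ r in 𝓝[>] x, r ∈ Ioo x y := Ioo_mem_nhdsGT hxy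
    obtain ⟨z, h4, h5⟩ := (h2.and h3).exists
    exact ⟨z, h5, h4⟩
  set M := u x - u y with hM
  have hMpos : 0 < M := by linarith
  obtain ⟨K, hKpos, hK⟩ : ∃ K : ℝ, 0 < K ∧ M * Real.exp (-(K * (z - x))) < u z - u y := by
    have hzx : 0 < z - x := by linarith [hz.1]
    have h1 : Tendsto (fun K : ℝ => M * Real.exp (-(K * (z - x)))) atTop (𝓝 (M * 0)) :=
      (Real.tendsto_exp_neg_atTop_nhds_zero.comp (tendsto_id.atTop_mul_const hzx)).const_mul M
    rw [mul_zero] at h1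
    have h2 := h1.eventually_lt_const (show (0:ℝ) < u z - u y by linarith)
    obtain ⟨K, h3, h4⟩ := (h2.and (eventually_gt_atTop 0)).exists
    exact ⟨K, h4, h3⟩
  set φ : ℝ → ℝ := fun r => M * Real.exp (-(K * (r - x))) with hφ
  have hd : ∀ r, HasDerivAt φ (M * (Real.exp (-(K * (r - x))) * (-(K * 1)))) r := fun r =>
    ((((hasDerivAt_id r).sub_const x).const_mul K).neg.exp).const_mul M
  have hdiff : Differentiable ℝ φ := fun r => (hd r).differentiableAt
  obtain ⟨r, hr, hmax⟩ := isCompact_Icc.exists_isMaxOn (nonempty_Icc.2 hxy.le)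
    (hu.sub hdiff.continuous.continuousOn)
  have hzr : u z - φ z ≤ u r - φ r := hmax (Ioo_subset_Icc_self hz)
  have hφz : φ z < u z - u y := hK
  have hφy : 0 < φ y := by simp only [hφ]; positivity
  have hφx : φ x = M := by simp [hφ]
  have hrx : r ≠ x := by
    rintro rfl
    linarith
  have hry : r ≠ y := by
    rintro rfl
    linarith
  have hrI : r ∈ Ioo x y := ⟨lt_of_le_of_ne hr.1 hrx.symm, lt_of_le_of_ne hr.2 hry⟩
  have := H φ hdiff r hrI (hmax.isLocalMax (Icc_mem_nhds hrI.1 hrI.2))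
  rw [(hd r).deriv] at this
  have h5 : 0 < M * (Real.exp (-(K * (r - x))) * (K * 1)) := by positivity
  linarith

/-- On an interval `(a,b) ⊆ (0,n-1)` where `h < 0`, any viscosity
solution `ψ` of (E) on `(0,∞)` is nondecreasing and differentiable with
`ψ'(r) = -r·h(r)/(r+(n-1)) ≥ 0`. -/
theorem stmt_2 (n : ℕ) (hn : 2 ≤ n) (ftilde : ℝ → ℝ)
    (hfC1 : ContDiffOn ℝ 1 ftilde (Set.Ici 0))
    (hfnonneg : ∀ r ∈ Set.Ici (0 : ℝ), 0 ≤ ftilde r)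
    (hfsupp : ∃ R : ℝ, 0 < R ∧ ∀ r ≥ R, ftilde r = 0)
    (c : ℝ) (hc : IsGreatest (ftilde '' Set.Ici ((n : ℝ) - 1)) c)
    (ψ : ℝ → ℝ) (hψcont : ContinuousOn ψ (Set.Ici 0))
    (hψ : ViscSolE n (fun r => ftilde r - c) (Set.Ioi 0) ψ)
    (a b : ℝ) (hab : Set.Ioo a b ⊆ Set.Ioo 0 ((n : ℝ) - 1))
    (hneg : ∀ r ∈ Set.Ioo a b, ftilde r - c < 0) :
    MonotoneOn ψ (Set.Ioo a b) ∧
    ∀ r ∈ Set.Ioo a b,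
      HasDerivAt ψ (-(r * (ftilde r - c)) / (r + ((n : ℝ) - 1))) r ∧
      0 ≤ -(r * (ftilde r - c)) / (r + ((n : ℝ) - 1)) := by
  have hn' : (2:ℝ) ≤ n := by exact_mod_cast hn
  set g : ℝ → ℝ := fun r => -(r * (ftilde r - c)) / (r + ((n : ℝ) - 1)) with hg
  have hgc : ContinuousOn g (Ici 0) := by
    have := hfC1.continuousOn
    refine ContinuousOn.div (by fun_prop) (by fun_prop) ?_
    intro r hr
    have : 0 ≤ r := hr
    linarith
  have hgc' : Continuous (fun r => g (max r 0)) :=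
    hgc.comp_continuous (by fun_prop) (fun r => le_max_right r 0)
  set G : ℝ → ℝ := fun x => ∫ t in (0:ℝ)..x, g (max t 0) with hG
  have hGd : ∀ r, HasDerivAt G (g (max r 0)) r := fun r => hgc'.integral_hasStrictDerivAt 0 r |>.hasDerivAt
  have hGd' : ∀ r, 0 < r → HasDerivAt G (g r) r := fun r hr => by
    simpa [max_eq_left hr.le] using hGd r
  have hGdiff : Differentiable ℝ G := fun r => (hGd r).differentiableAt
  have hgpos : ∀ r ∈ Ioo a b, 0 ≤ g r := by
    intro r hr
    have h1 := hab hr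
    have h2 := hneg r hr
    have h3 := h1.1
    apply div_nonneg <;> nlinarith
  have alg : ∀ r ∈ Ioo a b, ∀ p : ℝ,
      (-(((n : ℝ) - 1) / r) * p - |p| ≤ ftilde r - c → g r ≤ p) ∧
      (-(((n : ℝ) - 1) / r) * p - |p| ≥ ftilde r - c → p ≤ g r) := by
    intro r hr p
    have h1 := hab hr
    have h2 := hneg r hr
    have h3 : 0 < r := h1.1
    have h4 : r < (n:ℝ) - 1 := h1.2
    have h5 : 0 < r + ((n:ℝ) - 1) := by linarith
    have e : r * (-(((n : ℝ) - 1) / r) * p - |p|) = -((n:ℝ)-1) * p - r * |p| := by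
      field_simp
    constructor
    · intro h
      have h' := mul_le_mul_of_nonneg_left h h3.le
      rw [e] at h'
      have hh : r * (ftilde r - c) < 0 := mul_neg_of_pos_of_neg h3 h2
      have hp : 0 < p := by
        by_contra! hp
        rw [abs_of_nonpos hp] at h'
        nlinarith
      rw [abs_of_pos hp] at h'
      rw [hg]
      simp only
      rw [div_le_iff₀ h5]
      nlinarith
    · intro h
      rcases le_or_gt p 0 with hp | hp
      · exact hp.trans (hgpos r hr)
      have h' := mul_le_mul_of_nonneg_left h h3.le
      rw [e, abs_of_pos hp] at h'
      rw [hg]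
      simp only
      rw [le_div_iff₀ h5]
      nlinarith
  have huc : ∀ x ∈ Ioo a b, ∀ y ∈ Ioo a b, ContinuousOn (fun r => ψ r - G r) (Icc x y) := by
    intro x hx y hy
    refine (hψcont.mono ?_).sub hGdiff.continuous.continuousOn
    intro r hr
    exact (hab hx).1.le.trans hr.1
  have hconst : ∀ x ∈ Ioo a b, ∀ y ∈ Ioo a b, x < y → ψ x - G x = ψ y - G y := by
    intro x hx y hy hxy
    have hsub : ∀ r ∈ Ioo x y, r ∈ Ioo a b := fun r hr => ⟨hx.1.trans hr.1, hr.2.trans hy.2⟩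
    apply le_antisymm
    · refine key_mono (fun r => ψ r - G r) x y hxy (huc x hx y hy) ?_
      intro φ hφ r hr hm
      have hr' := hsub r hr
      have hr0 : 0 < r := (hab hr').1
      have hder : HasDerivAt (fun r => G r + φ r) (g r + deriv φ r) r :=
        (hGd' r hr0).add (hφ r).hasDerivAt
      have h1 := hψ.1 (fun r => G r + φ r) (hGdiff.add hφ).differentiableOn r hr0
        (by simpa only [sub_sub] using hm)
      rw [hder.deriv] at h1
      have := (alg r hr' _).1 h1
      linarith
    · have := key_mono (fun r => -(ψ r - G r)) x y hxy (huc x hx y hy).neg ?_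
      · skip
        linarith
      intro φ hφ r hr hm
      have hr' := hsub r hr
      have hr0 : 0 < r := (hab hr').1
      have hder : HasDerivAt (fun r => G r - φ r) (g r - deriv φ r) r :=
        (hGd' r hr0).sub (hφ r).hasDerivAt
      have h1 := hψ.2 (fun r => G r - φ r) (hGdiff.sub hφ).differentiableOn r hr0
        (by
          have h2 := hm.neg
          have h3 : (fun r => ψ r - (G r - φ r)) = (fun r => -(-(ψ r - G r) - φ r)) := by
            funext r; ring
          rw [h3]; exact h2)
      rw [hder.deriv] at h1
      have := (alg r hr' _).2 h1
      linarith
  have hD : ∀ r ∈ Ioo a b, HasDerivAt ψ (g r) r := by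
    intro r hr
    have h1 := (hGd' r (hab hr).1).add_const (ψ r - G r)
    refine h1.congr_of_eventuallyEq ?_
    filter_upwards [Ioo_mem_nhds hr.1 hr.2] with s hs
    rcases lt_trichotomy s r with h | h | h
    · have := hconst s hs r hr h
      linarith
    · subst h; ring
    · have := hconst r hr s hs h
      linarith
  refine ⟨?_, fun r hr => ⟨hD r hr, hgpos r hr⟩⟩
  refine monotoneOn_of_deriv_nonneg (convex_Ioo a b)
    (fun r hr => (hD r hr).continuousAt.continuousWithinAt) ?_ ?_
  · rw [interior_Ioo]
    exact fun r hr => (hD r hr).differentiableAt.differentiableWithinAt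
  · rw [interior_Ioo]
    intro r hr
    rw [(hD r hr).deriv]
    exact hgpos r hr
end

section
/- Let ψ be a viscosity solution of (E) on (0,∞) and let (a,b) ⊆ (0, n-1) be an open interval on which h > 0. Then ψ is nonincreasing on (a,b), and ψ is differentiable at every r ∈ (a,b) with ψ'(r) = r·h(r)/(r - (n-1)) ≤ 0. -/
open Set Filter Topology

lemma aux_max (p q m : ℝ) (u : ℝ → ℝ) (hu : ContinuousOn u (Ioo p q))
    (H : ∀ φ : ℝ → ℝ, Differentiable ℝ φ → ∀ r ∈ Ioo p q,
      IsLocalMax (fun t => u t - φ t) r → m ≤ deriv φ r)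
    (x y : ℝ) (hx : x ∈ Ioo p q) (hy : y ∈ Ioo p q) (hxy : x < y) :
    m * (y - x) ≤ u y - u x := by
  by_contra! hcon
  obtain ⟨δ, hδ⟩ : ∃ δ, δ = u x - u y + m * (y - x) := ⟨_, rfl⟩
  have hδ0 : 0 < δ := by linarith
  obtain ⟨z, hz⟩ : ∃ z, z = (p + x) / 2 := ⟨_, rfl⟩
  have hpz : p < z := by linarith [hx.1]
  have hzx : z < x := by linarith [hx.1]
  obtain ⟨A, hA⟩ : ∃ A, A = u z - m * z - u x + m * x := ⟨_, rfl⟩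
  obtain ⟨K, hK⟩ : ∃ K, K = (|A| + 1) / (δ * (x - z)) := ⟨_, rfl⟩
  have hxz : 0 < x - z := by linarith
  have hK0 : 0 < K := by rw [hK]; positivity
  have hKA : δ * (K * (x - z)) = |A| + 1 := by
    rw [hK]; field_simp
  obtain ⟨φ, hφ⟩ : ∃ φ : ℝ → ℝ, φ = fun t => m * t + δ * Real.exp (-K * (t - x)) := ⟨_, rfl⟩
  have hder : ∀ t, HasDerivAt φ (m + δ * (Real.exp (-K * (t - x)) * (-K))) t := by
    intro t
    rw [hφ]
    have h1 : HasDerivAt (fun t : ℝ => -K * (t - x)) (-K) t := by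
      simpa using ((hasDerivAt_id t).sub_const x).const_mul (-K)
    have h2 : HasDerivAt (fun t : ℝ => m * t) m t := by
      simpa using (hasDerivAt_id t).const_mul m
    exact h2.add (h1.exp.const_mul δ)
  have hdiff : Differentiable ℝ φ := fun t => (hder t).differentiableAt
  have hsub : Icc z y ⊆ Ioo p q := fun t ht => ⟨by linarith [ht.1], by linarith [ht.2, hy.2]⟩
  obtain ⟨r, hr, hmax⟩ := isCompact_Icc.exists_isMaxOn (⟨x, hzx.le, hxy.le⟩ : (Icc z y).Nonempty)
    ((hu.mono hsub).sub hdiff.continuous.continuousOn)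
  have hrx : u x - φ x ≤ u r - φ r := hmax (⟨hzx.le, hxy.le⟩ : x ∈ Icc z y)
  have hφx : φ x = m * x + δ := by simp [hφ]
  have hrz : r ≠ z := by
    rintro rfl
    have h1 : φ r = m * r + δ * Real.exp (-K * (r - x)) := by simp [hφ]
    have h2 := Real.add_one_le_exp (-K * (r - x))
    have h3 := mul_le_mul_of_nonneg_left h2 hδ0.le
    have h4 := le_abs_self A
    nlinarith
  have hry : r ≠ y := by
    rintro rfl
    have h1 : φ r = m * r + δ * Real.exp (-K * (r - x)) := by simp [hφ]
    have h2 := mul_pos hδ0 (Real.exp_pos (-K * (r - x)))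
    nlinarith
  have hloc : IsLocalMax (fun t => u t - φ t) r :=
    hmax.isLocalMax (Icc_mem_nhds (lt_of_le_of_ne hr.1 hrz.symm) (lt_of_le_of_ne hr.2 hry))
  have := H φ hdiff r (hsub hr) hloc
  rw [(hder r).deriv] at this
  have h2 := mul_pos (mul_pos hδ0 (Real.exp_pos (-K * (r - x)))) hK0
  nlinarith

lemma aux_min (p q m : ℝ) (u : ℝ → ℝ) (hu : ContinuousOn u (Ioo p q))
    (H : ∀ φ : ℝ → ℝ, Differentiable ℝ φ → ∀ r ∈ Ioo p q,
      IsLocalMin (fun t => u t - φ t) r → deriv φ r ≤ m)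
    (x y : ℝ) (hx : x ∈ Ioo p q) (hy : y ∈ Ioo p q) (hxy : x < y) :
    u y - u x ≤ m * (y - x) := by
  have := aux_max p q (-m) (fun t => - u t) hu.neg (by
    intro φ hφ r hr hl
    have h := H (fun t => - φ t) hφ.neg r hr (by
      have := hl.neg
      refine this.congr ?_ 
      exact Eventually.of_forall fun t => by simp; ring)
    rw [deriv.fun_neg] at h
    linarith) x y hx hy hxy
  linarith

/-- On an interval `(a,b) ⊆ (0,n-1)` where `h > 0`, any viscosity
solution `ψ` of (E) on `(0,∞)` is nonincreasing and differentiable with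
`ψ'(r) = r·h(r)/(r-(n-1)) ≤ 0`. -/
theorem stmt_3 (n : ℕ) (hn : 2 ≤ n) (ftilde : ℝ → ℝ)
    (hfC1 : ContDiffOn ℝ 1 ftilde (Set.Ici 0))
    (hfnonneg : ∀ r ∈ Set.Ici (0 : ℝ), 0 ≤ ftilde r)
    (hfsupp : ∃ R : ℝ, 0 < R ∧ ∀ r ≥ R, ftilde r = 0)
    (c : ℝ) (hc : IsGreatest (ftilde '' Set.Ici ((n : ℝ) - 1)) c)
    (ψ : ℝ → ℝ) (hψcont : ContinuousOn ψ (Set.Ici 0))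
    (hψ : ViscSolE n (fun r => ftilde r - c) (Set.Ioi 0) ψ)
    (a b : ℝ) (hab : Set.Ioo a b ⊆ Set.Ioo 0 ((n : ℝ) - 1))
    (hpos : ∀ r ∈ Set.Ioo a b, 0 < ftilde r - c) :
    AntitoneOn ψ (Set.Ioo a b) ∧
    ∀ r ∈ Set.Ioo a b,
      HasDerivAt ψ (r * (ftilde r - c) / (r - ((n : ℝ) - 1))) r ∧
      r * (ftilde r - c) / (r - ((n : ℝ) - 1)) ≤ 0 := by
  obtain ⟨hsub, hsup⟩ := hψ
  obtain ⟨g, hg⟩ : ∃ g : ℝ → ℝ, g = fun r => r * (ftilde r - c) / (r - ((n : ℝ) - 1)) := ⟨_, rfl⟩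
  have hg' : ∀ r ∈ Ioo a b, g r ≤ 0 ∧ g r * (r - ((n : ℝ) - 1)) = r * (ftilde r - c) := by
    intro r hr
    have h1 := hab hr
    have h2 := hpos r hr
    have h3 : r - ((n : ℝ) - 1) < 0 := by linarith [h1.2]
    rw [hg]
    exact ⟨div_nonpos_of_nonneg_of_nonpos (mul_nonneg h1.1.le h2.le) h3.le,
      div_mul_cancel₀ _ h3.ne⟩
  have hcont : ContinuousOn ψ (Ioo a b) := hψcont.mono fun r hr => (hab hr).1.le
  have hmax : ∀ φ : ℝ → ℝ, Differentiable ℝ φ → ∀ r ∈ Ioo a b,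
      IsLocalMax (fun t => ψ t - φ t) r → g r ≤ deriv φ r := by
    intro φ hφ r hr hl
    have h1 := hab hr
    have h := hsub φ hφ.differentiableOn r h1.1 hl
    simp only at h
    obtain ⟨hg0, hge⟩ := hg' r hr
    have hr0 : 0 < r := h1.1
    by_contra! hlt
    rw [abs_of_neg (by linarith)] at h
    have h2 := mul_le_mul_of_nonneg_left h hr0.le
    have h3 : r * (-(((n : ℝ) - 1) / r) * deriv φ r - -deriv φ r)
      = deriv φ r * (r - ((n : ℝ) - 1)) := by field_simp; ring
    rw [h3, ← hge] at h2
    nlinarith [h1.2]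
  have hmin : ∀ φ : ℝ → ℝ, Differentiable ℝ φ → ∀ r ∈ Ioo a b,
      IsLocalMin (fun t => ψ t - φ t) r → deriv φ r ≤ g r := by
    intro φ hφ r hr hl
    have h1 := hab hr
    have h := hsup φ hφ.differentiableOn r h1.1 hl
    simp only at h
    obtain ⟨hg0, hge⟩ := hg' r hr
    have hr0 : 0 < r := h1.1
    by_contra! hlt
    have h4 := neg_abs_le (deriv φ r)
    have h2 := mul_le_mul_of_nonneg_left
      (show ftilde r - c ≤ -(((n : ℝ) - 1) / r) * deriv φ r - -deriv φ r by
        linarith [neg_le_abs (deriv φ r)]) hr0.le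
    have h3 : r * (-(((n : ℝ) - 1) / r) * deriv φ r - -deriv φ r)
      = deriv φ r * (r - ((n : ℝ) - 1)) := by field_simp; ring
    rw [h3, ← hge] at h2
    nlinarith [h1.2]
  refine ⟨?_, ?_⟩
  · intro x hx y hy hxy
    rcases hxy.eq_or_lt with rfl | hlt
    · exact le_rfl
    have := aux_min a b 0 ψ hcont
      (fun φ hφ r hr hl => (hmin φ hφ r hr hl).trans (hg' r hr).1) x y hx hy hlt
    linarith
  · intro r hr
    have hgr : r * (ftilde r - c) / (r - ((n : ℝ) - 1)) = g r := by rw [hg]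
    rw [hgr]
    refine ⟨?_, (hg' r hr).1⟩
    have h1 := hab hr
    have hfc : ContinuousAt ftilde r := hfC1.continuousOn.continuousAt (Ici_mem_nhds h1.1)
    have hgc : ContinuousAt g r := by
      rw [hg]
      exact (continuousAt_id.mul (hfc.sub continuousAt_const)).div
        (continuousAt_id.sub continuousAt_const) (by linarith [h1.2])
    rw [hasDerivAt_iff_isLittleO, Asymptotics.isLittleO_iff]
    intro ε hε
    have hev : ∀ᶠ t in 𝓝 r, |g t - g r| < ε ∧ t ∈ Ioo a b :=
      (by simpa [Real.dist_eq] using Metric.tendsto_nhds.1 hgc ε hε :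
        ∀ᶠ t in 𝓝 r, |g t - g r| < ε).and (Ioo_mem_nhds hr.1 hr.2)
    obtain ⟨η, hη, hball⟩ := Metric.eventually_nhds_iff_ball.1 hev
    rw [Real.ball_eq_Ioo] at hball
    have hJ : Ioo (r - η) (r + η) ⊆ Ioo a b := fun t ht => (hball t ht).2
    have hlow := aux_max (r - η) (r + η) (g r - ε) ψ (hcont.mono hJ)
      (fun φ hφ t ht hl => by
        have := hmax φ hφ t (hJ ht) hl
        have := (abs_lt.1 (hball t ht).1).1
        linarith)
    have hupp := aux_min (r - η) (r + η) (g r + ε) ψ (hcont.mono hJ)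
      (fun φ hφ t ht hl => by
        have := hmin φ hφ t (hJ ht) hl
        have := (abs_lt.1 (hball t ht).1).2
        linarith)
    have hrJ : r ∈ Ioo (r - η) (r + η) := ⟨by linarith, by linarith⟩
    filter_upwards [Ioo_mem_nhds hrJ.1 hrJ.2] with t ht
    simp only [Real.norm_eq_abs, smul_eq_mul]
    rcases lt_trichotomy t r with h | rfl | h
    · have hl := hlow t r ht hrJ h
      have hu := hupp t r ht hrJ h
      rw [abs_of_neg (sub_neg.2 h), abs_le]
      constructor <;> nlinarith
    · simp
    · have hl := hlow r t hrJ ht h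
      have hu := hupp r t hrJ ht h
      rw [abs_of_pos (sub_pos.2 h), abs_le]
      constructor <;> nlinarith
end

section
/- Let ψ₁, ψ₂ : [0,∞) → ℝ be continuous functions which are viscosity solutions of (E) on (0,∞). Then there is a constant C ∈ ℝ such that ψ₁(r) = ψ₂(r) + C for all r ∈ [0, n-1]. -/
open Set Filter Topology

lemma auxA (u : ℝ → ℝ) (a b : ℝ) (hab : a < b) (hu : ContinuousOn u (Icc a b))
    (H : ∀ φ : ℝ → ℝ, Differentiable ℝ φ → ∀ r ∈ Ioo a b,
      IsLocalMax (fun r => u r - φ r) r → 0 ≤ deriv φ r) : u a ≤ u b := by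
  by_contra hlt
  push Not at hlt
  obtain ⟨z, hz, hzb⟩ : ∃ z ∈ Ioo a b, u b < u z := by
    have h1 : Tendsto u (𝓝[>] a) (𝓝 (u a)) := by
      have h0 := hu a (left_mem_Icc.2 hab.le)
      have h2 : ContinuousWithinAt u (Ioo a b) a := h0.mono Ioo_subset_Icc_self
      have h3 := h2.tendsto
      rwa [nhdsWithin_Ioo_eq_nhdsGT hab] at h3
    have h2 : ∀ᶠ z in 𝓝[>] a, u b < u z := h1.eventually (lt_mem_nhds hlt)
    have h3 : ∀ᶠ z in 𝓝[>] a, z ∈ Ioo a b := Ioo_mem_nhdsGT hab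
    obtain ⟨z, h4, h5⟩ := (h3.and h2).exists
    exact ⟨z, h4, h5⟩
  set A : ℝ := 1 + |u a - u z| with hA
  have hApos : 0 < A := by positivity
  obtain ⟨k, hk, hk1, hk2⟩ : ∃ k : ℝ, 0 < k ∧ A * Real.exp (-(k * (z - a))) < 1 ∧
      A * Real.exp (-(k * (z - a))) < u z - u b := by
    have hza : 0 < z - a := sub_pos.2 hz.1
    have h1 : Tendsto (fun k : ℝ => A * Real.exp (-(k * (z - a)))) atTop (𝓝 (A * 0)) :=
      (Real.tendsto_exp_neg_atTop_nhds_zero.comp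
        (tendsto_id.atTop_mul_const hza)).const_mul A
    rw [mul_zero] at h1
    obtain ⟨k, h2, h3, h4⟩ := ((eventually_gt_atTop (0:ℝ)).and
      ((h1.eventually (gt_mem_nhds one_pos)).and
        (h1.eventually (gt_mem_nhds (sub_pos.2 hzb))))).exists
    exact ⟨k, h2, h3, h4⟩
  set φ : ℝ → ℝ := fun r => A * Real.exp (-(k * (r - a))) with hφ
  have hd : ∀ r, HasDerivAt φ (A * (Real.exp (-(k * (r - a))) * (-(k * 1)))) r := fun r =>
    ((((hasDerivAt_id r).sub_const a).const_mul k).neg.exp).const_mul A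
  have hφd : Differentiable ℝ φ := fun r => (hd r).differentiableAt
  obtain ⟨r, hr, hmax⟩ := isCompact_Icc.exists_isMaxOn (nonempty_Icc.2 hab.le)
    (hu.sub hφd.continuous.continuousOn)
  have hzr : u z - φ z ≤ u r - φ r := hmax (Ioo_subset_Icc_self hz)
  have hφz : φ z = A * Real.exp (-(k * (z - a))) := rfl
  have hra : r ≠ a := by
    rintro rfl
    have : φ r = A := by simp [hφ]
    have := le_abs_self (u r - u z)
    linarith
  have hrb : r ≠ b := by
    rintro rfl
    have : 0 < φ r := by positivity
    linarith
  have hr' : r ∈ Ioo a b := ⟨lt_of_le_of_ne hr.1 hra.symm, lt_of_le_of_ne hr.2 hrb⟩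
  have h0 := H φ hφd r hr' (hmax.isLocalMax (Icc_mem_nhds hr'.1 hr'.2))
  rw [(hd r).deriv] at h0
  have : 0 < A * (Real.exp (-(k * (r - a))) * (k * 1)) := by positivity
  linarith

lemma auxB (ψ g : ℝ → ℝ) (a b : ℝ) (hab : a < b) (hψ : ContinuousOn ψ (Icc a b))
    (hg : ContinuousOn g (Icc a b))
    (H : ∀ φ : ℝ → ℝ, Differentiable ℝ φ → ∀ r ∈ Ioo a b,
      IsLocalMax (fun r => ψ r - φ r) r → g r ≤ deriv φ r) :
    ∫ x in a..b, g x ≤ ψ b - ψ a := by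
  set e : ℝ → ℝ := IccExtend hab.le ((Icc a b).domRestrict g) with he
  have hec : Continuous e := hg.domRestrict.Icc_extend'
  have hee : ∀ x ∈ Icc a b, e x = g x := fun x hx => by
    rw [he, IccExtend_of_mem _ _ hx]; rfl
  set G : ℝ → ℝ := fun x => ∫ t in a..x, e t with hG
  have hGd : ∀ r, HasDerivAt G (e r) r := fun r => hec.integral_hasStrictDerivAt a r |>.hasDerivAt
  have hGdiff : Differentiable ℝ G := fun r => (hGd r).differentiableAt
  have key := auxA (fun r => ψ r - G r) a b hab (hψ.sub hGdiff.continuous.continuousOn) (by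
    intro φ hφ r hr hm
    have h1 := H (fun r => G r + φ r) (hGdiff.add hφ) r hr (by
      simpa only [sub_sub] using hm)
    rw [((hGd r).fun_add (hφ r).hasDerivAt).deriv, hee r (Ioo_subset_Icc_self hr)] at h1
    linarith)
  have h1 : G a = 0 := by simp [hG]
  have h2 : G b = ∫ x in a..b, g x := by
    apply intervalIntegral.integral_congr
    intro x hx
    rw [uIcc_of_le hab.le] at hx
    exact hee x hx
  simp only [h1, h2] at key
  linarith

/-- the unique root of the Hamiltonian -/
noncomputable def slopeG (m : ℝ) (h : ℝ → ℝ) (r : ℝ) : ℝ :=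
  r * max (-h r) 0 / (m + r) - r * max (h r) 0 / (m - r)

lemma ham_eq (m r p : ℝ) (hr : 0 < r) :
    (-(m / r) * p - |p|) * r = -(m * p + r * |p|) := by
  field_simp
  ring

lemma slope_le (m : ℝ) (h : ℝ → ℝ) (r p : ℝ) (hr : 0 < r) (hrm : r < m)
    (hp : -(m / r) * p - |p| ≤ h r) : slopeG m h r ≤ p := by
  have h1 : -(m * p + r * |p|) ≤ h r * r := by
    rw [← ham_eq m r p hr]; exact mul_le_mul_of_nonneg_right hp hr.le
  have hp1 : 0 < m + r := by linarith
  have hp2 : 0 < m - r := by linarith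
  unfold slopeG
  rcases le_total (h r) 0 with h0 | h0
  · rw [max_eq_left (by linarith), max_eq_right h0, mul_zero, zero_div, sub_zero, div_le_iff₀ hp1]
    rcases le_total 0 p with hp0 | hp0
    · rw [abs_of_nonneg hp0] at h1; linarith
    · rw [abs_of_nonpos hp0] at h1
      have h2 : 0 ≤ p * (m - r) := by nlinarith [mul_nonneg hr.le (neg_nonneg.2 h0)]
      have h3 : 0 ≤ p := nonneg_of_mul_nonneg_left h2 hp2
      have h4 : p = 0 := le_antisymm hp0 h3
      subst h4
      linarith
  · rw [max_eq_right (by linarith), max_eq_left h0, mul_zero, zero_div, zero_sub, neg_le,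
      le_div_iff₀ hp2]
    rcases le_total 0 p with hp0 | hp0
    · nlinarith [mul_nonneg hr.le h0]
    · rw [abs_of_nonpos hp0] at h1; linarith

lemma le_slope (m : ℝ) (h : ℝ → ℝ) (r p : ℝ) (hr : 0 < r) (hrm : r < m)
    (hp : h r ≤ -(m / r) * p - |p|) : p ≤ slopeG m h r := by
  have h1 : h r * r ≤ -(m * p + r * |p|) := by
    rw [← ham_eq m r p hr]; exact mul_le_mul_of_nonneg_right hp hr.le
  have hp1 : 0 < m + r := by linarith
  have hp2 : 0 < m - r := by linarith
  unfold slopeG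
  rcases le_total (h r) 0 with h0 | h0
  · rw [max_eq_left (by linarith), max_eq_right h0, mul_zero, zero_div, sub_zero, le_div_iff₀ hp1]
    rcases le_total 0 p with hp0 | hp0
    · rw [abs_of_nonneg hp0] at h1; linarith
    · nlinarith [mul_nonneg hr.le (neg_nonneg.2 h0)]
  · rw [max_eq_right (by linarith), max_eq_left h0, mul_zero, zero_div, zero_sub, le_neg,
      div_le_iff₀ hp2]
    rcases le_total 0 p with hp0 | hp0
    · rw [abs_of_nonneg hp0] at h1; nlinarith [mul_nonneg hr.le h0]
    · rw [abs_of_nonpos hp0] at h1; linarith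

lemma auxC (n : ℕ) (h ψ : ℝ → ℝ) (hh : ContinuousOn h (Ici 0)) (hc : ContinuousOn ψ (Ici 0))
    (hψ : ViscSolE n h (Ioi 0) ψ) (a b : ℝ) (ha : 0 < a) (hab : a < b) (hb : b < (n:ℝ) - 1) :
    ψ b - ψ a = ∫ x in a..b, slopeG ((n:ℝ) - 1) h x := by
  have hsub : Icc a b ⊆ Ici 0 := fun x hx => ha.le.trans hx.1
  have hhc := hh.mono hsub
  have hcc := hc.mono hsub
  have hg : ContinuousOn (slopeG ((n:ℝ) - 1) h) (Icc a b) := by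
    unfold slopeG
    apply ContinuousOn.sub
    · apply ContinuousOn.div
      · exact continuousOn_id.mul (ContinuousOn.sup hhc.neg continuousOn_const)
      · fun_prop
      · intro x hx
        have := hx.1
        exact ne_of_gt (by linarith)
    · apply ContinuousOn.div
      · exact continuousOn_id.mul (ContinuousOn.sup hhc continuousOn_const)
      · fun_prop
      · intro x hx
        have := hx.2
        exact ne_of_gt (by linarith)
  apply le_antisymm
  · have := auxB (fun x => -ψ x) (fun x => -slopeG ((n:ℝ) - 1) h x) a b hab hcc.neg hg.neg (by
      intro φ hφ r hr hm
      have hr0 : 0 < r := ha.trans hr.1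
      have h1 := hψ.2 (fun x => -φ x) hφ.neg.differentiableOn r hr0 (by
        have := hm.neg
        simpa [sub_eq_add_neg, add_comm] using this)
      have h2 := le_slope _ h r _ hr0 (hr.2.trans hb) h1
      have h3 : deriv (fun x => -φ x) r = - deriv φ r := deriv.fun_neg
      rw [h3] at h2
      linarith)
    rw [intervalIntegral.integral_neg] at this
    linarith
  · apply auxB ψ _ a b hab hcc hg
    intro φ hφ r hr hm
    have hr0 : 0 < r := ha.trans hr.1
    exact slope_le _ h r _ hr0 (hr.2.trans hb) (hψ.1 φ hφ.differentiableOn r hr0 hm)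

/-- Two continuous viscosity solutions of (E) on `(0,∞)` differ by a
constant on `[0, n-1]`. -/
theorem stmt_4 (n : ℕ) (hn : 2 ≤ n) (ftilde : ℝ → ℝ)
    (hfC1 : ContDiffOn ℝ 1 ftilde (Set.Ici 0))
    (hfnonneg : ∀ r ∈ Set.Ici (0 : ℝ), 0 ≤ ftilde r)
    (hfsupp : ∃ R : ℝ, 0 < R ∧ ∀ r ≥ R, ftilde r = 0)
    (c : ℝ) (hc : IsGreatest (ftilde '' Set.Ici ((n : ℝ) - 1)) c)
    (ψ₁ ψ₂ : ℝ → ℝ)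
    (hψ₁cont : ContinuousOn ψ₁ (Set.Ici 0)) (hψ₂cont : ContinuousOn ψ₂ (Set.Ici 0))
    (hψ₁ : ViscSolE n (fun r => ftilde r - c) (Set.Ioi 0) ψ₁)
    (hψ₂ : ViscSolE n (fun r => ftilde r - c) (Set.Ioi 0) ψ₂) :
    ∃ C : ℝ, ∀ r ∈ Set.Icc (0 : ℝ) ((n : ℝ) - 1), ψ₁ r = ψ₂ r + C := by
  have hh : ContinuousOn (fun r => ftilde r - c) (Ici 0) := hfC1.continuousOn.sub continuousOn_const
  set m : ℝ := (n:ℝ) - 1 with hm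
  have hm0 : 0 < m := by
    have : (2:ℝ) ≤ n := by exact_mod_cast hn
    linarith
  have hD : ContinuousOn (fun r => ψ₁ r - ψ₂ r) (Icc 0 m) :=
    (hψ₁cont.sub hψ₂cont).mono Icc_subset_Ici_self
  have hlt : ∀ a b : ℝ, 0 < a → a < b → b < m → ψ₁ a - ψ₂ a = ψ₁ b - ψ₂ b := by
    intro a b ha hab hb
    have h1 := auxC n _ ψ₁ hh hψ₁cont hψ₁ a b ha hab hb
    have h2 := auxC n _ ψ₂ hh hψ₂cont hψ₂ a b ha hab hb
    linarith
  refine ⟨ψ₁ (m / 2) - ψ₂ (m / 2), ?_⟩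
  have hE : EqOn (fun r => ψ₁ r - ψ₂ r) (fun _ => ψ₁ (m / 2) - ψ₂ (m / 2)) (Ioo 0 m) := by
    intro r hr
    rcases lt_trichotomy r (m / 2) with h | h | h
    · exact hlt r (m / 2) hr.1 h (by linarith)
    · simp [h]
    · exact (hlt (m / 2) r (by linarith) h hr.2).symm
  have hE' := hE.of_subset_closure hD continuousOn_const Ioo_subset_Icc_self
    (by rw [closure_Ioo hm0.ne])
  intro r hr
  have := hE' hr
  simp only at this
  linarith
end

section
/- Let (a,b) ⊆ (n-1, ∞) be an open interval and let ψ be a continuous viscosity supersolution of (E) on (a,b). Then ψ is locally Lipschitz on (a,b), i.e., ψ is Lipschitz continuous on every compact subinterval [α,β] ⊂ (a,b). -/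
open Set Filter Topology

/-- A continuous viscosity supersolution of (E) on an interval
`(a,b) ⊆ (n-1,∞)` is locally Lipschitz: it is Lipschitz on every compact
subinterval `[α,β] ⊂ (a,b)`. -/
theorem stmt_5 (n : ℕ) (hn : 2 ≤ n) (ftilde : ℝ → ℝ)
    (hfC1 : ContDiffOn ℝ 1 ftilde (Set.Ici 0))
    (hfnonneg : ∀ r ∈ Set.Ici (0 : ℝ), 0 ≤ ftilde r)
    (hfsupp : ∃ R : ℝ, 0 < R ∧ ∀ r ≥ R, ftilde r = 0)
    (c : ℝ) (hc : IsGreatest (ftilde '' Set.Ici ((n : ℝ) - 1)) c)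
    (a b : ℝ) (hab : Set.Ioo a b ⊆ Set.Ioi ((n : ℝ) - 1))
    (ψ : ℝ → ℝ) (hψcont : ContinuousOn ψ (Set.Ioo a b))
    (hψsuper : ViscSupersolE n (fun r => ftilde r - c) (Set.Ioo a b) ψ) :
    ∀ α β : ℝ, a < α → β < b → ∃ K : NNReal, LipschitzOnWith K ψ (Set.Icc α β) := by
  intro α β haα hβb
  by_cases hαβ : β < α
  · exact ⟨0, by rw [Set.Icc_eq_empty (not_le.mpr hαβ)]; simp⟩
  rw [not_lt] at hαβ
  obtain ⟨α', h1, h2⟩ := exists_between haα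
  obtain ⟨β', h3, h4⟩ := exists_between hβb
  have hsub : Set.Icc α' β' ⊆ Set.Ioo a b := fun r hr =>
    ⟨lt_of_lt_of_le h1 hr.1, lt_of_le_of_lt hr.2 h4⟩
  have hψc : ContinuousOn ψ (Set.Icc α' β') := hψcont.mono hsub
  obtain ⟨B, hB⟩ := isCompact_Icc.exists_bound_of_continuousOn hψc
  simp only [Real.norm_eq_abs] at hB
  have hk : (1 : ℝ) ≤ (n : ℝ) - 1 := by
    have : (2 : ℝ) ≤ n := by exact_mod_cast hn
    linarith
  have hα'k : (n : ℝ) - 1 < α' := hab ⟨h1, by linarith⟩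
  have hα'0 : 0 < α' := by linarith
  set k : ℝ := (n : ℝ) - 1 with hkdef
  have hm : 0 < 1 - k / α' := by
    rw [sub_pos, div_lt_one hα'0]; exact hα'k
  have hB0 : 0 ≤ B := le_trans (abs_nonneg _) (hB α' ⟨le_rfl, by linarith⟩)
  obtain ⟨C, hC1, hC2, hC3⟩ : ∃ C : ℝ, 0 < C ∧ c < C * (1 - k / α') ∧
      (2 * B < C * (α - α') ∧ 2 * B < C * (β' - β)) := by
    have e1 : 0 ≤ |c| / (1 - k / α') := by positivity
    have e2 : 0 ≤ 2 * B / (α - α') := div_nonneg (by positivity) (by linarith)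
    have e3 : 0 ≤ 2 * B / (β' - β) := div_nonneg (by positivity) (by linarith)
    refine ⟨|c| / (1 - k / α') + 2 * B / (α - α') + 2 * B / (β' - β) + 1, by positivity, ?_, ?_, ?_⟩
    · refine lt_of_le_of_lt (le_abs_self c) ?_
      rw [← div_lt_iff₀ hm]; linarith
    · rw [← div_lt_iff₀ (by linarith)]; linarith
    · rw [← div_lt_iff₀ (by linarith)]; linarith
  -- no touching from below with slope of absolute value `C`
  have hno : ∀ p : ℝ, |p| = C → ∀ r ∈ Set.Ioo α' β',
      ¬ IsLocalMin (fun r => ψ r - p * r) r := by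
    intro p hp r hr hmin
    have hd : deriv (fun r : ℝ => p * r) r = p := by
      simpa using ((hasDerivAt_id r).const_mul p).deriv
    have := hψsuper (fun r => p * r) (by fun_prop) r
      (hsub ⟨hr.1.le, hr.2.le⟩) hmin
    rw [hd, hp] at this
    have hr0 : 0 < r := lt_trans hα'0 hr.1
    have hf := hfnonneg r hr0.le
    have hkr : k / r ≤ k / α' := by
      apply div_le_div_of_nonneg_left (by linarith) hα'0 hr.1.le
    have hkr0 : 0 ≤ k / r := div_nonneg (by linarith) hr0.le
    have hpC : -C ≤ p := by rw [← hp]; exact neg_abs_le p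
    have t1 : (k / r) * (-C) ≤ (k / r) * p := mul_le_mul_of_nonneg_left hpC hkr0
    have t2 : (k / r) * C ≤ (k / α') * C := mul_le_mul_of_nonneg_right hkr hC1.le
    simp only [ge_iff_le] at this
    nlinarith
  have key : ∀ x ∈ Set.Icc α β, ∀ y ∈ Set.Icc α' β', ψ x ≤ ψ y + C * |y - x| := by
    intro x hx
    have hx' : x ∈ Set.Icc α' β' := ⟨by linarith [hx.1], by linarith [hx.2]⟩
    obtain ⟨r, hr, hmin⟩ := isCompact_Icc.exists_isMinOn (s := Set.Icc α' β')
      (f := fun y => ψ y + C * |y - x|) ⟨x, hx'⟩ (hψc.add (by fun_prop))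
    have hmin' : ∀ y ∈ Set.Icc α' β', ψ r + C * |r - x| ≤ ψ y + C * |y - x| := fun y hy => hmin hy
    have hrx := hmin' x hx'
    simp only [sub_self, abs_zero, mul_zero, add_zero] at hrx
    have b1 := abs_le.mp (hB r hr)
    have b2 := abs_le.mp (hB x hx')
    have hrl : α' < r := by
      rcases hr.1.eq_or_lt with h | h
      · exfalso
        have : α - α' ≤ |r - x| := by rw [abs_sub_comm, ← h]; exact le_trans (by linarith [hx.1]) (le_abs_self _)
        have := mul_le_mul_of_nonneg_left this hC1.le
        linarith [hC3.1]
      · exact h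
    have hrr : r < β' := by
      rcases hr.2.eq_or_lt with h | h
      · exfalso
        have : β' - β ≤ |r - x| := by rw [h]; exact le_trans (by linarith [hx.2]) (le_abs_self _)
        have := mul_le_mul_of_nonneg_left this hC1.le
        linarith [hC3.2]
      · exact h
    rcases lt_trichotomy r x with h | h | h
    · exfalso
      refine hno C (abs_of_pos hC1) r ⟨hrl, hrr⟩ ?_
      filter_upwards [Ioo_mem_nhds hrl h] with y hy
      have := hmin' y ⟨hy.1.le, by linarith [hy.2, hx'.2]⟩
      rw [abs_of_neg (by linarith), abs_of_neg (by linarith [hy.2])] at this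
      linarith
    · subst h
      intro y hy
      simpa using hmin' y hy
    · exfalso
      refine hno (-C) (by rw [abs_neg, abs_of_pos hC1]) r ⟨hrl, hrr⟩ ?_
      filter_upwards [Ioo_mem_nhds h hrr] with y hy
      have := hmin' y ⟨by linarith [hy.1, hx'.1], hy.2.le⟩
      rw [abs_of_pos (by linarith), abs_of_pos (by linarith [hy.1])] at this
      linarith
  refine ⟨C.toNNReal, LipschitzOnWith.of_dist_le_mul fun x hx y hy => ?_⟩
  have hs : Set.Icc α β ⊆ Set.Icc α' β' := Set.Icc_subset_Icc h2.le h3.le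
  have k1 := key x hx y (hs hy)
  have k2 := key y hy x (hs hx)
  rw [abs_sub_comm] at k1
  rw [Real.dist_eq, Real.dist_eq, Real.coe_toNNReal C hC1.le]
  rw [abs_le]
  constructor <;> linarith
end

section
/- Let ψ₁, ψ₂ be continuous viscosity solutions of (E) on (0,∞). Let a, b ∈ Ã with a < b and (a,b) ∩ Ã = ∅, and assume ψ₁(a) = ψ₂(a) and ψ₁(b) = ψ₂(b). Then ψ₁ = ψ₂ on [a,b]. -/
open Set Filter Topology

theorem comparison_aux (k : ℝ) (hk : 0 < k) (g u v : ℝ → ℝ) (a b : ℝ) (hka : k ≤ a)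
    (hg : ContinuousOn g (Set.Icc a b)) (hgpos : ∀ x ∈ Set.Ioo a b, 0 < g x)
    (hu : ContinuousOn u (Set.Icc a b)) (hv : ContinuousOn v (Set.Icc a b))
    (hsub : ∀ φ : ℝ → ℝ, Differentiable ℝ φ → ∀ x ∈ Set.Ioo a b,
      IsLocalMax (fun r => v r - φ r) x → g x ≤ k / x * deriv φ x + |deriv φ x|)
    (hsup : ∀ φ : ℝ → ℝ, Differentiable ℝ φ → ∀ x ∈ Set.Ioo a b,
      IsLocalMin (fun r => u r - φ r) x → k / x * deriv φ x + |deriv φ x| ≤ g x)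
    (hA : v a = u a) (hB : v b = u b) :
    ∀ r ∈ Set.Icc a b, v r ≤ u r := by
  intro r₀ hr₀
  by_contra! hlt
  obtain ⟨θ, hθ0, hθ1, hθa, hθb⟩ : ∃ θ : ℝ, 0 < θ ∧ θ < 1 ∧
      v a - θ * u a < v r₀ - θ * u r₀ ∧ v b - θ * u b < v r₀ - θ * u r₀ := by
    set δ := v r₀ - u r₀ with hδ
    have hδ0 : 0 < δ := by linarith
    set D := |u a - u r₀| + |u b - u r₀| + 2 * δ with hD
    have h1 := abs_nonneg (u a - u r₀)
    have h2 := abs_nonneg (u b - u r₀)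
    have h3 := le_abs_self (u a - u r₀)
    have h4 := le_abs_self (u b - u r₀)
    have hD0 : 0 < D := by linarith
    have hη : δ / D * D = δ := div_mul_cancel₀ _ hD0.ne'
    have hη0 : 0 < δ / D := by positivity
    have hη1 : δ / D < 1 := by rw [div_lt_one hD0]; linarith
    refine ⟨1 - δ / D, by linarith, by linarith, ?_, ?_⟩
    · have : δ / D * (u a - u r₀) < δ / D * D := by
        apply mul_lt_mul_of_pos_left _ hη0; linarith
      rw [hA]; nlinarith
    · have : δ / D * (u b - u r₀) < δ / D * D := by
        apply mul_lt_mul_of_pos_left _ hη0; linarith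
      rw [hB]; nlinarith
  have hcomp : IsCompact (Set.Icc a b ×ˢ Set.Icc a b) := isCompact_Icc.prod isCompact_Icc
  have hex : ∀ N : ℕ, ∃ z ∈ Set.Icc a b ×ˢ Set.Icc a b, ∀ w ∈ Set.Icc a b ×ˢ Set.Icc a b,
      v w.1 - θ * u w.2 - (N + 1 : ℝ) / 2 * (w.1 - w.2) ^ 2
        ≤ v z.1 - θ * u z.2 - (N + 1 : ℝ) / 2 * (z.1 - z.2) ^ 2 := by
    intro N
    have hc : ContinuousOn (fun w : ℝ × ℝ => v w.1 - θ * u w.2 - (N + 1 : ℝ) / 2 * (w.1 - w.2) ^ 2)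
        (Set.Icc a b ×ˢ Set.Icc a b) := by
      have h1 : ContinuousOn (fun w : ℝ × ℝ => v w.1) (Set.Icc a b ×ˢ Set.Icc a b) :=
        hv.comp continuousOn_fst (fun w hw => hw.1)
      have h2 : ContinuousOn (fun w : ℝ × ℝ => u w.2) (Set.Icc a b ×ˢ Set.Icc a b) :=
        hu.comp continuousOn_snd (fun w hw => hw.2)
      exact (h1.sub (h2.const_mul θ)).sub (by fun_prop)
    obtain ⟨z, hz, hmax⟩ := hcomp.exists_isMaxOn ⟨(r₀, r₀), hr₀, hr₀⟩ hc
    exact ⟨z, hz, fun w hw => hmax hw⟩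
  choose z hz hmax using hex
  obtain ⟨zs, hzs, s, hs, hlim⟩ := hcomp.tendsto_subseq hz
  obtain ⟨xs, ys⟩ := zs
  have hxs : xs ∈ Set.Icc a b := hzs.1
  have hys : ys ∈ Set.Icc a b := hzs.2
  have hx : Tendsto (fun m => (z (s m)).1) atTop (𝓝 xs) := (continuous_fst.tendsto _).comp hlim
  have hy : Tendsto (fun m => (z (s m)).2) atTop (𝓝 ys) := (continuous_snd.tendsto _).comp hlim
  have hxI : ∀ m, (z (s m)).1 ∈ Set.Icc a b := fun m => (hz (s m)).1
  have hyI : ∀ m, (z (s m)).2 ∈ Set.Icc a b := fun m => (hz (s m)).2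
  have hxw : Tendsto (fun m => (z (s m)).1) atTop (𝓝[Set.Icc a b] xs) :=
    tendsto_nhdsWithin_iff.2 ⟨hx, Eventually.of_forall hxI⟩
  have hyw : Tendsto (fun m => (z (s m)).2) atTop (𝓝[Set.Icc a b] ys) :=
    tendsto_nhdsWithin_iff.2 ⟨hy, Eventually.of_forall hyI⟩
  have hvx : Tendsto (fun m => v (z (s m)).1) atTop (𝓝 (v xs)) := (hv xs hxs).tendsto.comp hxw
  have huy : Tendsto (fun m => u (z (s m)).2) atTop (𝓝 (u ys)) := (hu ys hys).tendsto.comp hyw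
  have hgx : Tendsto (fun m => g (z (s m)).1) atTop (𝓝 (g xs)) := (hg xs hxs).tendsto.comp hxw
  have hgy : Tendsto (fun m => g (z (s m)).2) atTop (𝓝 (g ys)) := (hg ys hys).tendsto.comp hyw
  have hinv : Tendsto (fun m => 2 * (1 / ((s m : ℝ) + 1))) atTop (𝓝 (2 * 0)) :=
    (tendsto_one_div_add_atTop_nhds_zero_nat.comp hs.tendsto_atTop).const_mul 2
  have hxy : xs = ys := by
    have h1 : Tendsto (fun m => ((z (s m)).1 - (z (s m)).2) ^ 2) atTop (𝓝 ((xs - ys) ^ 2)) :=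
      (hx.sub hy).pow 2
    have h2 := hinv.mul ((hvx.sub (huy.const_mul θ)).sub_const (v r₀ - θ * u r₀))
    have h3 := le_of_tendsto_of_tendsto' h1 h2 (fun m => by
      have := hmax (s m) (r₀, r₀) ⟨hr₀, hr₀⟩
      simp only [sub_self] at this
      have hp : (0 : ℝ) < (s m : ℝ) + 1 := by positivity
      rw [mul_one_div, div_mul_eq_mul_div, le_div_iff₀ hp]
      nlinarith)
    have : (xs - ys) ^ 2 = 0 := le_antisymm (by simpa using h3) (sq_nonneg _)
    have := pow_eq_zero_iff (two_ne_zero) |>.1 this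
    linarith
  subst hxy
  have hM : v r₀ - θ * u r₀ ≤ v xs - θ * u xs := by
    refine ge_of_tendsto' (hvx.sub (huy.const_mul θ)) (fun m => ?_)
    have := hmax (s m) (r₀, r₀) ⟨hr₀, hr₀⟩
    simp only [sub_self] at this
    have hp : (0 : ℝ) ≤ ((s m : ℝ) + 1) / 2 * ((z (s m)).1 - (z (s m)).2) ^ 2 := by positivity
    nlinarith
  have hxsa : xs ≠ a := by rintro rfl; linarith
  have hxsb : xs ≠ b := by rintro rfl; linarith
  have hxsI : xs ∈ Set.Ioo a b := ⟨lt_of_le_of_ne hxs.1 hxsa.symm, lt_of_le_of_ne hxs.2 hxsb⟩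
  have hxs0 : 0 < xs := by linarith [hxsI.1]
  have hnb := isOpen_Ioo.mem_nhds hxsI
  have hev : ∀ᶠ m in atTop,
      (g (z (s m)).1 - θ * g (z (s m)).2) * (1 - k / (z (s m)).2) ≤
        k * |1 / (z (s m)).1 - 1 / (z (s m)).2| * (θ * g (z (s m)).2) := by
    filter_upwards [hx.eventually hnb, hy.eventually hnb] with m hxm hym
    have hmm := hmax (s m)
    set x := (z (s m)).1
    set y := (z (s m)).2
    set N : ℝ := (s m : ℝ) + 1
    have hx0 : 0 < x := by linarith [hxm.1]
    have hy0 : 0 < y := by linarith [hym.1]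
    have e1 : g x ≤ k / x * (N * (x - y)) + |N * (x - y)| := by
      have hd : ∀ t, HasDerivAt (fun t : ℝ => N / 2 * (t - y) ^ 2) (N * (t - y)) t := by
        intro t
        have := (((hasDerivAt_id t).sub_const y).pow 2).const_mul (N / 2)
        exact this.congr_deriv (by norm_num [id]; ring)
      have := hsub (fun t => N / 2 * (t - y) ^ 2) (fun t => (hd t).differentiableAt) x hxm (by
        filter_upwards [isOpen_Ioo.mem_nhds hxm] with t ht
        have := hmm (t, y) ⟨Ioo_subset_Icc_self ht, Ioo_subset_Icc_self hym⟩
        linarith)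
      rwa [(hd x).deriv] at this
    have e2 : k / y * (N * (x - y)) + |N * (x - y)| ≤ θ * g y := by
      have hd : ∀ t, HasDerivAt (fun t : ℝ => - (N / (2 * θ)) * (x - t) ^ 2)
          (N * (x - t) / θ) t := by
        intro t
        have := (((hasDerivAt_id t).const_sub x).pow 2).const_mul (-(N / (2 * θ)))
        exact this.congr_deriv (by norm_num [id]; field_simp)
      have := hsup (fun t => - (N / (2 * θ)) * (x - t) ^ 2) (fun t => (hd t).differentiableAt) y hym
        (by
        filter_upwards [isOpen_Ioo.mem_nhds hym] with t ht
        have := hmm (x, t) ⟨Ioo_subset_Icc_self hxm, Ioo_subset_Icc_self ht⟩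
        refine le_of_mul_le_mul_left ?_ hθ0
        have e : ∀ q U : ℝ, θ * (U - -(N / (2 * θ)) * q) = θ * U + N / 2 * q := by
          intro q U; field_simp; ring
        rw [e, e]
        linarith)
      rw [(hd y).deriv, abs_div, abs_of_pos hθ0] at this
      have h5 := mul_le_mul_of_nonneg_left this hθ0.le
      have e : θ * (k / y * (N * (x - y) / θ) + |N * (x - y)| / θ)
        = k / y * (N * (x - y)) + |N * (x - y)| := by field_simp
      linarith
    set p := N * (x - y)
    have hky : 0 < 1 - k / y := by
      have : k / y < 1 := by rw [div_lt_one hy0]; linarith [hym.1]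
      linarith
    have hkey : |p| * (1 - k / y) ≤ θ * g y := by
      have : 0 ≤ k / y := by positivity
      nlinarith [neg_abs_le p]
    have h6 : g x - θ * g y ≤ k * |1 / x - 1 / y| * |p| := by
      have h7 : k / x * p - k / y * p = k * ((1 / x - 1 / y) * p) := by ring
      have h8 : (1 / x - 1 / y) * p ≤ |1 / x - 1 / y| * |p| := by
        rw [← abs_mul]; exact le_abs_self _
      have := mul_le_mul_of_nonneg_left h8 hk.le
      linarith
    calc _ ≤ k * |1 / x - 1 / y| * |p| * (1 - k / y) := mul_le_mul_of_nonneg_right h6 hky.le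
      _ = k * |1 / x - 1 / y| * (|p| * (1 - k / y)) := by ring
      _ ≤ _ := mul_le_mul_of_nonneg_left hkey (by positivity)
  have hix : Tendsto (fun m => 1 / (z (s m)).1) atTop (𝓝 (1 / xs)) :=
    tendsto_const_nhds.div hx hxs0.ne'
  have hiy : Tendsto (fun m => 1 / (z (s m)).2) atTop (𝓝 (1 / xs)) :=
    tendsto_const_nhds.div hy hxs0.ne'
  have hky : Tendsto (fun m => k / (z (s m)).2) atTop (𝓝 (k / xs)) :=
    tendsto_const_nhds.div hy hxs0.ne'
  have hfin := le_of_tendsto_of_tendsto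
    ((hgx.sub (hgy.const_mul θ)).mul (hky.const_sub 1))
    (((hix.sub hiy).abs.const_mul k).mul (hgy.const_mul θ)) hev
  simp only [sub_self, abs_zero, mul_zero, zero_mul] at hfin
  have hgp := hgpos xs hxsI
  have h1 : 0 < 1 - k / xs := by
    have : k / xs < 1 := by rw [div_lt_one hxs0]; linarith [hxsI.1]
    linarith
  have h2 : 0 < g xs - θ * g xs := by nlinarith
  exact absurd hfin (not_le.2 (mul_pos h2 h1))

/-- If two continuous viscosity solutions of (E) on `(0,∞)` agree at
two consecutive points `a < b` of the uniqueness set `Ã = {r ≥ n-1 : f̃(r) = c}`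
(i.e. `(a,b) ∩ Ã = ∅`), then they agree on all of `[a,b]`. -/
theorem stmt_6 (n : ℕ) (hn : 2 ≤ n) (ftilde : ℝ → ℝ)
    (hfC1 : ContDiffOn ℝ 1 ftilde (Set.Ici 0))
    (hfnonneg : ∀ r ∈ Set.Ici (0 : ℝ), 0 ≤ ftilde r)
    (hfsupp : ∃ R : ℝ, 0 < R ∧ ∀ r ≥ R, ftilde r = 0)
    (c : ℝ) (hc : IsGreatest (ftilde '' Set.Ici ((n : ℝ) - 1)) c)
    (ψ₁ ψ₂ : ℝ → ℝ)
    (hψ₁cont : ContinuousOn ψ₁ (Set.Ici 0)) (hψ₂cont : ContinuousOn ψ₂ (Set.Ici 0))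
    (hψ₁ : ViscSolE n (fun r => ftilde r - c) (Set.Ioi 0) ψ₁)
    (hψ₂ : ViscSolE n (fun r => ftilde r - c) (Set.Ioi 0) ψ₂)
    (a b : ℝ) (hab : a < b)
    (ha : a ∈ {r : ℝ | (n : ℝ) - 1 ≤ r ∧ ftilde r = c})
    (hb : b ∈ {r : ℝ | (n : ℝ) - 1 ≤ r ∧ ftilde r = c})
    (hgap : Set.Ioo a b ∩ {r : ℝ | (n : ℝ) - 1 ≤ r ∧ ftilde r = c} = ∅)
    (heqa : ψ₁ a = ψ₂ a) (heqb : ψ₁ b = ψ₂ b) :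
    ∀ r ∈ Set.Icc a b, ψ₁ r = ψ₂ r := by
  have hn' : (2 : ℝ) ≤ n := by exact_mod_cast hn
  have hk : (0 : ℝ) < (n : ℝ) - 1 := by linarith
  have ha0 : 0 < a := lt_of_lt_of_le hk ha.1
  have hsubset : Set.Icc a b ⊆ Set.Ici 0 := fun x hx => ha0.le.trans hx.1
  have hg : ContinuousOn (fun r => c - ftilde r) (Set.Icc a b) :=
    continuousOn_const.sub (hfC1.continuousOn.mono hsubset)
  have hgpos : ∀ x ∈ Set.Ioo a b, 0 < c - ftilde x := by
    intro x hx
    have hx1 : (n : ℝ) - 1 ≤ x := ha.1.trans hx.1.le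
    have h1 : ftilde x ≤ c := hc.2 ⟨x, hx1, rfl⟩
    have h2 : ftilde x ≠ c := fun h => by
      have : x ∈ Set.Ioo a b ∩ {r : ℝ | (n : ℝ) - 1 ≤ r ∧ ftilde r = c} := ⟨hx, hx1, h⟩
      rw [hgap] at this
      exact this
    have := lt_of_le_of_ne h1 h2
    linarith
  have key : ∀ u v : ℝ → ℝ, ContinuousOn u (Set.Ici 0) → ContinuousOn v (Set.Ici 0) →
      ViscSolE n (fun r => ftilde r - c) (Set.Ioi 0) u →
      ViscSolE n (fun r => ftilde r - c) (Set.Ioi 0) v → v a = u a → v b = u b →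
      ∀ r ∈ Set.Icc a b, v r ≤ u r := by
    intro u v hu hv hus hvs h1 h2
    refine comparison_aux ((n : ℝ) - 1) hk (fun r => c - ftilde r) u v a b ha.1 hg hgpos
      (hu.mono hsubset) (hv.mono hsubset) ?_ ?_ h1 h2
    · intro φ hφ x hx hm
      have := hvs.1 φ hφ.differentiableOn x (ha0.trans hx.1) hm
      simp only at this ⊢
      linarith
    · intro φ hφ x hx hm
      have := hus.2 φ hφ.differentiableOn x (ha0.trans hx.1) hm
      simp only at this ⊢
      linarith
  intro r hr
  exact le_antisymm (key ψ₂ ψ₁ hψ₂cont hψ₁cont hψ₂ hψ₁ heqa heqb r hr)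
    (key ψ₁ ψ₂ hψ₁cont hψ₂cont hψ₁ hψ₂ heqa.symm heqb.symm r hr)
end

section
/- Assume c > 0, and set r₀ := min{r ≥ n-1 : h(r) = 0} and M := max{r ≥ n-1 : h(r) = 0} (both exist and are finite). Let ψ₁, ψ₂ : [0,∞) → ℝ be continuous viscosity solutions of (E) on (0,∞) which are bounded from above, and assume ψ₁(r₀) = ψ₂(r₀) and ψ₁(M) = ψ₂(M). Then ψ₁ = ψ₂ on [n-1, r₀] ∪ [M, ∞). -/
open Set Filter Topology

lemma aux_antideriv (k : ℝ → ℝ) (hk : Continuous k) : ∃ G : ℝ → ℝ, ∀ r, HasDerivAt G (k r) r :=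
  ⟨fun r => ∫ s in (0:ℝ)..r, k s, fun r => (hk.integral_hasStrictDerivAt 0 r).hasDerivAt⟩

lemma aux_intMin {F : ℝ → ℝ} {x y m : ℝ} (hF : ContinuousOn F (Icc x y)) (hm : m ∈ Icc x y)
    (h1 : F m < F x) (h2 : F m < F y) : ∃ z ∈ Ioo x y, IsLocalMin F z := by
  obtain ⟨z, hz, hmin⟩ := isCompact_Icc.exists_isMinOn ⟨m, hm⟩ hF
  have hzm : F z ≤ F m := hmin hm
  have hzx : z ≠ x := by rintro rfl; linarith
  have hzy : z ≠ y := by rintro rfl; linarith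
  have hz' : z ∈ Ioo x y := ⟨lt_of_le_of_ne hz.1 hzx.symm, lt_of_le_of_ne hz.2 hzy⟩
  exact ⟨z, hz', hmin.isLocalMin (Icc_mem_nhds hz'.1 hz'.2)⟩

lemma aux_intMax {F : ℝ → ℝ} {x y m : ℝ} (hF : ContinuousOn F (Icc x y)) (hm : m ∈ Icc x y)
    (h1 : F x < F m) (h2 : F y < F m) : ∃ z ∈ Ioo x y, IsLocalMax F z := by
  obtain ⟨z, hz, h⟩ := aux_intMin (F := fun r => - F r) hF.neg hm (by simpa) (by simpa)
  refine ⟨z, hz, ?_⟩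
  filter_upwards [h] with r hr
  linarith

lemma aux_testMin {w : ℝ → ℝ} {x y : ℝ} (hxy : x < y) (hw : ContinuousOn w (Icc x y))
    (hlt : w x < w y) : ∃ φ φ' : ℝ → ℝ, (∀ r, HasDerivAt φ (φ' r) r) ∧
      ∃ z ∈ Ioo x y, 0 < φ' z ∧ IsLocalMin (fun r => w r - φ r) z := by
  obtain ⟨m, hm, hwm⟩ : ∃ m ∈ Ioo x y, w m < w x + (w y - w x) / 8 := by
    have h1 : ContinuousWithinAt w (Ioo x y) x :=
      (hw x ⟨le_rfl, hxy.le⟩).mono Ioo_subset_Icc_self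
    have h2 : ∀ᶠ r in 𝓝[Ioo x y] x, w r < w x + (w y - w x) / 8 :=
      h1.eventually (gt_mem_nhds (by linarith))
    have : (𝓝[Ioo x y] x).NeBot := by
      rw [nhdsWithin_Ioo_eq_nhdsGT hxy]; infer_instance
    obtain ⟨m, h⟩ := (h2.and self_mem_nhdsWithin).exists
    exact ⟨m, h.2, h.1⟩
  have hmx : 0 < m - x := sub_pos.2 hm.1
  set L := 3 / (m - x) with hL
  have hLpos : 0 < L := by positivity
  have hLm : L * (m - x) = 3 := by rw [hL]; field_simp
  set K := (w y - w x) / 2 with hK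
  have hKpos : 0 < K := by rw [hK]; linarith
  have hd : ∀ r, HasDerivAt (fun r => -K * Real.exp (-(L * (r - x))))
      (K * L * Real.exp (-(L * (r - x)))) r := by
    intro r
    have h1 : HasDerivAt (fun r => -(L * (r - x))) (-(L * 1)) r :=
      (((hasDerivAt_id r).sub_const x).const_mul L).neg
    have h2 := (h1.exp).const_mul (-K)
    have h3 : K * L * Real.exp (-(L * (r - x))) = -K * (Real.exp (-(L * (r - x))) * -(L * 1)) := by
      ring
    rw [h3]; exact h2
  refine ⟨_, _, hd, ?_⟩
  have he : Real.exp (-(L * (m - x))) ≤ 1 / 4 := by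
    rw [hLm, Real.exp_neg]
    have h3 := Real.add_one_le_exp (3 : ℝ)
    rw [inv_eq_one_div]
    exact one_div_le_one_div_of_le (by norm_num) (by linarith)
  have hKe : K * Real.exp (-(L * (m - x))) ≤ K * (1 / 4) := by gcongr
  have hKy : 0 < K * Real.exp (-(L * (y - x))) := by positivity
  obtain ⟨z, hz, hmin⟩ := aux_intMin (F := fun r => w r - -K * Real.exp (-(L * (r - x))))
    (x := x) (y := y) (m := m)
    (hw.sub (fun r _ => (hd r).continuousAt.continuousWithinAt)) ⟨hm.1.le, hm.2.le⟩
    (by simp only [sub_self, mul_zero, neg_zero, Real.exp_zero]; linarith)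
    (by linarith)
  exact ⟨z, hz, by positivity, hmin⟩

lemma aux_reflect {F : ℝ → ℝ} {z : ℝ} (h : IsLocalMin F z) : IsLocalMin (fun r => F (-r)) (-z) := by
  have ht : Tendsto (fun r : ℝ => -r) (𝓝 (-z)) (𝓝 z) := by
    simpa using (continuous_neg.tendsto (-z))
  have := ht.eventually h
  filter_upwards [this] with r hr
  simpa using hr

lemma aux_testMin' {w : ℝ → ℝ} {x y : ℝ} (hxy : x < y) (hw : ContinuousOn w (Icc x y))
    (hlt : w y < w x) : ∃ φ φ' : ℝ → ℝ, (∀ r, HasDerivAt φ (φ' r) r) ∧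
      ∃ z ∈ Ioo x y, φ' z < 0 ∧ IsLocalMin (fun r => w r - φ r) z := by
  have hc : ContinuousOn (fun r => w (-r)) (Icc (-y) (-x)) :=
    hw.comp continuous_neg.continuousOn
      (fun r hr => ⟨by linarith [hr.2], by linarith [hr.1]⟩)
  obtain ⟨φ, φ', hd, z, hz, hp, hmin⟩ := aux_testMin (w := fun r => w (-r)) (neg_lt_neg hxy) hc
    (by simpa using hlt)
  refine ⟨fun r => φ (-r), fun r => - φ' (-r), fun r => ?_, -z,
    ⟨by linarith [hz.2], by linarith [hz.1]⟩, by simpa using hp, ?_⟩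
  · have := (hd (-r)).comp r (hasDerivAt_neg r)
    simpa [Function.comp_def] using this
  · simpa using aux_reflect hmin

lemma aux_testMax {w : ℝ → ℝ} {x y : ℝ} (hxy : x < y) (hw : ContinuousOn w (Icc x y))
    (hlt : w x < w y) : ∃ φ φ' : ℝ → ℝ, (∀ r, HasDerivAt φ (φ' r) r) ∧
      ∃ z ∈ Ioo x y, 0 < φ' z ∧ IsLocalMax (fun r => w r - φ r) z := by
  obtain ⟨φ, φ', hd, z, hz, hp, hmin⟩ := aux_testMin' (w := fun r => - w r) hxy hw.neg
    (by simpa using hlt)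
  refine ⟨fun r => - φ r, fun r => - φ' r, fun r => (hd r).neg, z, hz, by simpa using hp, ?_⟩
  filter_upwards [hmin] with r hr
  try simp only at hr ⊢
  linarith

def auxSub (a : ℝ) (g ψ : ℝ → ℝ) : Prop := ∀ φ φ' : ℝ → ℝ, (∀ r, HasDerivAt φ (φ' r) r) →
  ∀ z > 0, IsLocalMax (fun r => ψ r - φ r) z → g z * z ≤ a * φ' z + z * |φ' z|

def auxSup (a : ℝ) (g ψ : ℝ → ℝ) : Prop := ∀ φ φ' : ℝ → ℝ, (∀ r, HasDerivAt φ (φ' r) r) →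
  ∀ z > 0, IsLocalMin (fun r => ψ r - φ r) z → a * φ' z + z * |φ' z| ≤ g z * z

lemma aux_claimA {a r₀ : ℝ} (ha : 0 < a) {g ψ G k : ℝ → ℝ} (hgc : ContinuousOn g (Ici 0))
    (hg : ∀ r, a ≤ r → r < r₀ → 0 < g r) (hψ : ContinuousOn ψ (Ici 0))
    (hsub : auxSub a g ψ) (hsup : auxSup a g ψ)
    (hG : ∀ r, HasDerivAt G (k r) r) (hk : ∀ r, a ≤ r → k r * (r + a) = g r * r)
    {x y : ℝ} (hax : a < x) (hxy : x < y) (hy : y < r₀) : ψ x - G x = ψ y - G y := by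
  have hkpos : ∀ r, a ≤ r → r < r₀ → 0 < k r := by
    intro r h1 h2
    have h3 := hk r h1
    have h4 : 0 < g r * r := mul_pos (hg r h1 h2) (by linarith)
    rw [← h3] at h4
    exact pos_of_mul_pos_left h4 (by linarith)
  have hwc : ContinuousOn (fun r => ψ r - G r) (Ici 0) :=
    hψ.sub (fun r _ => (hG r).continuousAt.continuousWithinAt)
  apply le_antisymm
  · by_contra hcon
    push Not at hcon
    -- positive lower bound for g on [a,y]
    obtain ⟨r1, hr1, hmin⟩ := isCompact_Icc.exists_isMinOn (s := Icc a y) ⟨x, hax.le, hxy.le⟩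
      (hgc.mono (fun r hr => le_trans ha.le hr.1))
    set g0 := g r1 with hg0
    have hg0pos : 0 < g0 := hg r1 hr1.1 (lt_of_le_of_lt hr1.2 hy)
    set D := (ψ x - G x) - (ψ y - G y) with hD
    have hDpos : 0 < D := by rw [hD]; linarith
    set T := Real.log ((y - a) ^ 2 + 1) - Real.log ((x - a) ^ 2) with hT
    have hxa : 0 < (x - a) ^ 2 := by have := sub_pos.2 hax; positivity
    have hTpos : 0 < T := by
      have : Real.log ((x - a) ^ 2) < Real.log ((y - a) ^ 2 + 1) := by
        apply Real.log_lt_log hxa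
        nlinarith
      linarith
    obtain ⟨κ, hκ, hκ1, hκ2⟩ : ∃ κ : ℝ, 0 < κ ∧ κ * T < D ∧ 2 * κ < g0 * a := by
      refine ⟨min (D / (2 * T)) (g0 * a / 4), by positivity, ?_, ?_⟩
      · calc _ ≤ D / (2 * T) * T := by gcongr; exact min_le_left _ _
          _ = D / 2 := by field_simp
          _ < D := by linarith
      · have := min_le_right (D / (2 * T)) (g0 * a / 4)
        have h2 : 0 < g0 * a := by positivity
        linarith
    -- choose ε = η²
    set C := ((ψ x - G x) - (ψ a - G a) + κ * Real.log ((x - a) ^ 2)) / κ with hC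
    obtain ⟨ε, hε, hε1, hεC⟩ : ∃ ε : ℝ, 0 < ε ∧ ε ≤ 1 ∧ Real.log ε < C := by
      refine ⟨Real.exp (min 0 (C - 1)), Real.exp_pos _, ?_, ?_⟩
      · exact Real.exp_le_one_iff.2 (min_le_left _ _)
      · rw [Real.log_exp]
        have := min_le_right 0 (C - 1)
        linarith
    have hκC : κ * Real.log ε < (ψ x - G x) - (ψ a - G a) + κ * Real.log ((x - a) ^ 2) := by
      have : κ * Real.log ε < κ * C := by gcongr
      rw [hC, mul_div_cancel₀ _ hκ.ne'] at this
      exact this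
    have hq : ∀ r : ℝ, 0 < (r - a) ^ 2 + ε := fun r => by positivity
    have hd : ∀ r, HasDerivAt (fun r => G r - κ * Real.log ((r - a) ^ 2 + ε))
        (k r - κ * (2 * (r - a) / ((r - a) ^ 2 + ε))) r := by
      intro r
      have h1 : HasDerivAt (fun r => (r - a) ^ 2 + ε) (2 * (r - a)) r := by
        have := (((hasDerivAt_id r).sub_const a).pow 2).add_const ε
        simpa using this
      exact (hG r).sub ((h1.log (hq r).ne').const_mul κ)
    have hlx : Real.log ((x - a) ^ 2) ≤ Real.log ((x - a) ^ 2 + ε) :=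
      Real.log_le_log hxa (by linarith)
    have hly : Real.log ((y - a) ^ 2 + ε) ≤ Real.log ((y - a) ^ 2 + 1) :=
      Real.log_le_log (hq y) (by linarith)
    have hlx' := mul_le_mul_of_nonneg_left hlx hκ.le
    have hly' := mul_le_mul_of_nonneg_left hly hκ.le
    rw [hT, mul_sub] at hκ1
    obtain ⟨z, hz, hmax⟩ := aux_intMax
      (F := fun r => ψ r - (G r - κ * Real.log ((r - a) ^ 2 + ε))) (x := a) (y := y) (m := x)
      ((hψ.mono (fun r hr => le_trans ha.le hr.1)).sub
        (fun r _ => (hd r).continuousAt.continuousWithinAt)) ⟨hax.le, hxy.le⟩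
      (by simp only [sub_self, ne_eq, OfNat.ofNat_ne_zero, not_false_eq_true, zero_pow, zero_add]
          linarith)
      (by linarith)
    have hz0 : 0 < z := ha.trans hz.1
    have hv := hsub _ _ hd z hz0 hmax
    try simp only at hv
    have hza : 0 < z - a := sub_pos.2 hz.1
    set t := 2 * (z - a) / ((z - a) ^ 2 + ε) with ht
    have htpos : 0 < t := by have := hq z; positivity
    have ht2 : (z - a) * t ≤ 2 := by
      rw [ht, ← mul_div_assoc, div_le_iff₀ (hq z)]
      nlinarith
    have hkz := hkpos z hz.1.le (hz.2.trans hy)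
    have hkk := hk z hz.1.le
    have hgz : g0 ≤ g z := hmin ⟨hz.1.le, hz.2.le⟩
    have hκt : 0 < κ * t := by positivity
    rcases le_total 0 (k z - κ * t) with h | h
    · rw [abs_of_nonneg h] at hv
      nlinarith
    · rw [abs_of_nonpos h] at hv
      have h5 : g z * z ≤ (z - a) * (κ * t - k z) := by linarith
      have h6 : (z - a) * (κ * t - k z) ≤ κ * ((z - a) * t) := by nlinarith
      have h7 : κ * ((z - a) * t) ≤ κ * 2 := by gcongr
      have h8 : g0 * a ≤ g z * z := by
        apply mul_le_mul hgz hz.1.le ha.le; linarith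
      linarith
  · by_contra hcon
    push Not at hcon
    obtain ⟨φ, φ', hd, z, hz, hp, hmin⟩ := aux_testMin hxy
      (hwc.mono (fun r hr => by simp only [mem_Ici]; linarith [hr.1])) hcon
    have haz : a < z := hax.trans hz.1
    have hv := hsup (fun r => G r + φ r) _ (fun r => (hG r).add (hd r)) z (ha.trans haz) (by
      filter_upwards [hmin] with r hr
      try simp only at hr ⊢
      linarith)
    try simp only at hv
    have hkz := hkpos z haz.le (hz.2.trans hy)
    rw [abs_of_pos (by linarith), ← hk z haz.le] at hv
    nlinarith

lemma aux_claimB {a x R c : ℝ} (ha : 0 < a) (hx : a < x) {g ψ B k : ℝ → ℝ}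
    (hgc : ContinuousOn g (Ici 0)) (hc : 0 < c) (hR : ∀ r ≥ R, g r = c)
    (hg : ∀ r, x ≤ r → 0 < g r) (hψ : ContinuousOn ψ (Ici 0))
    (hbd : BddAbove (ψ '' Ici 0))
    (hsub : auxSub a g ψ) (hsup : auxSup a g ψ)
    (hB : ∀ r, HasDerivAt B (k r) r) (hk : ∀ r, x ≤ r → k r * (r - a) = g r * r)
    {y : ℝ} (hxy : x < y) : ψ x + B x = ψ y + B y := by
  have hkpos : ∀ r, x ≤ r → 0 < k r := by
    intro r h1
    have h3 := hk r h1
    have h4 : 0 < g r * r := mul_pos (hg r h1) (by linarith)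
    rw [← h3] at h4
    exact pos_of_mul_pos_left h4 (by linarith)
  have hvc : ContinuousOn (fun r => ψ r + B r) (Ici 0) :=
    hψ.add (fun r _ => (hB r).continuousAt.continuousWithinAt)
  obtain ⟨g0, hg0, hg0le⟩ : ∃ g0 > 0, ∀ r, x ≤ r → g0 ≤ g r := by
    obtain ⟨r1, hr1, hmin⟩ := isCompact_Icc.exists_isMinOn (s := Icc x (max x R))
      ⟨x, le_rfl, le_max_left _ _⟩
      (hgc.mono (fun r hr => by simp only [mem_Ici]; linarith [hr.1]))
    refine ⟨min (g r1) c, lt_min (hg r1 hr1.1) hc, fun r hr => ?_⟩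
    rcases le_total r (max x R) with h | h
    · exact (min_le_left _ _).trans (hmin ⟨hr, h⟩)
    · rw [hR r ((le_max_right _ _).trans h)]; exact min_le_right _ _
  -- ψ is nonincreasing
  have hanti : ∀ s t, x ≤ s → s < t → ψ t ≤ ψ s := by
    intro s t hs hst
    by_contra hcon
    push Not at hcon
    obtain ⟨κ, hκ, hκ1, hκ2⟩ : ∃ κ : ℝ, 0 < κ ∧ κ * (t - s) < ψ t - ψ s ∧ 2 * κ < g0 := by
      have h1 : 0 < t - s := by linarith
      have h2 : 0 < ψ t - ψ s := by linarith
      refine ⟨min ((ψ t - ψ s) / (2 * (t - s))) (g0 / 4), by positivity, ?_, ?_⟩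
      · calc _ ≤ (ψ t - ψ s) / (2 * (t - s)) * (t - s) := by gcongr; exact min_le_left _ _
          _ = (ψ t - ψ s) / 2 := by field_simp
          _ < _ := by linarith
      · have := min_le_right ((ψ t - ψ s) / (2 * (t - s))) (g0 / 4)
        linarith
    obtain ⟨C, hC⟩ := hbd
    have hCt : ψ t ≤ C := hC ⟨t, by simp only [mem_Ici]; linarith, rfl⟩
    set Y := t + (C - ψ t + 1) / κ with hY
    have hYt : t < Y := by
      have : 0 < (C - ψ t + 1) / κ := by apply div_pos _ hκ; linarith
      linarith
    have hYe : κ * (Y - t) = C - ψ t + 1 := by rw [hY]; field_simp; ring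
    have hCY : ψ Y ≤ C := hC ⟨Y, by simp only [mem_Ici]; linarith, rfl⟩
    have hd : ∀ r, HasDerivAt (fun r => κ * r) κ r := fun r => by
      simpa using (hasDerivAt_id r).const_mul κ
    obtain ⟨z, hz, hmax⟩ := aux_intMax (F := fun r => ψ r - κ * r) (x := s) (y := Y) (m := t)
      ((hψ.mono (fun r hr => by simp only [mem_Ici]; linarith [hr.1])).sub
        (fun r _ => (hd r).continuousAt.continuousWithinAt)) ⟨hst.le, hYt.le⟩
      (by linarith) (by linarith)
    have haz : a < z := by linarith [hz.1]
    have hv := hsub _ _ hd z (ha.trans haz) hmax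
    try simp only at hv
    rw [abs_of_pos hκ] at hv
    have := hg0le z (by linarith [hz.1])
    nlinarith
  apply le_antisymm
  · by_contra hcon
    push Not at hcon
    obtain ⟨φ, φ', hd, z, hz, hp, hmin⟩ := aux_testMin' hxy
      (hvc.mono (fun r hr => by simp only [mem_Ici]; linarith [hr.1])) hcon
    have haz : a < z := hx.trans hz.1
    have hv := hsup (fun r => φ r - B r) _ (fun r => (hd r).sub (hB r)) z (ha.trans haz) (by
      filter_upwards [hmin] with r hr
      try simp only at hr ⊢
      linarith)
    try simp only at hv
    have hkz := hkpos z hz.1.le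
    rw [abs_of_neg (by linarith), ← hk z hz.1.le] at hv
    nlinarith
  · by_contra hcon
    push Not at hcon
    obtain ⟨φ, φ', hd, z, hz, hp, hmax⟩ := aux_testMax hxy
      (hvc.mono (fun r hr => by simp only [mem_Ici]; linarith [hr.1])) hcon
    have haz : a < z := hx.trans hz.1
    have hd2 : ∀ r, HasDerivAt (fun r => φ r - B r) (φ' r - k r) r := fun r => (hd r).sub (hB r)
    have hmax2 : IsLocalMax (fun r => ψ r - (φ r - B r)) z := by
      filter_upwards [hmax] with r hr
      try simp only at hr ⊢
      linarith
    have hv := hsub _ _ hd2 z (ha.trans haz) hmax2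
    try simp only at hv
    have hq : φ' z - k z ≤ 0 := by
      have hs := (hasDerivAt_iff_tendsto_slope_left_right.1 (hd2 z)).1
      refine le_of_tendsto hs ?_
      have h1 : ∀ᶠ r in 𝓝[<] z, ψ r - (φ r - B r) ≤ ψ z - (φ z - B z) :=
        hmax2.filter_mono nhdsWithin_le_nhds
      have h2 : ∀ᶠ r in 𝓝[<] z, x < r := (lt_mem_nhds hz.1).filter_mono nhdsWithin_le_nhds
      filter_upwards [h1, h2, self_mem_nhdsWithin] with r hr1 hr2 hr3
      have h3 := hanti r z hr2.le hr3
      rw [slope_def_field]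
      apply div_nonpos_of_nonneg_of_nonpos
      · linarith
      · exact sub_nonpos.2 (le_of_lt hr3)
    rw [abs_of_nonpos hq, ← hk z hz.1.le] at hv
    nlinarith

/-- Let `r₀ = min{r ≥ n-1 : h(r) = 0}` and `M = max{r ≥ n-1 : h(r) = 0}`.
Two bounded-from-above continuous viscosity solutions of (E) on `(0,∞)` which agree at
`r₀` and at `M` agree on `[n-1, r₀] ∪ [M, ∞)`. -/
theorem stmt_7 (n : ℕ) (hn : 2 ≤ n) (ftilde : ℝ → ℝ)
    (hfC1 : ContDiffOn ℝ 1 ftilde (Set.Ici 0))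
    (hfnonneg : ∀ r ∈ Set.Ici (0 : ℝ), 0 ≤ ftilde r)
    (hfsupp : ∃ R : ℝ, 0 < R ∧ ∀ r ≥ R, ftilde r = 0)
    (c : ℝ) (hc : IsGreatest (ftilde '' Set.Ici ((n : ℝ) - 1)) c) (hcpos : 0 < c)
    (r₀ M : ℝ)
    (hr₀ : IsLeast {r : ℝ | (n : ℝ) - 1 ≤ r ∧ ftilde r - c = 0} r₀)
    (hM : IsGreatest {r : ℝ | (n : ℝ) - 1 ≤ r ∧ ftilde r - c = 0} M)
    (ψ₁ ψ₂ : ℝ → ℝ)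
    (hψ₁cont : ContinuousOn ψ₁ (Set.Ici 0)) (hψ₂cont : ContinuousOn ψ₂ (Set.Ici 0))
    (hψ₁ : ViscSolE n (fun r => ftilde r - c) (Set.Ioi 0) ψ₁)
    (hψ₂ : ViscSolE n (fun r => ftilde r - c) (Set.Ioi 0) ψ₂)
    (hbd₁ : BddAbove (ψ₁ '' Set.Ici 0)) (hbd₂ : BddAbove (ψ₂ '' Set.Ici 0))
    (heqr₀ : ψ₁ r₀ = ψ₂ r₀) (heqM : ψ₁ M = ψ₂ M) :
    ∀ r ∈ Set.Icc ((n : ℝ) - 1) r₀ ∪ Set.Ici M, ψ₁ r = ψ₂ r := by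
  obtain ⟨a, ha_def⟩ : ∃ a : ℝ, a = (n : ℝ) - 1 := ⟨_, rfl⟩
  rw [← ha_def] at hc hr₀ hM ⊢
  have ha : 0 < a := by
    have : (2 : ℝ) ≤ n := by exact_mod_cast hn
    rw [ha_def]; linarith
  obtain ⟨R, hRpos, hR⟩ := hfsupp
  have hfc : ContinuousOn ftilde (Ici 0) := hfC1.continuousOn
  set g : ℝ → ℝ := fun r => c - ftilde r with hgdef
  have hgc : ContinuousOn g (Ici 0) := continuousOn_const.sub hfc
  have hgnn : ∀ r, a ≤ r → 0 ≤ g r := fun r hr => sub_nonneg.2 (hc.2 ⟨r, hr, rfl⟩)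
  have hconvSub : ∀ ψ, ViscSolE n (fun r => ftilde r - c) (Set.Ioi 0) ψ → auxSub a g ψ := by
    intro ψ h φ φ' hd z hz hmax
    have := h.1 φ (fun r _ => (hd r).differentiableAt.differentiableWithinAt) z hz hmax
    rw [(hd z).deriv, ← ha_def] at this
    have h2 : g z ≤ a / z * φ' z + |φ' z| := by simp only [hgdef]; linarith
    calc g z * z ≤ (a / z * φ' z + |φ' z|) * z := by gcongr
      _ = _ := by field_simp
  have hconvSup : ∀ ψ, ViscSolE n (fun r => ftilde r - c) (Set.Ioi 0) ψ → auxSup a g ψ := by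
    intro ψ h φ φ' hd z hz hmax
    have := h.2 φ (fun r _ => (hd r).differentiableAt.differentiableWithinAt) z hz hmax
    rw [(hd z).deriv, ← ha_def] at this
    have h2 : a / z * φ' z + |φ' z| ≤ g z := by simp only [hgdef]; linarith
    calc _ = (a / z * φ' z + |φ' z|) * z := by field_simp
      _ ≤ _ := by gcongr
  have hghat : Continuous (fun s => g (max s 0)) :=
    hgc.comp_continuous (by fun_prop) (fun s => mem_Ici.2 (le_max_right _ _))
  have hDc : ContinuousOn (fun r => ψ₁ r - ψ₂ r) (Ici 0) := hψ₁cont.sub hψ₂cont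
  rintro r (hr | hr)
  · rcases eq_or_lt_of_le hr.2 with h | h
    · rw [h]; exact heqr₀
    have har₀ : a < r₀ := lt_of_le_of_lt hr.1 h
    have hgp : ∀ r, a ≤ r → r < r₀ → 0 < g r := by
      intro s h1 h2
      refine lt_of_le_of_ne (hgnn s h1) (fun h0 => ?_)
      have := hr₀.2 ⟨h1, by simp only [hgdef] at h0; linarith⟩
      linarith
    obtain ⟨G, hG⟩ := aux_antideriv (fun s => g (max s 0) * |s| / (|s| + a))
      (by
        refine (hghat.mul continuous_abs).div (by fun_prop) (fun s => ?_)
        positivity)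
    have hk : ∀ r, a ≤ r → g (max r 0) * |r| / (|r| + a) * (r + a) = g r * r := by
      intro s hs
      have : 0 < s := by linarith
      rw [max_eq_left this.le, abs_of_pos this]; field_simp
    have key : ∀ x y, a < x → x < y → y < r₀ → ψ₁ x - ψ₂ x = ψ₁ y - ψ₂ y := by
      intro x y h1 h2 h3
      have e1 := aux_claimA ha hgc hgp hψ₁cont (hconvSub _ hψ₁) (hconvSup _ hψ₁) hG hk h1 h2 h3
      have e2 := aux_claimA ha hgc hgp hψ₂cont (hconvSub _ hψ₂) (hconvSup _ hψ₂) hG hk h1 h2 h3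
      linarith
    obtain ⟨m, hm1, hm2⟩ := exists_between har₀
    have hEq : EqOn (fun r => ψ₁ r - ψ₂ r) (fun _ => ψ₁ m - ψ₂ m) (Ioo a r₀) := by
      intro s hs
      rcases lt_trichotomy s m with h | h | h
      · exact key s m hs.1 h hm2
      · simp only [h]
      · exact (key m s hm1 h hs.2).symm
    have hEq2 := hEq.of_subset_closure (t := Icc a r₀)
      (hDc.mono (fun s hs => le_trans ha.le hs.1)) continuousOn_const Ioo_subset_Icc_self
      (by rw [closure_Ioo har₀.ne])
    have e1 := hEq2 hr
    have e2 := hEq2 (right_mem_Icc.2 har₀.le)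
    simp only at e1 e2
    linarith
  · have haM : a ≤ M := hM.1.1
    have hgp : ∀ r, M < r → 0 < g r := by
      intro s h1
      refine lt_of_le_of_ne (hgnn s (by linarith)) (fun h0 => ?_)
      have := hM.2 ⟨(by linarith : a ≤ s), by simp only [hgdef] at h0; linarith⟩
      linarith
    have hgR : ∀ r ≥ R, g r = c := fun s hs => by simp [hgdef, hR s hs]
    have key : ∀ x y, M < x → x < y → ψ₁ x - ψ₂ x = ψ₁ y - ψ₂ y := by
      intro x y h1 h2
      have hax : a < x := by linarith
      have hpos : ∀ s, 0 < max (s - a) (x - a) := fun s => lt_max_of_lt_right (by linarith)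
      obtain ⟨B, hB⟩ := aux_antideriv (fun s => g (max s 0) * s / max (s - a) (x - a))
        ((hghat.mul continuous_id).div (by fun_prop) (fun s => (hpos s).ne'))
      have hk : ∀ r, x ≤ r → g (max r 0) * r / max (r - a) (x - a) * (r - a) = g r * r := by
        intro s hs
        have h3 : 0 < s := by linarith
        have h4 : 0 < s - a := by linarith
        rw [max_eq_left h3.le, max_eq_left (by linarith)]; field_simp
      have hgx : ∀ r, x ≤ r → 0 < g r := fun s hs => hgp s (by linarith)
      have e1 := aux_claimB ha hax hgc hcpos hgR hgx hψ₁cont hbd₁ (hconvSub _ hψ₁)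
        (hconvSup _ hψ₁) hB hk h2
      have e2 := aux_claimB ha hax hgc hcpos hgR hgx hψ₂cont hbd₂ (hconvSub _ hψ₂)
        (hconvSup _ hψ₂) hB hk h2
      linarith
    have hEq : EqOn (fun r => ψ₁ r - ψ₂ r) (fun _ => ψ₁ (M+1) - ψ₂ (M+1)) (Ioi M) := by
      intro s hs
      rcases lt_trichotomy s (M+1) with h | h | h
      · exact key s _ hs h
      · simp only [h]
      · exact (key _ s (by linarith) h).symm
    have hEq2 := hEq.of_subset_closure (t := Ici M)
      (hDc.mono (fun s hs => le_trans (ha.le.trans haM) hs)) continuousOn_const Ioi_subset_Ici_self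
      (by rw [closure_Ioi])
    have e1 := hEq2 hr
    have e2 := hEq2 (self_mem_Ici (a := M))
    simp only at e1 e2
    linarith
end

section
/- Assume c > 0. Let ψ₁, ψ₂ : [0,∞) → ℝ be continuous viscosity solutions of (E) on (0,∞) which are bounded from above, and assume ψ₁ = ψ₂ on the uniqueness set Ã. Then ψ₁ = ψ₂ on [0,∞). -/
open Set Filter Topology

lemma aux_intmax {f : ℝ → ℝ} {a b z : ℝ} (hf : ContinuousOn f (Icc a b)) (hz : z ∈ Icc a b)
    (ha : f a < f z) (hb : f b < f z) : ∃ r ∈ Ioo a b, IsLocalMax f r := by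
  obtain ⟨r, hr, hmax⟩ := isCompact_Icc.exists_isMaxOn ⟨z, hz⟩ hf
  have hzr : f z ≤ f r := hmax hz
  have h1 : a < r := lt_of_le_of_ne hr.1 (by rintro rfl; linarith)
  have h2 : r < b := lt_of_le_of_ne hr.2 (by rintro rfl; linarith)
  exact ⟨r, ⟨h1, h2⟩, hmax.isLocalMax (Icc_mem_nhds h1 h2)⟩

lemma aux_base_max {f : ℝ → ℝ} {x y : ℝ} (hxy : x < y) (hf : ContinuousOn f (Icc x y))
    (h : f y < f x) : ∃ φ : ℝ → ℝ, Differentiable ℝ φ ∧ (∀ s, deriv φ s < 0) ∧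
      ∃ r ∈ Ioo x y, IsLocalMax (fun s => f s - φ s) r := by
  have hc : Tendsto f (𝓝[Ioo x y] x) (𝓝 (f x)) :=
    ((hf x ⟨le_rfl, hxy.le⟩).mono Ioo_subset_Icc_self)
  have hne : (𝓝[Ioo x y] x).NeBot := by
    rw [nhdsWithin_Ioo_eq_nhdsGT hxy]; infer_instance
  have e1 := hc.eventually (lt_mem_nhds h)
  have e2 := hc.eventually (lt_mem_nhds (show f x - 1/2 < f x by linarith))
  obtain ⟨z, ⟨h1, h2⟩, hz⟩ := ((e1.and e2).and self_mem_nhdsWithin).exists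
  obtain ⟨ε, hε, hε1, hε2⟩ : ∃ ε > 0, ε ≤ (1:ℝ)/2 ∧ ε ≤ f z - f y :=
    ⟨min (1/2) (f z - f y), lt_min (by norm_num) (by linarith), min_le_left _ _, min_le_right _ _⟩
  obtain ⟨k, hk, hke⟩ : ∃ k > 0, Real.exp (-(k * (z - x))) < ε := by
    have hzx : 0 < z - x := by linarith [hz.1]
    refine ⟨(|Real.log ε| + 1) / (z - x), by positivity, ?_⟩
    rw [div_mul_cancel₀ _ hzx.ne', ← Real.lt_log_iff_exp_lt hε]
    linarith [neg_abs_le (Real.log ε)]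
  have hd : ∀ s, HasDerivAt (fun s => Real.exp (-(k * (s - x))))
      (Real.exp (-(k * (s - x))) * (-(k * 1))) s := fun s =>
    (((hasDerivAt_id s).sub_const x).const_mul k).neg.exp
  refine ⟨fun s => Real.exp (-(k * (s - x))), fun s => (hd s).differentiableAt, fun s => ?_, ?_⟩
  · rw [(hd s).deriv]
    have := Real.exp_pos (-(k * (s - x)))
    nlinarith
  · refine aux_intmax (z := z) (hf.sub (by fun_prop)) ⟨hz.1.le, hz.2.le⟩ ?_ ?_
    · simp only [sub_self, mul_zero, neg_zero, Real.exp_zero]; linarith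
    · have := Real.exp_pos (-(k * (y - x)))
      linarith

lemma aux_base_min {f : ℝ → ℝ} {x y : ℝ} (hxy : x < y) (hf : ContinuousOn f (Icc x y))
    (h : f y < f x) : ∃ φ : ℝ → ℝ, Differentiable ℝ φ ∧ (∀ s, deriv φ s < 0) ∧
      ∃ r ∈ Ioo x y, IsLocalMin (fun s => f s - φ s) r := by
  have hc : ContinuousOn (fun s => - f (-s)) (Icc (-y) (-x)) := by
    refine (hf.comp continuousOn_neg ?_).neg
    intro s hs
    exact ⟨by linarith [hs.2], by linarith [hs.1]⟩
  obtain ⟨φ, hφ, hφ', r, hr, hmax⟩ := aux_base_max (neg_lt_neg hxy) hc (by simpa using h)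
  refine ⟨fun s => - φ (-s), (hφ.comp differentiable_neg).neg, fun s => ?_, -r,
    ⟨by linarith [hr.2], by linarith [hr.1]⟩, ?_⟩
  · have : HasDerivAt (fun s => - φ (-s)) (-(deriv φ (-s) * (-1))) s :=
      (HasDerivAt.comp s (hφ (-s)).hasDerivAt (hasDerivAt_neg s)).neg
    rw [this.deriv]
    linarith [hφ' (-s)]
  · have ht : Tendsto (fun s : ℝ => -s) (𝓝 (-r)) (𝓝 r) := by
      simpa using (continuous_neg.tendsto (-r))
    filter_upwards [ht.eventually hmax] with s hs
    simp only [neg_neg] at hs ⊢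
    linarith

lemma aux_prim {q : ℝ → ℝ} {a b : ℝ} (hab : a ≤ b) (hq : ContinuousOn q (Icc a b)) :
    ∃ Q : ℝ → ℝ, Differentiable ℝ Q ∧ ∀ s ∈ Icc a b, deriv Q s = q s := by
  have hc : Continuous (IccExtend hab ((Icc a b).domRestrict q)) := by
    exact hq.domRestrict.Icc_extend'
  refine ⟨fun x => ∫ t in a..x, IccExtend hab ((Icc a b).domRestrict q) t,
    fun s => (hc.integral_hasStrictDerivAt a s).hasDerivAt.differentiableAt, fun s hs => ?_⟩
  rw [(hc.integral_hasStrictDerivAt a s).hasDerivAt.deriv, IccExtend_of_mem _ _ hs]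
  rfl

lemma aux_super_up {n : ℕ} {h ψ Q : ℝ → ℝ} (hψ : ViscSupersolE n h (Ioi 0) ψ) {x y : ℝ}
    (hx : 0 < x) (hxy : x ≤ y) (hc : ContinuousOn ψ (Icc x y)) (hQ : Differentiable ℝ Q)
    (hp : ∀ s ∈ Ioo x y, ∀ p, h s ≤ -(((n : ℝ) - 1) / s) * p - |p| → p ≤ deriv Q s) :
    ψ y - ψ x ≤ Q y - Q x := by
  by_contra hcon
  push Not at hcon
  have hxy : x < y := lt_of_le_of_ne hxy (by rintro rfl; simp at hcon)
  obtain ⟨φ, hφ, hφ', r, hr, hmax⟩ := aux_base_max (f := fun s => Q s - ψ s) hxy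
    (hQ.continuous.continuousOn.sub hc) (by linarith)
  have := hψ (fun s => Q s - φ s) (hQ.sub hφ).differentiableOn r (hx.trans hr.1) (by
    filter_upwards [hmax] with s hs
    linarith)
  have h2 := hp r hr _ this
  have h3 : deriv (fun s => Q s - φ s) r = deriv Q r - deriv φ r := deriv_sub (hQ r) (hφ r)
  linarith [hφ' r]

lemma aux_super_low {n : ℕ} {h ψ Q : ℝ → ℝ} (hψ : ViscSupersolE n h (Ioi 0) ψ) {x y : ℝ}
    (hx : 0 < x) (hxy : x ≤ y) (hc : ContinuousOn ψ (Icc x y)) (hQ : Differentiable ℝ Q)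
    (hp : ∀ s ∈ Ioo x y, ∀ p, h s ≤ -(((n : ℝ) - 1) / s) * p - |p| → deriv Q s ≤ p) :
    Q y - Q x ≤ ψ y - ψ x := by
  by_contra hcon
  push Not at hcon
  have hxy : x < y := lt_of_le_of_ne hxy (by rintro rfl; simp at hcon)
  obtain ⟨φ, hφ, hφ', r, hr, hmax⟩ := aux_base_min (f := fun s => ψ s - Q s) hxy
    (hc.sub hQ.continuous.continuousOn) (by linarith)
  have := hψ (fun s => Q s + φ s) (hQ.add hφ).differentiableOn r (hx.trans hr.1) (by
    filter_upwards [hmax] with s hs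
    linarith)
  have h2 := hp r hr _ this
  have h3 : deriv (fun s => Q s + φ s) r = deriv Q r + deriv φ r := deriv_add (hQ r) (hφ r)
  linarith [hφ' r]

lemma aux_sub_low {n : ℕ} {h ψ Q : ℝ → ℝ} (hψ : ViscSubsolE n h (Ioi 0) ψ) {x y : ℝ}
    (hx : 0 < x) (hxy : x ≤ y) (hc : ContinuousOn ψ (Icc x y)) (hQ : Differentiable ℝ Q)
    (hp : ∀ s ∈ Ioo x y, ∀ p, -(((n : ℝ) - 1) / s) * p - |p| ≤ h s → deriv Q s ≤ p) :
    Q y - Q x ≤ ψ y - ψ x := by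
  by_contra hcon
  push Not at hcon
  have hxy : x < y := lt_of_le_of_ne hxy (by rintro rfl; simp at hcon)
  obtain ⟨φ, hφ, hφ', r, hr, hmax⟩ := aux_base_max (f := fun s => ψ s - Q s) hxy
    (hc.sub hQ.continuous.continuousOn) (by linarith)
  have := hψ (fun s => Q s + φ s) (hQ.add hφ).differentiableOn r (hx.trans hr.1) (by
    filter_upwards [hmax] with s hs
    linarith)
  have h2 := hp r hr _ this
  have h3 : deriv (fun s => Q s + φ s) r = deriv Q r + deriv φ r := deriv_add (hQ r) (hφ r)
  linarith [hφ' r]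

/-- Upper barrier: a subsolution lies below the max of two suitable functions. -/
lemma aux_barrier {n : ℕ} {h ψ A B : ℝ → ℝ} (hψ : ViscSubsolE n h (Ioi 0) ψ) {a b : ℝ}
    (hn : 1 ≤ (n : ℝ) - 1) (ha : (n : ℝ) - 1 < a) (hc : ContinuousOn ψ (Icc a b))
    (hA : Differentiable ℝ A) (hB : Differentiable ℝ B)
    (hneg : ∀ s ∈ Ioo a b, h s < 0)
    (hA0 : ∀ s ∈ Ioo a b, deriv A s ≤ 0) (hB0 : ∀ s ∈ Ioo a b, 0 ≤ deriv B s)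
    (hA1 : ∀ s ∈ Ioo a b, (1 - ((n : ℝ) - 1) / s) * (- deriv A s) ≤ - h s)
    (hB1 : ∀ s ∈ Ioo a b, (1 + ((n : ℝ) - 1) / s) * (deriv B s) ≤ - h s)
    (hAa : ψ a ≤ A a) (hBb : ψ b ≤ B b) {x : ℝ} (hx : x ∈ Icc a b) :
    ψ x ≤ A x ∨ ψ x ≤ B x := by
  by_contra hcon
  push Not at hcon
  obtain ⟨h1, h2⟩ := hcon
  obtain ⟨ε, hε, hε1, hε2⟩ : ∃ ε > 0, ε < ψ x - A x ∧ ε < ψ x - B x := by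
    obtain ⟨ε, h3, h4⟩ := exists_between (lt_min (sub_pos.2 h1) (sub_pos.2 h2))
    exact ⟨ε, h3, (lt_min_iff.1 h4).1, (lt_min_iff.1 h4).2⟩
  set S : ℝ → ℝ := fun s => Real.sqrt ((A s - B s) ^ 2 + ε ^ 2) with hS
  have hSpos : ∀ s, 0 < S s := fun s => Real.sqrt_pos.2 (by positivity)
  have hSsq : ∀ s, S s ^ 2 = (A s - B s) ^ 2 + ε ^ 2 := fun s => Real.sq_sqrt (by positivity)
  have hSgt : ∀ s, |A s - B s| < S s := fun s => by
    apply abs_lt_of_sq_lt_sq _ (hSpos s).le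
    rw [hSsq]; nlinarith
  have hSle : ∀ s, S s ≤ |A s - B s| + ε := fun s => by
    apply Real.sqrt_le_iff.2 ⟨by positivity, ?_⟩
    nlinarith [sq_abs (A s - B s), abs_nonneg (A s - B s)]
  have hd : ∀ s, HasDerivAt (fun s => (A s + B s + S s) / 2)
      ((deriv A s + deriv B s + (A s - B s) * (deriv A s - deriv B s) / S s) / 2) s := by
    intro s
    have h3 := ((((hA s).hasDerivAt.sub (hB s).hasDerivAt).pow 2).add_const (ε ^ 2)).sqrt
      (by have := hSsq s; have := hSpos s; simp only [Pi.sub_apply, Pi.pow_apply]; positivity)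
    have h4 := (((hA s).hasDerivAt.add (hB s).hasDerivAt).add h3).div_const 2
    refine h4.congr_deriv ?_
    have := (hSpos s).ne'
    simp only [Pi.sub_apply, Pi.pow_apply, Nat.cast_ofNat]
    change (_ + _ / (2 * S s)) / 2 = _
    field_simp
    ring
  obtain ⟨r, hr, hmax⟩ := aux_intmax (f := fun s => ψ s - (A s + B s + S s) / 2) (z := x)
    (hc.sub (fun s _ => (hd s).continuousAt.continuousWithinAt)) hx
    (by
      have := hSgt a; have := hSle x
      rcases abs_cases (A x - B x) with h | h <;> rcases abs_cases (A a - B a) with h' | h' <;>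
        linarith)
    (by
      have := hSgt b; have := hSle x
      rcases abs_cases (A x - B x) with h | h <;> rcases abs_cases (A b - B b) with h' | h' <;>
        linarith)
  have hr0 : 0 < r := by linarith [hr.1]
  have key := hψ _ (fun s _ => (hd s).differentiableAt.differentiableWithinAt) r hr0 hmax
  rw [(hd r).deriv] at key
  set θ := (1 + (A r - B r) / S r) / 2 with hθ
  have hq : |(A r - B r) / S r| < 1 := by
    rw [abs_div, abs_of_pos (hSpos r), div_lt_one (hSpos r)]; exact hSgt r
  rw [abs_lt] at hq
  have hθ0 : 0 < θ := by linarith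
  have hθ1 : θ < 1 := by linarith
  have hp : (deriv A r + deriv B r + (A r - B r) * (deriv A r - deriv B r) / S r) / 2
      = θ * deriv A r + (1 - θ) * deriv B r := by
    rw [hθ]; ring
  rw [hp] at key
  have e1 := hneg r hr
  have e2 := hA0 r hr
  have e3 := hB0 r hr
  have e4 := hA1 r hr
  have e5 := hB1 r hr
  have hN0 : 0 < ((n : ℝ) - 1) / r := div_pos (by linarith) hr0
  have hN1 : ((n : ℝ) - 1) / r < 1 := by rw [div_lt_one hr0]; linarith [hr.1]
  set κ := ((n : ℝ) - 1) / r
  set α := deriv A r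
  set β := deriv B r
  rcases abs_cases (θ * α + (1 - θ) * β) with ⟨h5, h6⟩ | ⟨h5, h6⟩ <;> rw [h5] at key
  · have : (1 + κ) * (θ * α) ≤ 0 := by
      apply mul_nonpos_of_nonneg_of_nonpos (by linarith)
      exact mul_nonpos_of_nonneg_of_nonpos hθ0.le e2
    nlinarith [mul_le_mul_of_nonneg_left e5 (show 0 ≤ 1 - θ by linarith)]
  · have : 0 ≤ (1 - κ) * ((1 - θ) * β) := by
      apply mul_nonneg (by linarith)
      exact mul_nonneg (by linarith) e3
    nlinarith [mul_le_mul_of_nonneg_left e4 hθ0.le]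

lemma aux_pt_up {κ h p : ℝ} (hκ : 0 < κ) (hh : h ≤ 0) (hp : h ≤ -κ * p - |p|) :
    p ≤ -h / (1 + κ) := by
  rw [le_div_iff₀ (by linarith)]
  rcases abs_cases p with ⟨h5, h6⟩ | ⟨h5, h6⟩ <;> rw [h5] at hp
  · linarith
  · nlinarith

lemma aux_pt_low {κ h p : ℝ} (hκ : 0 < κ) (hκ1 : κ < 1) (hh : h ≤ 0) (hp : h ≤ -κ * p - |p|) :
    h / (1 - κ) ≤ p := by
  rw [div_le_iff₀ (by linarith)]
  rcases abs_cases p with ⟨h5, h6⟩ | ⟨h5, h6⟩ <;> rw [h5] at hp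
  · nlinarith
  · linarith

/-- lower branch primitive -/
lemma aux_primM {n : ℕ} {h : ℝ → ℝ} {a b : ℝ} (hn : 1 ≤ (n : ℝ) - 1) (ha : (n : ℝ) - 1 < a)
    (hab : a ≤ b) (hc : ContinuousOn h (Ici 0)) :
    ∃ Q : ℝ → ℝ, Differentiable ℝ Q ∧
      ∀ s ∈ Icc a b, deriv Q s = h s / (1 - ((n : ℝ) - 1) / s) := by
  apply aux_prim hab
  refine (hc.mono fun s hs => ?_).div (continuousOn_const.sub (continuousOn_const.div
    continuousOn_id fun s hs => ?_)) fun s hs => ?_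
  · show 0 ≤ s
    linarith [hs.1]
  · show s ≠ 0
    have := hs.1
    intro h; linarith
  · have h1 : 0 < s := by linarith [hs.1]
    have : ((n : ℝ) - 1) / s < 1 := by rw [div_lt_one h1]; linarith [hs.1]
    show 1 - ((n : ℝ) - 1) / s ≠ 0
    linarith

/-- upper branch primitive -/
lemma aux_primP {n : ℕ} {h : ℝ → ℝ} {a b : ℝ} (hn : 1 ≤ (n : ℝ) - 1) (ha : 0 < a)
    (hab : a ≤ b) (hc : ContinuousOn h (Ici 0)) :
    ∃ Q : ℝ → ℝ, Differentiable ℝ Q ∧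
      ∀ s ∈ Icc a b, deriv Q s = -h s / (1 + ((n : ℝ) - 1) / s) := by
  apply aux_prim hab
  refine (hc.mono fun s hs => ?_).neg.div (continuousOn_const.add (continuousOn_const.div
    continuousOn_id fun s hs => ?_)) fun s hs => ?_
  · show 0 ≤ s
    linarith [hs.1]
  · show s ≠ 0
    have := hs.1
    intro h; linarith
  · have h1 : 0 < s := by linarith [hs.1]
    have : 0 < ((n : ℝ) - 1) / s := div_pos (by linarith) h1
    show 1 + ((n : ℝ) - 1) / s ≠ 0
    linarith

lemma aux_kappa {N a s : ℝ} (hn : 1 ≤ N) (ha : N < a) (hs : a ≤ s) :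
    0 < s ∧ 0 < N / s ∧ N / s < 1 := by
  have h1 : 0 < s := by linarith
  exact ⟨h1, div_pos (by linarith) h1, by rw [div_lt_one h1]; linarith⟩

lemma aux_C {n : ℕ} {h ψ₁ ψ₂ : ℝ → ℝ} (hn : 1 ≤ (n : ℝ) - 1) (hh : ContinuousOn h (Ici 0))
    (h1 : ViscSubsolE n h (Ioi 0) ψ₁) (h2 : ViscSupersolE n h (Ioi 0) ψ₂)
    (c1 : ContinuousOn ψ₁ (Ici 0)) (c2 : ContinuousOn ψ₂ (Ici 0)) {a b r : ℝ}
    (ha : (n : ℝ) - 1 < a) (hr : r ∈ Icc a b) (hneg : ∀ s ∈ Ioo a b, h s < 0) :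
    ψ₁ r - ψ₂ r ≤ max (ψ₁ a - ψ₂ a) (ψ₁ b - ψ₂ b) := by
  have hab : a ≤ b := hr.1.trans hr.2
  have ha0 : 0 < a := by linarith
  have hsub : ∀ {x y : ℝ}, a ≤ x → Icc x y ⊆ Ici (0:ℝ) := fun hx s hs => by
    show 0 ≤ s
    linarith [hs.1]
  obtain ⟨A, hA, hA'⟩ := aux_primM hn ha hab hh
  obtain ⟨B, hB, hB'⟩ := aux_primP hn ha0 hab hh
  have l1 : A r - A a ≤ ψ₂ r - ψ₂ a := by
    refine aux_super_low h2 ha0 hr.1 (c2.mono (hsub le_rfl)) hA fun s hs p hp => ?_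
    obtain ⟨k0, k1, k2⟩ := aux_kappa hn ha hs.1.le
    rw [hA' s ⟨hs.1.le, hs.2.le.trans hr.2⟩]
    exact aux_pt_low k1 k2 (hneg s ⟨hs.1, hs.2.trans_le hr.2⟩).le hp
  have l2 : ψ₂ b - ψ₂ r ≤ B b - B r := by
    refine aux_super_up h2 (ha0.trans_le hr.1) hr.2 (c2.mono (hsub hr.1)) hB fun s hs p hp => ?_
    obtain ⟨k0, k1, k2⟩ := aux_kappa hn ha (hr.1.trans hs.1.le)
    rw [hB' s ⟨hr.1.trans hs.1.le, hs.2.le⟩]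
    exact aux_pt_up k1 (hneg s ⟨hr.1.trans_lt hs.1, hs.2⟩).le hp
  have key := aux_barrier (A := fun s => A s + (ψ₁ a - A a)) (B := fun s => B s + (ψ₁ b - B b))
    h1 hn ha (c1.mono (hsub le_rfl)) (hA.add_const _) (hB.add_const _) hneg
    (fun s hs => by
      obtain ⟨k0, k1, k2⟩ := aux_kappa hn ha hs.1.le
      rw [deriv_add_const, hA' s ⟨hs.1.le, hs.2.le⟩]
      exact div_nonpos_of_nonpos_of_nonneg (hneg s hs).le (by linarith))
    (fun s hs => by
      obtain ⟨k0, k1, k2⟩ := aux_kappa hn ha hs.1.le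
      rw [deriv_add_const, hB' s ⟨hs.1.le, hs.2.le⟩]
      exact div_nonneg (by linarith [hneg s hs]) (by linarith))
    (fun s hs => by
      obtain ⟨k0, k1, k2⟩ := aux_kappa hn ha hs.1.le
      rw [deriv_add_const, hA' s ⟨hs.1.le, hs.2.le⟩, mul_neg,
        mul_div_cancel₀ _ (by linarith)])
    (fun s hs => by
      obtain ⟨k0, k1, k2⟩ := aux_kappa hn ha hs.1.le
      rw [deriv_add_const, hB' s ⟨hs.1.le, hs.2.le⟩, 
        mul_div_cancel₀ _ (by linarith)])
    (by simp) (by simp) hr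
  rcases key with h | h
  · exact le_max_of_le_left (by linarith)
  · exact le_max_of_le_right (by linarith)

/-- limit along `a' → a+` -/
lemma aux_lim {D : ℝ → ℝ} {a b : ℝ} (ha : 0 ≤ a) (hab : a < b) (hD : ContinuousOn D (Ici 0))
    {K : ℝ} {F : ℝ → ℝ} (hF : Continuous F) (h : ∀ x ∈ Ioo a b, K ≤ F (D x)) : K ≤ F (D a) := by
  have hne : (𝓝[Ioo a b] a).NeBot := by
    rw [nhdsWithin_Ioo_eq_nhdsGT hab]; infer_instance
  have hc : Tendsto (fun x => F (D x)) (𝓝[Ioo a b] a) (𝓝 (F (D a))) :=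
    (hF.tendsto _).comp ((hD a ha).mono fun s hs => ha.trans hs.1.le)
  exact ge_of_tendsto hc (eventually_mem_nhdsWithin.mono h)

lemma aux_lim' {D : ℝ → ℝ} {a b : ℝ} (ha : 0 ≤ a) (hab : a < b) (hD : ContinuousOn D (Ici 0))
    {K : ℝ} (h : ∀ x ∈ Ioo a b, K ≤ D x) : K ≤ D b := by
  have hne : (𝓝[Ioo a b] b).NeBot := by
    rw [nhdsWithin_Ioo_eq_nhdsLT hab]; infer_instance
  have hc : Tendsto D (𝓝[Ioo a b] b) (𝓝 (D b)) :=
    ((hD b (ha.trans hab.le)).mono fun s hs => ha.trans hs.1.le)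
  exact ge_of_tendsto hc (eventually_mem_nhdsWithin.mono h)

lemma aux_C' {n : ℕ} {h ψ₁ ψ₂ : ℝ → ℝ} (hn : 1 ≤ (n : ℝ) - 1) (hh : ContinuousOn h (Ici 0))
    (h1 : ViscSubsolE n h (Ioi 0) ψ₁) (h2 : ViscSupersolE n h (Ioi 0) ψ₂)
    (c1 : ContinuousOn ψ₁ (Ici 0)) (c2 : ContinuousOn ψ₂ (Ici 0)) {a b r : ℝ}
    (ha : (n : ℝ) - 1 ≤ a) (hr : r ∈ Ioc a b) (hneg : ∀ s ∈ Ioo a b, h s < 0) :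
    ψ₁ r - ψ₂ r ≤ max (ψ₁ a - ψ₂ a) (ψ₁ b - ψ₂ b) := by
  refine aux_lim (D := fun s => ψ₁ s - ψ₂ s) (F := fun t => max t (ψ₁ b - ψ₂ b))
    (by linarith) hr.1 (c1.sub c2) (by fun_prop) fun x hx => ?_
  exact aux_C hn hh h1 h2 c1 c2 (ha.trans_lt hx.1) ⟨hx.2.le, hr.2⟩
    fun s hs => hneg s ⟨hx.1.trans hs.1, hs.2⟩

lemma aux_infty {n : ℕ} {h ψ₁ ψ₂ : ℝ → ℝ} (hn : 1 ≤ (n : ℝ) - 1) (hh : ContinuousOn h (Ici 0))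
    (h1 : ViscSubsolE n h (Ioi 0) ψ₁) (h2 : ViscSupersolE n h (Ioi 0) ψ₂)
    (c1 : ContinuousOn ψ₁ (Ici 0)) (c2 : ContinuousOn ψ₂ (Ici 0)) {a r : ℝ}
    (ha : (n : ℝ) - 1 < a) (hr : a < r) {δ : ℝ} (hδ : 0 < δ) (hneg : ∀ s, a ≤ s → h s ≤ -δ)
    (hbd : BddAbove (ψ₁ '' Ici 0)) :
    ψ₁ r - ψ₂ r ≤ ψ₁ a - ψ₂ a := by
  obtain ⟨M, hM⟩ := hbd
  have ha0 : 0 < a := by linarith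
  have hMr : ψ₁ r ≤ M := hM ⟨r, (by show 0 ≤ r; linarith), rfl⟩
  obtain ⟨b, hb, hb2⟩ : ∃ b, r < b ∧ M - (δ / 2) * (b - r) < ψ₁ r := by
    refine ⟨r + (2 / δ) * (M - ψ₁ r + 1), ?_, ?_⟩
    · have : 0 < (2 / δ) * (M - ψ₁ r + 1) := mul_pos (by positivity) (by linarith)
      linarith
    · have : (δ / 2) * (r + (2 / δ) * (M - ψ₁ r + 1) - r) = M - ψ₁ r + 1 := by
        field_simp; ring
      linarith
  have hMb : ψ₁ b ≤ M := hM ⟨b, (by show 0 ≤ b; linarith), rfl⟩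
  have hab : a ≤ b := by linarith
  have hsub : ∀ {x y : ℝ}, a ≤ x → Icc x y ⊆ Ici (0:ℝ) := fun hx s hs => by
    show 0 ≤ s
    linarith [hs.1]
  obtain ⟨A, hA, hA'⟩ := aux_primM hn ha hab hh
  have l1 : A r - A a ≤ ψ₂ r - ψ₂ a := by
    refine aux_super_low h2 ha0 hr.le (c2.mono (hsub le_rfl)) hA fun s hs p hp => ?_
    obtain ⟨k0, k1, k2⟩ := aux_kappa hn ha hs.1.le
    rw [hA' s ⟨hs.1.le, (hs.2.trans hb).le⟩]
    exact aux_pt_low k1 k2 (by linarith [hneg s hs.1.le]) hp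
  have hBd : ∀ s, HasDerivAt (fun s => ψ₁ b + (δ / 2) * (s - b)) (δ / 2) s := fun s => by
    simpa using ((((hasDerivAt_id s).sub_const b).const_mul (δ / 2)).const_add (ψ₁ b))
  have key := aux_barrier (A := fun s => A s + (ψ₁ a - A a))
    (B := fun s => ψ₁ b + (δ / 2) * (s - b))
    h1 hn ha (c1.mono (hsub le_rfl)) (hA.add_const _) (fun s => (hBd s).differentiableAt)
    (fun s hs => by linarith [hneg s hs.1.le])
    (fun s hs => by
      obtain ⟨k0, k1, k2⟩ := aux_kappa hn ha hs.1.le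
      rw [deriv_add_const, hA' s ⟨hs.1.le, hs.2.le⟩]
      exact div_nonpos_of_nonpos_of_nonneg (by linarith [hneg s hs.1.le]) (by linarith))
    (fun s hs => by rw [(hBd s).deriv]; positivity)
    (fun s hs => by
      obtain ⟨k0, k1, k2⟩ := aux_kappa hn ha hs.1.le
      rw [deriv_add_const, hA' s ⟨hs.1.le, hs.2.le⟩, mul_neg,
        mul_div_cancel₀ _ (by linarith)])
    (fun s hs => by
      obtain ⟨k0, k1, k2⟩ := aux_kappa hn ha hs.1.le
      rw [(hBd s).deriv]
      nlinarith [hneg s hs.1.le])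
    (by simp) (by simp) ⟨hr.le, hb.le⟩
  rcases key with h | h
  · linarith
  · linarith

lemma aux_left {n : ℕ} {h ψ₁ ψ₂ : ℝ → ℝ} (hn : 1 ≤ (n : ℝ) - 1) (hh : ContinuousOn h (Ici 0))
    (h1 : ViscSubsolE n h (Ioi 0) ψ₁) (h2 : ViscSupersolE n h (Ioi 0) ψ₂)
    (c1 : ContinuousOn ψ₁ (Ici 0)) (c2 : ContinuousOn ψ₂ (Ici 0)) {y : ℝ}
    (hy : (n : ℝ) - 1 < y) {m : ℝ} (hm : 0 < m)
    (hneg : ∀ s ∈ Icc ((n : ℝ) - 1) y, h s ≤ -m) :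
    ψ₁ ((n : ℝ) - 1) - ψ₂ ((n : ℝ) - 1) ≤ ψ₁ y - ψ₂ y := by
  set N := (n : ℝ) - 1 with hN
  -- the key estimate
  have key : ∀ d, 0 < d → N + 2 * d < y →
      ψ₁ (N + 2 * d) ≤ ψ₁ (N + d) - m * (1 - Real.exp (-1)) ∨
      ψ₁ (N + 2 * d) - ψ₂ (N + 2 * d) ≤ ψ₁ y - ψ₂ y := by
    intro d hd hdy
    have ha : N < N + d := by linarith
    have ha0 : 0 < N + d := by linarith
    have hab : N + d ≤ y := by linarith
    have hsub : ∀ {x y : ℝ}, N + d ≤ x → Icc x y ⊆ Ici (0:ℝ) := fun hx s hs => by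
      show 0 ≤ s
      linarith [hs.1]
    obtain ⟨B, hB, hB'⟩ := aux_primP hn ha0 hab hh
    have l2 : ψ₂ y - ψ₂ (N + 2 * d) ≤ B y - B (N + 2 * d) := by
      refine aux_super_up h2 (by linarith) hdy.le (c2.mono (hsub (by linarith))) hB
        fun s hs p hp => ?_
      have hs1 := hs.1
      have hs2 := hs.2
      obtain ⟨k0, k1, k2⟩ := aux_kappa hn ha (by linarith : N + d ≤ s)
      rw [hB' s ⟨by linarith, hs.2.le⟩]
      exact aux_pt_up k1 (by linarith [hneg s ⟨by linarith, by linarith⟩]) hp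
    have hAd : ∀ s, HasDerivAt
        (fun s => ψ₁ (N + d) - m * (1 - Real.exp (-(d⁻¹ * (s - (N + d))))))
        (-(m * (-(Real.exp (-(d⁻¹ * (s - (N + d)))) * (-(d⁻¹ * 1)))))) s := fun s => 
      (((((((hasDerivAt_id s).sub_const (N + d)).const_mul d⁻¹).neg.exp).const_sub 1).const_mul
        m).const_sub _)
    have hAd' : ∀ s, deriv (fun s => ψ₁ (N + d) - m * (1 - Real.exp (-(d⁻¹ * (s - (N + d)))))) s
        = -(m * d⁻¹ * Real.exp (-(d⁻¹ * (s - (N + d))))) := fun s => by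
      rw [(hAd s).deriv]; ring
    have key := aux_barrier 
      (A := fun s => ψ₁ (N + d) - m * (1 - Real.exp (-(d⁻¹ * (s - (N + d))))))
      (B := fun s => B s + (ψ₁ y - B y))
      h1 hn ha (c1.mono (hsub le_rfl)) (fun s => (hAd s).differentiableAt) (hB.add_const _)
      (fun s hs => by linarith [hneg s ⟨by linarith [hs.1], hs.2.le⟩])
      (fun s hs => by
        rw [hAd']
        have : 0 ≤ m * d⁻¹ * Real.exp (-(d⁻¹ * (s - (N + d)))) := by positivity
        linarith)
      (fun s hs => by
        obtain ⟨k0, k1, k2⟩ := aux_kappa hn ha hs.1.le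
        rw [deriv_add_const, hB' s ⟨hs.1.le, hs.2.le⟩]
        exact div_nonneg (by linarith [hneg s ⟨by linarith [hs.1], hs.2.le⟩]) (by linarith))
      (fun s hs => by
        obtain ⟨k0, k1, k2⟩ := aux_kappa hn ha hs.1.le
        rw [hAd', neg_neg]
        have hs1 := hs.1
        refine le_trans ?_ (show m ≤ - h s by linarith [hneg s ⟨by linarith, hs.2.le⟩])
        set u := d⁻¹ * (s - N) with hu
        have hu0 : 0 < u := mul_pos (by positivity) (by linarith)
        have e1 : d⁻¹ * (s - (N + d)) = u - 1 := by rw [hu]; field_simp; ring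
        have e2 : (1 - N / s) * (m * d⁻¹ * Real.exp (-(d⁻¹ * (s - (N + d)))))
            = m * (u * Real.exp (-(u - 1))) / s := by
          rw [e1, hu]; field_simp
        have e3 : u * Real.exp (-(u - 1)) ≤ 1 := by
          rw [Real.exp_neg, ← div_eq_mul_inv, div_le_one (Real.exp_pos _)]
          linarith [Real.add_one_le_exp (u - 1)]
        rw [show ((n : ℝ) - 1) = N from rfl, e2, div_le_iff₀ k0]
        have : 1 ≤ s := by linarith
        nlinarith)
      (fun s hs => by
        obtain ⟨k0, k1, k2⟩ := aux_kappa hn ha hs.1.le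
        rw [deriv_add_const, hB' s ⟨hs.1.le, hs.2.le⟩, 
          mul_div_cancel₀ _ (by linarith)])
      (by simp) (by simp) (x := N + 2 * d) ⟨by linarith, by linarith⟩
    rcases key with h | h
    · left
      have : d⁻¹ * (N + 2 * d - (N + d)) = 1 := by field_simp; ring
      rw [this] at h
      exact h
    · right
      linarith
  have hN0 : N ∈ Ici (0:ℝ) := by show 0 ≤ N; linarith
  have htend : ∀ k : ℝ, 0 < k → ∀ g : ℝ → ℝ, ContinuousOn g (Ici 0) →
      Tendsto (fun d => g (N + k * d)) (𝓝[>] 0) (𝓝 (g N)) := by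
    intro k hk g hg
    refine (hg N hN0).tendsto.comp (tendsto_nhdsWithin_iff.2 ⟨?_, ?_⟩)
    · have : Continuous fun d : ℝ => N + k * d := by fun_prop
      simpa using (this.tendsto 0).mono_left nhdsWithin_le_nhds
    · filter_upwards [self_mem_nhdsWithin] with d hd
      have hd : 0 < d := hd
      show 0 ≤ N + k * d
      have := mul_pos hk hd
      linarith
  have t1 := (htend 2 (by norm_num) ψ₁ c1).sub (htend 1 (by norm_num) ψ₁ c1)
  have hκ : 0 < m * (1 - Real.exp (-1)) := by
    have : Real.exp (-1) < 1 := by rw [Real.exp_lt_one_iff]; norm_num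
    exact mul_pos hm (by linarith)
  have ev1 := t1.eventually (lt_mem_nhds (show -(m * (1 - Real.exp (-1))) < ψ₁ N - ψ₁ N by linarith))
  have ev2 : ∀ᶠ d : ℝ in 𝓝[>] 0, N + 2 * d < y := by
    have : Continuous fun d : ℝ => N + 2 * d := by fun_prop
    have := (this.tendsto 0).mono_left (nhdsWithin_le_nhds (s := Ioi 0))
    exact this.eventually (gt_mem_nhds (by simpa using hy))
  have t2 := (htend 2 (by norm_num) ψ₁ c1).sub (htend 2 (by norm_num) ψ₂ c2)
  refine le_of_tendsto t2 ?_
  filter_upwards [ev1, ev2, self_mem_nhdsWithin] with d g1 g2 g3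
  rcases key d g3 g2 with h | h
  · rw [one_mul] at g1; linarith
  · exact h

lemma aux_main_le {n : ℕ} {f ψ₁ ψ₂ : ℝ → ℝ} {c : ℝ} (hn : 1 ≤ (n : ℝ) - 1)
    (hf : ContinuousOn f (Ici 0)) (hfsupp : ∃ R : ℝ, 0 < R ∧ ∀ r ≥ R, f r = 0)
    (hc : IsGreatest (f '' Ici ((n : ℝ) - 1)) c) (hcpos : 0 < c)
    (h1 : ViscSubsolE n (fun r => f r - c) (Ioi 0) ψ₁)
    (h2 : ViscSupersolE n (fun r => f r - c) (Ioi 0) ψ₂)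
    (c1 : ContinuousOn ψ₁ (Ici 0)) (c2 : ContinuousOn ψ₂ (Ici 0))
    (hbd : BddAbove (ψ₁ '' Ici 0))
    (heq : ∀ r, (n : ℝ) - 1 ≤ r → f r = c → ψ₁ r = ψ₂ r) :
    ∀ r, (n : ℝ) - 1 ≤ r → ψ₁ r ≤ ψ₂ r := by
  intro r hr
  set N := (n : ℝ) - 1 with hN
  have hh : ContinuousOn (fun r => f r - c) (Ici 0) := hf.sub continuousOn_const
  obtain ⟨R, hR, hfR⟩ := hfsupp
  have hle : ∀ s, N ≤ s → f s ≤ c := fun s hs => hc.2 ⟨s, hs, rfl⟩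
  have hlt : ∀ s, N ≤ s → f s ≠ c → f s - c < 0 := fun s hs hne => by
    have := lt_of_le_of_ne (hle s hs) hne
    linarith
  have hcomp : ∀ x y : ℝ, N ≤ x → IsCompact (Icc x y ∩ f ⁻¹' {c}) := fun x y hx => by
    refine isCompact_Icc.of_isClosed_subset ?_ inter_subset_left
    refine (hf.mono fun s hs => ?_).preimage_isClosed_of_isClosed isClosed_Icc isClosed_singleton
    show 0 ≤ s
    linarith [hs.1]
  have hSR : ∀ s, f s = c → s < R := fun s hs => by
    by_contra hcon
    have := hfR s (not_lt.1 hcon)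
    linarith
  by_cases hrc : f r = c
  · exact (heq r hr hrc).le
  have hD : ContinuousOn (fun s => ψ₁ s - ψ₂ s) (Ici 0) := c1.sub c2
  by_cases hL : ∃ s, N ≤ s ∧ s ≤ r ∧ f s = c
  · obtain ⟨s, hs1, hs2, hs3⟩ := hL
    obtain ⟨a, ⟨⟨ha1, ha2⟩, ha3⟩, hamax⟩ :=
      (hcomp N r le_rfl).exists_isGreatest ⟨s, ⟨hs1, hs2⟩, hs3⟩
    have ha3 : f a = c := ha3
    have har : a < r := lt_of_le_of_ne ha2 (by rintro rfl; exact hrc ha3)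
    have hbet : ∀ t, a < t → t ≤ r → f t ≠ c := fun t ht1 ht2 ht3 =>
      absurd (hamax ⟨⟨ha1.trans ht1.le, ht2⟩, ht3⟩) (not_le.2 ht1)
    have hDa : ψ₁ a - ψ₂ a = 0 := by rw [heq a ha1 ha3, sub_self]
    by_cases hU : ∃ s, r ≤ s ∧ f s = c
    · obtain ⟨s, hs1, hs3⟩ := hU
      obtain ⟨b, ⟨⟨hb1, hb2⟩, hb3⟩, hbmin⟩ :=
        (hcomp r s hr).exists_isLeast ⟨s, ⟨hs1, le_rfl⟩, hs3⟩
      have hb3 : f b = c := hb3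
      have hDb : ψ₁ b - ψ₂ b = 0 := by rw [heq b (hr.trans hb1) hb3, sub_self]
      have := aux_C' hn hh h1 h2 c1 c2 ha1 (⟨har, hb1⟩ : r ∈ Ioc a b) fun t ht =>
        hlt t (ha1.trans ht.1.le) fun htc => by
          rcases le_total t r with h | h
          · exact hbet t ht.1 h htc
          · exact absurd (hbmin ⟨⟨h, ht.2.le.trans hb2⟩, htc⟩) (not_le.2 ht.2)
      rw [hDa, hDb, max_self] at this
      linarith
    · have hne : ∀ t, a < t → f t ≠ c := fun t ht htc => by
        rcases le_total t r with h | h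
        · exact hbet t ht h htc
        · exact hU ⟨t, h, htc⟩
      have := aux_lim (D := fun s => ψ₁ s - ψ₂ s) (F := id) (K := ψ₁ r - ψ₂ r)
        (by linarith : 0 ≤ a) har hD continuous_id fun x hx => by
          have hx1 := hx.1
          obtain ⟨z, hz, hzmax⟩ := (isCompact_Icc (a := x) (b := max x R)).exists_isMaxOn
            ⟨x, le_rfl, le_max_left _ _⟩ (hf.mono fun s hs => by
              show 0 ≤ s
              linarith [hs.1])
          have hz1 := hz.1
          have hzc := hlt z (by linarith) (hne z (by linarith))
          refine aux_infty hn hh h1 h2 c1 c2 (ha1.trans_lt hx.1) hx.2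
            (δ := min c (c - f z)) (lt_min hcpos (by linarith)) (fun s hs => ?_) hbd
          by_cases hsR : s ≤ max x R
          · have : f s ≤ f z := hzmax ⟨hs, hsR⟩
            have := min_le_right c (c - f z)
            show f s - c ≤ _
            linarith
          · have := hfR s ((le_max_right _ _).trans (not_le.1 hsR).le)
            have := min_le_left c (c - f z)
            show f s - c ≤ _
            linarith
      simp only [id, hDa] at this
      linarith
  · obtain ⟨s, hs1, hs3⟩ := hc.1
    have hs1 : N ≤ s := hs1
    have hrs : r < s := by
      by_contra hcon
      exact hL ⟨s, hs1, not_lt.1 hcon, hs3⟩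
    obtain ⟨b, ⟨⟨hb1, hb2⟩, hb3⟩, hbmin⟩ :=
      (hcomp N s le_rfl).exists_isLeast ⟨s, ⟨hs1, le_rfl⟩, hs3⟩
    have hb3 : f b = c := hb3
    have hrb : r < b := by
      by_contra hcon
      exact hL ⟨b, hb1, not_lt.1 hcon, hb3⟩
    have hDb : ψ₁ b - ψ₂ b = 0 := by rw [heq b hb1 hb3, sub_self]
    have hneg : ∀ t, N ≤ t → t < b → f t - c < 0 := fun t ht1 ht2 => hlt t ht1 fun htc =>
      absurd (hbmin ⟨⟨ht1, ht2.le.trans hb2⟩, htc⟩) (not_le.2 ht2)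
    have hNb := aux_lim' (D := fun s => ψ₁ s - ψ₂ s) (K := ψ₁ N - ψ₂ N)
      (by linarith : 0 ≤ N) (hr.trans_lt hrb) hD fun y hy => by
        obtain ⟨z, hz, hzmax⟩ := (isCompact_Icc (a := N) (b := y)).exists_isMaxOn
          ⟨y, hy.1.le, le_rfl⟩ (hf.mono fun s hs => by
            show 0 ≤ s
            linarith [hs.1])
        have hzc := hneg z hz.1 (hz.2.trans_lt hy.2)
        refine aux_left hn hh h1 h2 c1 c2 hy.1 (m := c - f z) (by linarith) fun s hs => ?_
        have : f s ≤ f z := hzmax hs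
        show f s - c ≤ _
        linarith
    simp only [hDb] at hNb
    rcases hr.eq_or_lt with h | h
    · rw [← h]; linarith
    · have := aux_C' hn hh h1 h2 c1 c2 le_rfl (⟨h, hrb.le⟩ : r ∈ Ioc N b) fun t ht =>
        hneg t ht.1.le ht.2
      rw [hDb] at this
      have := this.trans (max_le hNb le_rfl)
      linarith

lemma aux_inner {n : ℕ} {h : ℝ → ℝ} (hn : 1 ≤ (n : ℝ) - 1) (hh : ContinuousOn h (Ici 0))
    {x y : ℝ} (hx : 0 < x) (hxy : x ≤ y) (hy : y < (n : ℝ) - 1) :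
    ∃ K : ℝ, ∀ ψ : ℝ → ℝ, ContinuousOn ψ (Ici 0) → ViscSolE n h (Ioi 0) ψ → ψ y - ψ x = K := by
  have hk : ∀ s ∈ Icc x y, 0 < s ∧ 1 < ((n : ℝ) - 1) / s := fun s hs => by
    have h1 : 0 < s := hx.trans_le hs.1
    exact ⟨h1, by rw [one_lt_div h1]; linarith [hs.2]⟩
  have hsub : Icc x y ⊆ Ici (0:ℝ) := fun s hs => (hk s hs).1.le
  have hd : ContinuousOn (fun s : ℝ => ((n : ℝ) - 1) / s) (Icc x y) :=
    continuousOn_const.div continuousOn_id fun s hs => (hk s hs).1.ne'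
  have hh' := hh.mono hsub
  obtain ⟨Q, hQ, hQ'⟩ := aux_prim (q := fun s => max (-h s) 0 / (((n : ℝ) - 1) / s + 1)
      + min (-h s) 0 / (((n : ℝ) - 1) / s - 1)) hxy (by
    refine ContinuousOn.add (ContinuousOn.div (ContinuousOn.sup hh'.neg continuousOn_const)
      (hd.add continuousOn_const) fun s hs => ?_)
      (ContinuousOn.div (ContinuousOn.inf hh'.neg continuousOn_const)
      (hd.sub continuousOn_const) fun s hs => ?_)
    · have := (hk s hs).2
      intro h0; linarith
    · have := (hk s hs).2
      intro h0; linarith)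
  refine ⟨Q y - Q x, fun ψ hc hψ => le_antisymm ?_ ?_⟩
  · refine aux_super_up hψ.2 hx hxy (hc.mono hsub) hQ fun s hs p hp => ?_
    have hs' := Ioo_subset_Icc_self hs
    obtain ⟨k0, k1⟩ := hk s hs'
    rw [hQ' s hs']
    set κ := ((n : ℝ) - 1) / s
    rcases le_total 0 (-h s) with g | g
    · rw [max_eq_left g, min_eq_right g, zero_div, add_zero, le_div_iff₀ (by linarith)]
      rcases abs_cases p with ⟨h5, h6⟩ | ⟨h5, h6⟩ <;> rw [h5] at hp <;> nlinarith
    · rw [max_eq_right g, min_eq_left g, zero_div, zero_add, le_div_iff₀ (by linarith)]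
      rcases abs_cases p with ⟨h5, h6⟩ | ⟨h5, h6⟩ <;> rw [h5] at hp <;> nlinarith
  · refine aux_sub_low hψ.1 hx hxy (hc.mono hsub) hQ fun s hs p hp => ?_
    have hs' := Ioo_subset_Icc_self hs
    obtain ⟨k0, k1⟩ := hk s hs'
    rw [hQ' s hs']
    set κ := ((n : ℝ) - 1) / s
    rcases le_total 0 (-h s) with g | g
    · rw [max_eq_left g, min_eq_right g, zero_div, add_zero, div_le_iff₀ (by linarith)]
      rcases abs_cases p with ⟨h5, h6⟩ | ⟨h5, h6⟩ <;> rw [h5] at hp <;> nlinarith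
    · rw [max_eq_right g, min_eq_left g, zero_div, zero_add, div_le_iff₀ (by linarith)]
      rcases abs_cases p with ⟨h5, h6⟩ | ⟨h5, h6⟩ <;> rw [h5] at hp <;> nlinarith

/-- Two bounded-from-above continuous viscosity solutions of (E) on
`(0,∞)` which agree on the uniqueness set `Ã = {r ≥ n-1 : f̃(r) = c}` agree on `[0,∞)`. -/
theorem stmt_8 (n : ℕ) (hn : 2 ≤ n) (ftilde : ℝ → ℝ)
    (hfC1 : ContDiffOn ℝ 1 ftilde (Set.Ici 0))
    (hfnonneg : ∀ r ∈ Set.Ici (0 : ℝ), 0 ≤ ftilde r)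
    (hfsupp : ∃ R : ℝ, 0 < R ∧ ∀ r ≥ R, ftilde r = 0)
    (c : ℝ) (hc : IsGreatest (ftilde '' Set.Ici ((n : ℝ) - 1)) c) (hcpos : 0 < c)
    (ψ₁ ψ₂ : ℝ → ℝ)
    (hψ₁cont : ContinuousOn ψ₁ (Set.Ici 0)) (hψ₂cont : ContinuousOn ψ₂ (Set.Ici 0))
    (hψ₁ : ViscSolE n (fun r => ftilde r - c) (Set.Ioi 0) ψ₁)
    (hψ₂ : ViscSolE n (fun r => ftilde r - c) (Set.Ioi 0) ψ₂)
    (hbd₁ : BddAbove (ψ₁ '' Set.Ici 0)) (hbd₂ : BddAbove (ψ₂ '' Set.Ici 0))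
    (heq : ∀ r ∈ {r : ℝ | (n : ℝ) - 1 ≤ r ∧ ftilde r = c}, ψ₁ r = ψ₂ r) :
    ∀ r ∈ Set.Ici (0 : ℝ), ψ₁ r = ψ₂ r := by

  have hN : 1 ≤ (n : ℝ) - 1 := by
    have : (2:ℝ) ≤ n := by exact_mod_cast hn
    linarith
  have hf : ContinuousOn ftilde (Ici 0) := hfC1.continuousOn
  have hright : ∀ r, (n : ℝ) - 1 ≤ r → ψ₁ r = ψ₂ r := fun r hr => le_antisymm
    (aux_main_le hN hf hfsupp hc hcpos hψ₁.1 hψ₂.2 hψ₁cont hψ₂cont hbd₁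
      (fun s h1 h2 => heq s ⟨h1, h2⟩) r hr)
    (aux_main_le hN hf hfsupp hc hcpos hψ₂.1 hψ₁.2 hψ₂cont hψ₁cont hbd₂
      (fun s h1 h2 => (heq s ⟨h1, h2⟩).symm) r hr)
  have hh : ContinuousOn (fun r => ftilde r - c) (Ici 0) := hf.sub continuousOn_const
  have hcst : ∀ x y, 0 < x → x ≤ y → y < (n : ℝ) - 1 → ψ₁ y - ψ₂ y = ψ₁ x - ψ₂ x := by
    intro x y hx hxy hy
    obtain ⟨K, hK⟩ := aux_inner hN hh hx hxy hy
    have e1 := hK ψ₁ hψ₁cont hψ₁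
    have e2 := hK ψ₂ hψ₂cont hψ₂
    linarith
  have hD := hψ₁cont.sub hψ₂cont
  have hD' := hψ₂cont.sub hψ₁cont
  have hmid : ∀ x, 0 < x → x < (n : ℝ) - 1 → ψ₁ x = ψ₂ x := by
    intro x hx hxN
    have e := hright _ le_rfl
    have a1 := aux_lim' (K := ψ₁ x - ψ₂ x) hx.le hxN hD fun y hy =>
      (hcst x y hx hy.1.le hy.2).ge
    have a2 := aux_lim' (K := ψ₂ x - ψ₁ x) hx.le hxN hD' fun y hy => by
      have := hcst x y hx hy.1.le hy.2
      simp only [Pi.sub_apply]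
      linarith
    simp only [Pi.sub_apply] at a1 a2
    linarith
  intro r hr
  rcases lt_or_ge r ((n : ℝ) - 1) with h | h
  · rcases (show 0 ≤ r from hr).eq_or_lt with h0 | h0
    · subst h0
      have a1 := aux_lim (K := 0) (F := id) le_rfl h hD continuous_id fun y hy => by
        simp [hmid y hy.1 hy.2]
      have a2 := aux_lim (K := 0) (F := id) le_rfl h hD' continuous_id fun y hy => by
        simp [hmid y hy.1 hy.2]
      simp only [Pi.sub_apply, id] at a1 a2
      linarith
    · exact hmid r h0 h
  · exact hright r h
end

section
/- Assume c > 0. Let ξ₁, ξ₂ : [0,∞) → ℝ be continuous and bounded from above, with ξ₁ a viscosity subsolution and ξ₂ a viscosity supersolution of (E) on (0,∞), and assume ξ₁ ≤ ξ₂ on the uniqueness set Ã. Then ξ₁ ≤ ξ₂ on [0,∞). -/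
open Set Filter Topology

lemma lemA (w g : ℝ → ℝ) (α β s t : ℝ) (hw : ContinuousOn w (Ioo α β)) (hg : ContinuousOn g (Ioo α β))
    (hs : α < s) (hst : s < t) (ht : t < β)
    (H : ∀ φ : ℝ → ℝ, Differentiable ℝ φ → ∀ r ∈ Ioo α β, IsLocalMin (fun x => w x - φ x) r →
      g r ≤ deriv φ r) : ∫ x in s..t, g x ≤ w t - w s := by
  by_contra hcon
  push Not at hcon
  obtain ⟨T, htT, hTβ⟩ := exists_between ht
  have hsT : s < T := hst.trans htT
  have hsub : Icc s T ⊆ Ioo α β := fun x hx => ⟨hs.trans_le hx.1, hx.2.trans_lt hTβ⟩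
  set gh : ℝ → ℝ := fun x => g (max s (min x T)) with hgh
  have hghc : Continuous gh := by
    apply (hg.mono hsub).comp_continuous (by fun_prop)
    intro x
    exact ⟨le_max_left _ _, max_le hsT.le (min_le_right _ _)⟩
  have hgheq : ∀ x ∈ Icc s T, gh x = g x := by
    intro x hx
    simp only [hgh, min_eq_left hx.2, max_eq_right hx.1]
  set G : ℝ → ℝ := fun x => ∫ y in s..x, gh y with hG
  have hGd : ∀ x, HasDerivAt G (gh x) x := fun x =>
    intervalIntegral.integral_hasDerivAt_right (hghc.intervalIntegrable _ _)
      (hghc.stronglyMeasurableAtFilter _ _) hghc.continuousAt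
  have hGs : G s = 0 := by simp [hG]
  have hGt : G t = ∫ x in s..t, g x := by
    apply intervalIntegral.integral_congr
    intro x hx
    rw [uIcc_of_le hst.le] at hx
    exact hgheq x ⟨hx.1, hx.2.trans htT.le⟩
  set d := (w s - G s) - (w t - G t) with hd
  have hdpos : 0 < d := by rw [hd, hGs, hGt]; linarith
  set q := |(w t - G t) - (w T - G T)| with hq
  have hq0 : 0 ≤ q := abs_nonneg _
  have hTt : 0 < T - t := sub_pos.2 htT
  set N := 2 * q / (d * (T - t)) + 1 with hN
  have hNpos : 0 < N := by positivity
  set k := d / 2 * Real.exp (-(N * (t - s))) with hk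
  have hkpos : 0 < k := by positivity
  set φ : ℝ → ℝ := fun x => G x - k * Real.exp (N * (x - s)) with hφ
  have hφd : ∀ x, HasDerivAt φ (gh x - k * (Real.exp (N * (x - s)) * (N * 1))) x := by
    intro x
    exact (hGd x).sub ((((hasDerivAt_id x).sub_const s).const_mul N).exp.const_mul k)
  have hφdiff : Differentiable ℝ φ := fun x => (hφd x).differentiableAt
  have hmt : w t - φ t = w t - G t + d / 2 := by
    have : k * Real.exp (N * (t - s)) = d / 2 := by
      rw [hk, mul_assoc, ← Real.exp_add]; simp
    simp only [hφ]; linarith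
  have hms : w t - φ t < w s - φ s := by
    have : 0 < k * Real.exp (N * (s - s)) := by positivity
    rw [hmt]; simp only [hφ]; linarith
  have hmT : w t - φ t < w T - φ T := by
    have h1 : k * Real.exp (N * (T - s)) = d / 2 * Real.exp (N * (T - t)) := by
      rw [hk, mul_assoc, ← Real.exp_add]; ring_nf
    have h2 := Real.add_one_le_exp (N * (T - t))
    have h3 : d / 2 * (N * (T - t)) = q + d / 2 * (T - t) := by
      rw [hN]; field_simp
    have h4 : d / 2 * (N * (T - t) + 1) ≤ d / 2 * Real.exp (N * (T - t)) := by gcongr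
    have h5 : 0 < d / 2 * (T - t) := by positivity
    have h6 : (w t - G t) - (w T - G T) ≤ q := le_abs_self _
    rw [hmt]; simp only [hφ]; linarith
  have hcont : ContinuousOn (fun x => w x - φ x) (Icc s T) :=
    (hw.mono hsub).sub hφdiff.continuous.continuousOn
  obtain ⟨x0, hx0, hmin⟩ := isCompact_Icc.exists_isMinOn (nonempty_Icc.2 hsT.le) hcont
  have hle : w x0 - φ x0 ≤ w t - φ t := hmin ⟨hst.le, htT.le⟩
  have h1 : s < x0 := lt_of_le_of_ne hx0.1 (by rintro rfl; linarith)
  have h2 : x0 < T := lt_of_le_of_ne hx0.2 (by rintro rfl; linarith)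
  have := H φ hφdiff x0 (hsub hx0) (hmin.isLocalMin (Icc_mem_nhds h1 h2))
  rw [(hφd x0).deriv, hgheq x0 hx0] at this
  have : 0 < k * (Real.exp (N * (x0 - s)) * (N * 1)) := by positivity
  linarith

lemma lemP (u v g : ℝ → ℝ) (α β : ℝ) (hαβ : α < β) (hu : ContinuousOn u (Icc α β))
    (hv : ContinuousOn v (Icc α β)) (hg : ContinuousOn g (Ioo α β))
    (H1 : ∀ φ : ℝ → ℝ, Differentiable ℝ φ → ∀ r ∈ Ioo α β, IsLocalMax (fun x => u x - φ x) r →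
      deriv φ r ≤ g r)
    (H2 : ∀ φ : ℝ → ℝ, Differentiable ℝ φ → ∀ r ∈ Ioo α β, IsLocalMin (fun x => v x - φ x) r →
      g r ≤ deriv φ r) : v α - u α ≤ v β - u β := by
  have hmono : MonotoneOn (fun x => v x - u x) (Ioo α β) := by
    intro s hs t ht hst
    rcases hst.eq_or_lt with rfl | hst
    · exact le_rfl
    have h2 := lemA v g α β s t (hv.mono Ioo_subset_Icc_self) hg hs.1 hst ht.2 H2
    have h1 := lemA (fun x => - u x) (fun x => - g x) α β s t (hu.mono Ioo_subset_Icc_self).neg hg.neg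
      hs.1 hst ht.2 (by
        intro φ hφ r hr hm
        have := H1 (fun x => - φ x) hφ.neg r hr (by
          have := hm.neg
          refine this.congr (Eventually.of_forall fun x => ?_)
          simp; ring)
        rw [deriv.fun_neg] at this
        linarith)
    rw [intervalIntegral.integral_neg] at h1
    simp only
    linarith
  have hc : ContinuousOn (fun x => v x - u x) (Icc α β) := hv.sub hu
  obtain ⟨m, hm1, hm2⟩ := exists_between hαβ
  have hA : v α - u α ≤ v m - u m := by
    have hne := left_nhdsWithin_Ioo_neBot hαβ
    have ht : Tendsto (fun x => v x - u x) (𝓝[Ioo α β] α) (𝓝 (v α - u α)) :=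
      (hc α (left_mem_Icc.2 hαβ.le)).mono Ioo_subset_Icc_self
    refine le_of_tendsto ht ?_
    filter_upwards [self_mem_nhdsWithin, mem_nhdsWithin_of_mem_nhds (Iio_mem_nhds hm1)] with x hx hx2
    exact hmono hx ⟨hm1, hm2⟩ (le_of_lt hx2)
  have hB : v m - u m ≤ v β - u β := by
    have hne := right_nhdsWithin_Ioo_neBot hαβ
    have ht : Tendsto (fun x => v x - u x) (𝓝[Ioo α β] β) (𝓝 (v β - u β)) :=
      (hc β (right_mem_Icc.2 hαβ.le)).mono Ioo_subset_Icc_self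
    refine ge_of_tendsto ht ?_
    filter_upwards [self_mem_nhdsWithin, mem_nhdsWithin_of_mem_nhds (Ioi_mem_nhds hm2)] with x hx hx2
    exact hmono ⟨hm1, hm2⟩ hx (le_of_lt hx2)
  exact hA.trans hB

lemma lemP' (u v g : ℝ → ℝ) (α β : ℝ) (hαβ : α < β) (hu : ContinuousOn u (Icc α β))
    (hv : ContinuousOn v (Icc α β)) (hg : ContinuousOn g (Ioo α β))
    (H1 : ∀ φ : ℝ → ℝ, Differentiable ℝ φ → ∀ r ∈ Ioo α β, IsLocalMax (fun x => u x - φ x) r →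
      g r ≤ deriv φ r)
    (H2 : ∀ φ : ℝ → ℝ, Differentiable ℝ φ → ∀ r ∈ Ioo α β, IsLocalMin (fun x => v x - φ x) r →
      deriv φ r ≤ g r) : v β - u β ≤ v α - u α := by
  have hn : ContinuousOn (fun x : ℝ => -x) (Icc (-β) (-α)) := by fun_prop
  have hn' : ContinuousOn (fun x : ℝ => -x) (Ioo (-β) (-α)) := by fun_prop
  have hm : MapsTo (fun x : ℝ => -x) (Icc (-β) (-α)) (Icc α β) := fun x hx => 
    ⟨by linarith [hx.2], by linarith [hx.1]⟩
  have hm' : MapsTo (fun x : ℝ => -x) (Ioo (-β) (-α)) (Ioo α β) := fun x hx => 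
    ⟨by linarith [hx.2], by linarith [hx.1]⟩
  have key := lemP (fun x => u (-x)) (fun x => v (-x)) (fun x => - g (-x)) (-β) (-α) (by linarith)
    (hu.comp hn hm) (hv.comp hn hm) (hg.comp hn' hm').neg ?_ ?_
  · simpa using key
  · intro φ hφ r hr hmx
    have := H1 (fun x => φ (-x)) (by fun_prop) (-r) (hm' hr) (by
      have h2 : ContinuousAt (fun x : ℝ => -x) (-r) := by fun_prop
      have h3 : Tendsto (fun x : ℝ => -x) (𝓝 (-r)) (𝓝 r) := by simpa using h2.tendsto
      have := h3.eventually hmx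
      unfold IsLocalMax IsMaxFilter
      simpa using this)
    rw [deriv_comp_neg] at this
    simp only [neg_neg] at this
    linarith
  · intro φ hφ r hr hmx
    have := H2 (fun x => φ (-x)) (by fun_prop) (-r) (hm' hr) (by
      have h2 : ContinuousAt (fun x : ℝ => -x) (-r) := by fun_prop
      have h3 : Tendsto (fun x : ℝ => -x) (𝓝 (-r)) (𝓝 r) := by simpa using h2.tendsto
      have := h3.eventually hmx
      unfold IsLocalMin IsMinFilter
      simpa using this)
    rw [deriv_comp_neg] at this
    simp only [neg_neg] at this
    linarith

lemma slope_nonpos (u φ : ℝ → ℝ) (α β r : ℝ) (hr : r ∈ Ioo α β) (hu : AntitoneOn u (Ioo α β))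
    (hφ : Differentiable ℝ φ) (hm : IsLocalMax (fun x => u x - φ x) r) : deriv φ r ≤ 0 := by
  have h1 := (hφ r).hasDerivAt.hasDerivWithinAt (s := Iio r)
  rw [hasDerivWithinAt_iff_tendsto_slope' (by simp)] at h1
  refine le_of_tendsto h1 ?_
  filter_upwards [self_mem_nhdsWithin, mem_nhdsWithin_of_mem_nhds hm,
    mem_nhdsWithin_of_mem_nhds (Ioo_mem_nhds hr.1 hr.2)] with x hx hx2 hx3
  have hx' : x < r := hx
  have h2 := hu hx3 hr hx'.le
  have h3 : u x - φ x ≤ u r - φ r := hx2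
  rw [slope_def_field]
  exact div_nonpos_of_nonneg_of_nonpos (by linarith) (by linarith)

lemma slope_nonneg' (u φ : ℝ → ℝ) (α β r : ℝ) (hr : r ∈ Ioo α β) (hu : MonotoneOn u (Ioo α β))
    (hφ : Differentiable ℝ φ) (hm : IsLocalMax (fun x => u x - φ x) r) : 0 ≤ deriv φ r := by
  have h1 := (hφ r).hasDerivAt.hasDerivWithinAt (s := Ioi r)
  rw [hasDerivWithinAt_iff_tendsto_slope' (by simp)] at h1
  refine ge_of_tendsto h1 ?_
  filter_upwards [self_mem_nhdsWithin, mem_nhdsWithin_of_mem_nhds hm,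
    mem_nhdsWithin_of_mem_nhds (Ioo_mem_nhds hr.1 hr.2)] with x hx hx2 hx3
  have hx' : r < x := hx
  have h2 := hu hr hx3 hx'.le
  have h3 : u x - φ x ≤ u r - φ r := hx2
  rw [slope_def_field]
  exact div_nonneg (by linarith) (by linarith)

/-- left region -/
lemma left_region (a : ℝ) (h u v : ℝ → ℝ) (x : ℝ) (hx : 0 ≤ x) (hxa : x < a)
    (hu : ContinuousOn u (Ici 0)) (hv : ContinuousOn v (Ici 0)) (hh : ContinuousOn h (Ici 0))
    (H1 : ∀ φ : ℝ → ℝ, Differentiable ℝ φ → ∀ r, 0 < r → IsLocalMax (fun x => u x - φ x) r →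
      -a * deriv φ r - r * |deriv φ r| ≤ r * h r)
    (H2 : ∀ φ : ℝ → ℝ, Differentiable ℝ φ → ∀ r, 0 < r → IsLocalMin (fun x => v x - φ x) r →
      r * h r ≤ -a * deriv φ r - r * |deriv φ r|) :
    v a - u a ≤ v x - u x := by
  have hsub : Icc x a ⊆ Ici 0 := fun y hy => hx.trans hy.1
  have hsub' : Ioo x a ⊆ Ici 0 := fun y hy => hx.trans hy.1.le
  refine lemP' u v (fun r => r * max (-h r) 0 / (r + a) - r * max (h r) 0 / (a - r)) x a hxa
    (hu.mono hsub) (hv.mono hsub) ?_ ?_ ?_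
  · have hh' := hh.mono hsub'
    refine ContinuousOn.sub (ContinuousOn.div ?_ ?_ ?_) (ContinuousOn.div ?_ ?_ ?_)
    · exact continuousOn_id.mul (hh'.neg.sup continuousOn_const)
    · fun_prop
    · intro r hr; have := hr.1; exact ne_of_gt (by linarith)
    · exact continuousOn_id.mul (hh'.sup continuousOn_const)
    · fun_prop
    · intro r hr; have := hr.2; exact ne_of_gt (by linarith)
  · intro φ hφ r hr hm
    have hr0 : 0 < r := hx.trans_lt hr.1
    have h1 := H1 φ hφ r hr0 hm
    have hra : 0 < a - r := sub_pos.2 hr.2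
    have hra' : 0 < r + a := by linarith
    generalize deriv φ r = p at *
    rcases le_total (h r) 0 with h0 | h0
    · rw [max_eq_left (by linarith), max_eq_right h0, mul_zero, zero_div, sub_zero, div_le_iff₀ hra']
      rcases le_total 0 p with hp | hp
      · rw [abs_of_nonneg hp] at h1; nlinarith
      · rw [abs_of_nonpos hp] at h1
        have : r * h r ≤ 0 := mul_nonpos_of_nonneg_of_nonpos hr0.le h0
        have hp0 : p = 0 := by nlinarith
        subst hp0; linarith
    · rw [max_eq_right (by linarith), max_eq_left h0, mul_zero, zero_div, zero_sub, neg_le,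
        le_div_iff₀ hra]
      rcases le_total 0 p with hp | hp
      · rw [abs_of_nonneg hp] at h1; nlinarith
      · rw [abs_of_nonpos hp] at h1; nlinarith
  · intro φ hφ r hr hm
    have hr0 : 0 < r := hx.trans_lt hr.1
    have h1 := H2 φ hφ r hr0 hm
    have hra : 0 < a - r := sub_pos.2 hr.2
    have hra' : 0 < r + a := by linarith
    generalize deriv φ r = p at *
    rcases le_total (h r) 0 with h0 | h0
    · rw [max_eq_left (by linarith), max_eq_right h0, mul_zero, zero_div, sub_zero, le_div_iff₀ hra']
      rcases le_total 0 p with hp | hp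
      · rw [abs_of_nonneg hp] at h1; nlinarith
      · have : p * (r + a) ≤ 0 := mul_nonpos_of_nonpos_of_nonneg hp hra'.le
        have : 0 ≤ r * -h r := mul_nonneg hr0.le (by linarith)
        linarith
    · rw [max_eq_right (by linarith), max_eq_left h0, mul_zero, zero_div, zero_sub, le_neg,
        div_le_iff₀ hra]
      rcases le_total 0 p with hp | hp
      · rw [abs_of_nonneg hp] at h1
        have : 0 ≤ r * h r := mul_nonneg hr0.le h0
        have hp0 : p = 0 := by nlinarith
        subst hp0; linarith
      · rw [abs_of_nonpos hp] at h1; nlinarith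

lemma anti_region (a : ℝ) (h u v : ℝ → ℝ) (x y : ℝ) (ha : 0 < a) (hx : a ≤ x) (hxy : x < y)
    (hu : ContinuousOn u (Ici 0)) (hv : ContinuousOn v (Ici 0)) (hh : ContinuousOn h (Ici 0))
    (H1 : ∀ φ : ℝ → ℝ, Differentiable ℝ φ → ∀ r, 0 < r → IsLocalMax (fun x => u x - φ x) r →
      -a * deriv φ r - r * |deriv φ r| ≤ r * h r)
    (H2 : ∀ φ : ℝ → ℝ, Differentiable ℝ φ → ∀ r, 0 < r → IsLocalMin (fun x => v x - φ x) r →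
      r * h r ≤ -a * deriv φ r - r * |deriv φ r|)
    (hneg : ∀ r ∈ Ioo x y, h r < 0)
    (hanti : AntitoneOn u (Ioo x y)) :
    v x - u x ≤ v y - u y := by
  have hsub : Icc x y ⊆ Ici 0 := fun z hz => (ha.le.trans hx).trans hz.1
  have hsub' : Ioo x y ⊆ Ici 0 := Ioo_subset_Icc_self.trans hsub
  refine lemP u v (fun r => r * h r / (r - a)) x y hxy
    (hu.mono hsub) (hv.mono hsub) ?_ ?_ ?_
  · have hh' := hh.mono hsub'
    refine ContinuousOn.div ?_ ?_ ?_
    · exact continuousOn_id.mul hh'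
    · fun_prop
    · intro r hr; have := hr.1; exact ne_of_gt (by linarith)
  · intro φ hφ r hr hm
    have hra : 0 < r - a := by linarith [hr.1]
    have h1 := H1 φ hφ r (by linarith) hm
    have hp := slope_nonpos u φ x y r hr hanti hφ hm
    generalize deriv φ r = p at *
    rw [le_div_iff₀ hra]
    rw [abs_of_nonpos hp] at h1; nlinarith
  · intro φ hφ r hr hm
    have hra : 0 < r - a := by linarith [hr.1]
    have h1 := H2 φ hφ r (by linarith) hm
    have h0 := hneg r hr
    generalize deriv φ r = p at *
    rw [div_le_iff₀ hra]
    rcases le_total 0 p with hp | hp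
    · have : 0 ≤ p * (r - a) := mul_nonneg hp hra.le
      have : r * h r ≤ 0 := mul_nonpos_of_nonneg_of_nonpos (by linarith) h0.le
      linarith
    · rw [abs_of_nonpos hp] at h1; nlinarith

lemma mono_region (a : ℝ) (h u v : ℝ → ℝ) (x y : ℝ) (ha : 0 < a) (hx : a ≤ x) (hxy : x < y)
    (hu : ContinuousOn u (Ici 0)) (hv : ContinuousOn v (Ici 0)) (hh : ContinuousOn h (Ici 0))
    (H1 : ∀ φ : ℝ → ℝ, Differentiable ℝ φ → ∀ r, 0 < r → IsLocalMax (fun x => u x - φ x) r →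
      -a * deriv φ r - r * |deriv φ r| ≤ r * h r)
    (H2 : ∀ φ : ℝ → ℝ, Differentiable ℝ φ → ∀ r, 0 < r → IsLocalMin (fun x => v x - φ x) r →
      r * h r ≤ -a * deriv φ r - r * |deriv φ r|)
    (hneg : ∀ r ∈ Ioo x y, h r < 0)
    (hmono : MonotoneOn u (Ioo x y)) :
    v y - u y ≤ v x - u x := by
  have hsub : Icc x y ⊆ Ici 0 := fun z hz => (ha.le.trans hx).trans hz.1
  have hsub' : Ioo x y ⊆ Ici 0 := Ioo_subset_Icc_self.trans hsub
  refine lemP' u v (fun r => -(r * h r) / (r + a)) x y hxy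
    (hu.mono hsub) (hv.mono hsub) ?_ ?_ ?_
  · have hh' := hh.mono hsub'
    refine ContinuousOn.div ?_ ?_ ?_
    · exact (continuousOn_id.mul hh').neg
    · fun_prop
    · intro r hr; have := hr.1; exact ne_of_gt (by linarith)
  · intro φ hφ r hr hm
    have hra : 0 < r + a := by linarith [hr.1]
    have h1 := H1 φ hφ r (by linarith [hr.1]) hm
    have hp := slope_nonneg' u φ x y r hr hmono hφ hm
    generalize deriv φ r = p at *
    rw [div_le_iff₀ hra]
    rw [abs_of_nonneg hp] at h1; nlinarith
  · intro φ hφ r hr hm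
    have hra : 0 < r + a := by linarith [hr.1]
    have h1 := H2 φ hφ r (by linarith [hr.1]) hm
    have h0 := hneg r hr
    generalize deriv φ r = p at *
    rw [le_div_iff₀ hra]
    rcases le_total 0 p with hp | hp
    · rw [abs_of_nonneg hp] at h1; nlinarith
    · have : p * (r + a) ≤ 0 := mul_nonpos_of_nonpos_of_nonneg hp hra.le
      have : r * h r ≤ 0 := mul_nonpos_of_nonneg_of_nonpos (by linarith [hr.1]) h0.le
      linarith

lemma dichot (a : ℝ) (h u : ℝ → ℝ) (r0 l : ℝ) (U : Set ℝ) (hU : U.OrdConnected) (hU0 : U ⊆ Ici r0)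
    (hr0 : r0 ∈ U) (hl : 0 ≤ l) (hlr : l < r0)
    (hu : ContinuousOn u (Ici 0))
    (H1 : ∀ φ : ℝ → ℝ, Differentiable ℝ φ → ∀ r, 0 < r → IsLocalMax (fun x => u x - φ x) r →
      -a * deriv φ r - r * |deriv φ r| ≤ r * h r)
    (hneg : ∀ r ∈ Ioc l r0, h r < 0) (hneg' : ∀ r ∈ U, h r < 0) :
    AntitoneOn u (Ioc l r0) ∨ MonotoneOn u U := by
  by_contra hcon
  push Not at hcon
  obtain ⟨h1, h2⟩ := hcon
  unfold AntitoneOn at h1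
  unfold MonotoneOn at h2
  push Not at h1 h2
  obtain ⟨x, hx, y, hy, hxy, hlt⟩ := h1
  obtain ⟨x', hx', y', hy', hxy', hlt'⟩ := h2
  have hyr : y ≤ r0 := hy.2
  have hxr : r0 ≤ x' := hU0 hx'
  have hle : x ≤ y' := by linarith
  have hneg2 : ∀ z ∈ Icc x y', h z < 0 := by
    intro z hz
    rcases le_total z r0 with hzr | hzr
    · exact hneg z ⟨hx.1.trans_le hz.1, hzr⟩
    · exact hneg' z (hU.out hr0 hy' ⟨hzr, hz.2⟩)
  have hpos : ∀ z ∈ Icc x y', 0 < z := fun z hz => hl.trans_lt (hx.1.trans_le hz.1)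
  obtain ⟨z, hz, hmax⟩ := isCompact_Icc.exists_isMaxOn (nonempty_Icc.2 hle)
    (hu.mono fun w hw => mem_Ici.2 (hpos w hw).le)
  have ha1 : u y ≤ u z := hmax ⟨hxy, by linarith⟩
  have ha2 : u x' ≤ u z := hmax ⟨by linarith, hxy'⟩
  have hz1 : x < z := lt_of_le_of_ne hz.1 (by rintro rfl; linarith)
  have hz2 : z < y' := lt_of_le_of_ne hz.2 (by rintro rfl; linarith)
  have hz0 : 0 < z := hpos z hz
  have := H1 (fun _ => 0) (by fun_prop) z hz0
    (by simpa using hmax.isLocalMax (Icc_mem_nhds hz1 hz2))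
  have h3 := mul_neg_of_pos_of_neg hz0 (hneg2 z hz)
  simp at this
  linarith

lemma growth (u : ℝ → ℝ) (k α β : ℝ) (hαβ : α < β) (hu : ContinuousOn u (Icc α β))
    (H1 : ∀ φ : ℝ → ℝ, Differentiable ℝ φ → ∀ r ∈ Ioo α β, IsLocalMax (fun x => u x - φ x) r →
      k ≤ deriv φ r) : k * (β - α) ≤ u β - u α := by
  have := lemP' u (fun x => k * x) (fun _ => k) α β hαβ hu (by fun_prop) (by fun_prop) H1 ?_
  · linarith
  · intro φ hφ r _ hm
    have h1 : HasDerivAt (fun x => k * x - φ x) (k * 1 - deriv φ r) r :=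
      ((hasDerivAt_id r).const_mul k).sub (hφ r).hasDerivAt
    have := hm.hasDerivAt_eq_zero h1
    linarith

lemma comparison (a c R : ℝ) (h u v : ℝ → ℝ) (ha : 0 < a) (hc : 0 < c)
    (hu : ContinuousOn u (Ici 0)) (hv : ContinuousOn v (Ici 0)) (hh : ContinuousOn h (Ici 0))
    (H1 : ∀ φ : ℝ → ℝ, Differentiable ℝ φ → ∀ r, 0 < r → IsLocalMax (fun x => u x - φ x) r →
      -a * deriv φ r - r * |deriv φ r| ≤ r * h r)
    (H2 : ∀ φ : ℝ → ℝ, Differentiable ℝ φ → ∀ r, 0 < r → IsLocalMin (fun x => v x - φ x) r →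
      r * h r ≤ -a * deriv φ r - r * |deriv φ r|)
    (hR : ∀ r ≥ R, h r = -c) (hneg : ∀ r ≥ a, h r ≤ 0)
    (hbd : BddAbove (u '' Ici 0))
    (hle : ∀ r, a ≤ r → h r = 0 → u r ≤ v r) (r0 : ℝ) (hr0 : a ≤ r0) : u r0 ≤ v r0 := by
  by_cases h0 : h r0 = 0
  · exact hle r0 hr0 h0
  have hA : ∀ x y, a ≤ x → IsCompact (Icc x y ∩ h ⁻¹' {0}) := by
    intro x y hx
    refine isCompact_Icc.of_isClosed_subset ?_ inter_subset_left
    exact (hh.mono fun z hz => mem_Ici.2 ((ha.le.trans hx).trans hz.1)).preimage_isClosed_of_isClosed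
      isClosed_Icc isClosed_singleton
  have hltn : ∀ r ≥ a, h r ≠ 0 → h r < 0 := fun r hr hn => lt_of_le_of_ne (hneg r hr) hn
  have hL : ∃ l, 0 ≤ l ∧ l < r0 ∧ (∀ r ∈ Ioc l r0, h r < 0) ∧
      (AntitoneOn u (Ioc l r0) → u r0 ≤ v r0) := by
    by_cases hne : (Icc a r0 ∩ h ⁻¹' {0}).Nonempty
    · obtain ⟨b, ⟨hb, hb0⟩, hmax⟩ := (hA a r0 le_rfl).exists_isGreatest hne
      have hb0 : h b = 0 := hb0
      have hbr : b < r0 := lt_of_le_of_ne hb.2 (by rintro rfl; exact h0 hb0)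
      have hn : ∀ r ∈ Ioc b r0, h r < 0 := by
        intro r hr
        have har : a ≤ r := hb.1.trans hr.1.le
        refine hltn r har fun h00 => ?_
        exact absurd (hmax ⟨⟨har, hr.2⟩, h00⟩) (not_le.2 hr.1)
      refine ⟨b, ha.le.trans hb.1, hbr, hn, fun hanti => ?_⟩
      have := anti_region a h u v b r0 ha hb.1 hbr hu hv hh H1 H2
        (fun r hr => hn r ⟨hr.1, hr.2.le⟩) (hanti.mono Ioo_subset_Ioc_self)
      linarith [hle b hb.1 hb0]
    · have hn : ∀ r ∈ Icc a r0, h r < 0 := fun r hr =>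
        hltn r hr.1 fun h00 => hne ⟨r, hr, h00⟩
      have hca : ContinuousAt h a := hh.continuousAt (Ici_mem_nhds ha)
      have hev := hca.eventually (Iio_mem_nhds (hn a ⟨le_rfl, hr0⟩))
      obtain ⟨l', hl', hI⟩ := exists_Ioc_subset_of_mem_nhds hev ⟨0, ha⟩
      have hla : max l' 0 < a := max_lt hl' ha
      have hn2 : ∀ r ∈ Ioc (max l' 0) r0, h r < 0 := by
        intro r hr
        rcases le_total r a with hra | hra
        · exact hI ⟨(le_max_left _ _).trans_lt hr.1, hra⟩
        · exact hn r ⟨hra, hr.2⟩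
      refine ⟨max l' 0, le_max_right _ _, hla.trans_le hr0, hn2, fun hanti => ?_⟩
      exfalso
      obtain ⟨m, hm1, hm2⟩ := exists_between hla
      have hm0 : 0 < m := (le_max_right _ _).trans_lt hm1
      have hanti' : AntitoneOn u (Ioo (max l' 0) a) :=
        hanti.mono fun r hr => ⟨hr.1, hr.2.le.trans hr0⟩
      have := growth u 1 m a hm2 (hu.mono fun r hr => mem_Ici.2 (hm0.le.trans hr.1)) (by
        intro φ hφ r hr hmx
        exfalso
        have hr' : r ∈ Ioo (max l' 0) a := ⟨hm1.trans hr.1, hr.2⟩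
        have hrp : 0 < r := hm0.trans hr.1
        have hp := slope_nonpos u φ _ _ r hr' hanti' hφ hmx
        have e1 := H1 φ hφ r hrp hmx
        rw [abs_of_nonpos hp] at e1
        have e2 := mul_neg_of_pos_of_neg hrp (hn2 r ⟨hr'.1, hr'.2.le.trans hr0⟩)
        have e3 : 0 ≤ (-deriv φ r) * (a - r) := mul_nonneg (by linarith) (by linarith [hr.2])
        linarith)
      have h3 := hanti ⟨hm1, hm2.le.trans hr0⟩ ⟨hla, hr0⟩ hm2.le
      linarith
  have hRr : ∃ U : Set ℝ, U.OrdConnected ∧ U ⊆ Ici r0 ∧ r0 ∈ U ∧ (∀ r ∈ U, h r < 0) ∧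
      (MonotoneOn u U → u r0 ≤ v r0) := by
    by_cases hne : (Icc r0 (max R r0) ∩ h ⁻¹' {0}).Nonempty
    · obtain ⟨b, ⟨hb, hb0⟩, hmin⟩ := (hA r0 (max R r0) hr0).exists_isLeast hne
      have hb0 : h b = 0 := hb0
      have hbr : r0 < b := lt_of_le_of_ne hb.1 (by rintro rfl; exact h0 hb0)
      have hn : ∀ r ∈ Ico r0 b, h r < 0 := by
        intro r hr
        refine hltn r (hr0.trans hr.1) fun h00 => ?_
        exact absurd (hmin ⟨⟨hr.1, hr.2.le.trans hb.2⟩, h00⟩) (not_le.2 hr.2)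
      refine ⟨Ico r0 b, ordConnected_Ico, fun r hr => hr.1, ⟨le_rfl, hbr⟩, hn, fun hmono => ?_⟩
      have := mono_region a h u v r0 b ha hr0 hbr hu hv hh H1 H2
        (fun r hr => hn r ⟨hr.1.le, hr.2⟩) (hmono.mono Ioo_subset_Ico_self)
      linarith [hle b (hr0.trans hb.1) hb0]
    · refine ⟨Ici r0, ordConnected_Ici, Subset.rfl, self_mem_Ici, ?_, fun hmono => ?_⟩
      · intro r hr
        refine hltn r (hr0.trans hr) fun h00 => ?_
        rcases le_total R r with hRr | hRr
        · rw [hR r hRr] at h00; linarith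
        · exact hne ⟨r, ⟨hr, hRr.trans (le_max_left _ _)⟩, h00⟩
      · exfalso
        obtain ⟨M, hM⟩ := hbd
        set s := max R r0 with hs
        have hs0 : r0 ≤ s := le_max_right _ _
        set K := (|M - u s| + 1) / (c / 2) with hK
        have hKpos : 0 < K := by positivity
        have hsu : Ioo s (s + K) ⊆ Ici r0 := fun r hr => mem_Ici.2 (hs0.trans hr.1.le)
        have := growth u (c / 2) s (s + K) (by linarith)
          (hu.mono fun r hr => mem_Ici.2 (by linarith [hr.1])) (by
          intro φ hφ r hr hmx
          have hrp : 0 < r := by linarith [hr.1]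
          have hp := slope_nonneg' u φ _ _ r hr (hmono.mono hsu) hφ hmx
          have e1 := H1 φ hφ r hrp hmx
          rw [abs_of_nonneg hp, hR r ((le_max_left _ _).trans hr.1.le)] at e1
          have e3 : 0 ≤ deriv φ r * (r - a) := mul_nonneg hp (by linarith [hr.1])
          by_contra hlt
          push Not at hlt
          have := mul_lt_mul_of_pos_left hlt hrp
          linarith)
        have e4 : c / 2 * (s + K - s) = |M - u s| + 1 := by rw [hK]; field_simp; ring
        have e5 : u (s + K) ≤ M := hM ⟨s + K, mem_Ici.2 (by linarith), rfl⟩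
        linarith [le_abs_self (M - u s)]
  obtain ⟨l, hl0, hlr, hln, hlc⟩ := hL
  obtain ⟨U, hU1, hU2, hU3, hU4, hU5⟩ := hRr
  rcases dichot a h u r0 l U hU1 hU2 hU3 hl0 hlr hu H1 hln hU4 with hh1 | hh1
  · exact hlc hh1
  · exact hU5 hh1

/-- Comparison on the uniqueness set: a bounded-from-above continuous
viscosity subsolution `ξ₁` and supersolution `ξ₂` of (E) on `(0,∞)` with `ξ₁ ≤ ξ₂` on
`Ã = {r ≥ n-1 : f̃(r) = c}` satisfy `ξ₁ ≤ ξ₂` on `[0,∞)`. -/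
theorem stmt_9 (n : ℕ) (hn : 2 ≤ n) (ftilde : ℝ → ℝ)
    (hfC1 : ContDiffOn ℝ 1 ftilde (Set.Ici 0))
    (hfnonneg : ∀ r ∈ Set.Ici (0 : ℝ), 0 ≤ ftilde r)
    (hfsupp : ∃ R : ℝ, 0 < R ∧ ∀ r ≥ R, ftilde r = 0)
    (c : ℝ) (hc : IsGreatest (ftilde '' Set.Ici ((n : ℝ) - 1)) c) (hcpos : 0 < c)
    (ξ₁ ξ₂ : ℝ → ℝ)
    (hξ₁cont : ContinuousOn ξ₁ (Set.Ici 0)) (hξ₂cont : ContinuousOn ξ₂ (Set.Ici 0))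
    (hξ₁ : ViscSubsolE n (fun r => ftilde r - c) (Set.Ioi 0) ξ₁)
    (hξ₂ : ViscSupersolE n (fun r => ftilde r - c) (Set.Ioi 0) ξ₂)
    (hbd₁ : BddAbove (ξ₁ '' Set.Ici 0)) (hbd₂ : BddAbove (ξ₂ '' Set.Ici 0))
    (hle : ∀ r ∈ {r : ℝ | (n : ℝ) - 1 ≤ r ∧ ftilde r = c}, ξ₁ r ≤ ξ₂ r) :
    ∀ r ∈ Set.Ici (0 : ℝ), ξ₁ r ≤ ξ₂ r := by
  have ha : (0 : ℝ) < (n : ℝ) - 1 := by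
    have : (2 : ℝ) ≤ n := by exact_mod_cast hn
    linarith
  obtain ⟨R, _, hR⟩ := hfsupp
  have hh : ContinuousOn (fun r => ftilde r - c) (Set.Ici 0) :=
    hfC1.continuousOn.sub continuousOn_const
  have H1 : ∀ φ : ℝ → ℝ, Differentiable ℝ φ → ∀ r, 0 < r →
      IsLocalMax (fun x => ξ₁ x - φ x) r →
      -((n : ℝ) - 1) * deriv φ r - r * |deriv φ r| ≤ r * (fun r => ftilde r - c) r := by
    intro φ hφ r hr hm
    have h1 := mul_le_mul_of_nonneg_left (hξ₁ φ hφ.differentiableOn r hr hm) hr.le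
    have h2 : r * (-(((n : ℝ) - 1) / r) * deriv φ r - |deriv φ r|)
      = -((n : ℝ) - 1) * deriv φ r - r * |deriv φ r| := by
      field_simp
    rwa [h2] at h1
  have H2 : ∀ φ : ℝ → ℝ, Differentiable ℝ φ → ∀ r, 0 < r →
      IsLocalMin (fun x => ξ₂ x - φ x) r →
      r * (fun r => ftilde r - c) r ≤ -((n : ℝ) - 1) * deriv φ r - r * |deriv φ r| := by
    intro φ hφ r hr hm
    have h1 := mul_le_mul_of_nonneg_left (hξ₂ φ hφ.differentiableOn r hr hm) hr.le
    have h2 : r * (-(((n : ℝ) - 1) / r) * deriv φ r - |deriv φ r|)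
      = -((n : ℝ) - 1) * deriv φ r - r * |deriv φ r| := by
      field_simp
    rwa [h2] at h1
  have key := comparison ((n : ℝ) - 1) c R (fun r => ftilde r - c) ξ₁ ξ₂ ha hcpos hξ₁cont hξ₂cont hh
    H1 H2 (fun r hr => by simp [hR r hr])
    (fun r hr => sub_nonpos.2 (hc.2 ⟨r, hr, rfl⟩)) hbd₁
    (fun r hr h0 => hle r ⟨hr, sub_eq_zero.1 h0⟩)
  intro r hr
  rcases le_or_gt ((n : ℝ) - 1) r with hra | hra
  · exact key r hra
  · have h1 := left_region ((n : ℝ) - 1) (fun r => ftilde r - c) ξ₁ ξ₂ r hr hra hξ₁cont hξ₂cont hh H1 H2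
    linarith [key _ le_rfl]
end
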